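/- Let R = k[x_1,…,x_d] with d ≥ 3 and let E be a torsion-free R-module of rank e and projective dimension one with μ(E) = d+e, minimal free resolution 0 → R^d →φ R^{d+e} → E → 0 where φ = [φ′ | φ″] with φ′ having d−2 columns of linear forms and φ″ two columns of quadrics, I_1(φ) = (x_1,…,x_d), and E satisfying G_d. Let A = H^0_m(S(E)) with m = (x_1,…,x_d), and let ρ be the first map in the graded strand K_2 of the bigraded Koszul complex of ℓ_1,…,ℓ_d resolving S(E)_2. Then A_0 is a principal ideal of T, and if ht I(ρ) ≥ 2 then its generator has bidegree (0, 4d−4). -/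

import Mathlib

/-!
STATEMENT 11: With `R`, `E`, `φ` as in Statement 7, `A = H⁰_m(S(E))`, and `ρ` the first
map in the graded strand of the Koszul complex of `ℓ_1,…,ℓ_d` resolving `S(E)_2` (i.e. a
presentation matrix of `S(E)_2` over `T`): `A_0` is a principal ideal of `T`, and if
`ht I(ρ) ≥ 2` then its generator has bidegree `(0, 4d−4)`.
-/

open MvPolynomial

noncomputable section

namespace Stmt11

variable (k : Type) [Field k] (d n : ℕ)

/-- `B = R ⊗_k T = k[x_1,…,x_d,y_1,…,y_n]`. -/
abbrev B := MvPolynomial (Fin d ⊕ Fin n) k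

/-- `T = k[y_1,…,y_n]`. -/
abbrev T := MvPolynomial (Fin n) k

/-- `B` is a `T`-algebra via `y_j ↦ y_j`. -/
instance : Algebra (T k n) (B k d n) :=
  ((rename Sum.inr : T k n →ₐ[k] B k d n).toRingHom).toAlgebra

/-- The bigrading weight: `bideg x_i = (1,0)`, `bideg y_j = (0,1)`. -/
def bwt : (Fin d ⊕ Fin n) → ℕ × ℕ := Sum.elim (fun _ => (1, 0)) (fun _ => (0, 1))

/-- The `x`-degree weight. -/
def wx : (Fin d ⊕ Fin n) → ℕ := Sum.elim (fun _ => 1) (fun _ => 0)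

/-- The ideal `m = (x_1,…,x_d)B`. -/
def mxB : Ideal (B k d n) := Ideal.span (Set.range fun i : Fin d => (X (Sum.inl i) : B k d n))

variable (I : Ideal (B k d n))

/-- `A = H⁰_m(S)`: elements of `S = B/I` annihilated by a power of `m`. -/
def H0 : Submodule (B k d n) (B k d n ⧸ I) :=
  ⨆ N : ℕ, Submodule.torsionBySet (B k d n) (B k d n ⧸ I)
    ((mxB k d n ^ N : Ideal (B k d n)) : Set (B k d n))

/-- The bigraded component of `S = B/I` in bidegree `p`. -/
def Scomp (p : ℕ × ℕ) : Submodule k (B k d n ⧸ I) :=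
  (weightedHomogeneousSubmodule k (bwt d n) p).map (Ideal.Quotient.mkₐ k I).toLinearMap

/-- The graded strand `S_j = ⊕_b S_{(j,b)}` of `S` in `x`-degree `j`, as a `T`-module. -/
def SxDeg (j : ℕ) : Submodule (T k n) (B k d n ⧸ I) :=
  Submodule.span (T k n) ((Ideal.Quotient.mk I) '' {g : B k d n | g.IsWeightedHomogeneous (wx d n) j})

/-- The graded strand of `S` in (possibly negative) `x`-degree `i : ℤ`. -/
def SxDegZ (i : ℤ) : Submodule (T k n) (B k d n ⧸ I) :=
  if 0 ≤ i then SxDeg k d n I i.toNat else ⊥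

/-- The graded strand `A_i = ⊕_b A_{(i,b)}` of `A = H⁰_m(S)`, as a `T`-module. -/
def AcompZ (i : ℤ) : Submodule (T k n) (B k d n ⧸ I) :=
  (H0 k d n I).restrictScalars (T k n) ⊓ SxDegZ k d n I i

/-- The graded component of `T` in (possibly negative) degree `j`. -/
def TcompZ (j : ℤ) : Submodule k (T k n) :=
  if 0 ≤ j then homogeneousSubmodule (Fin n) k j.toNat else ⊥

/-- The ideal of `t × t` minors of a matrix. -/
def minorsIdeal {R : Type} [CommRing R] {m' n' : Type} (M : Matrix m' n' R) (t : ℕ) :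
    Ideal R :=
  Ideal.span {x | ∃ (f : Fin t → m') (g : Fin t → n'), x = (M.submatrix f g).det}

/-- `ht I ≥ c`: every prime containing `I` has height (= dimension of the localization)
at least `c`. -/
def htGE {R : Type} [CommRing R] (I : Ideal R) (c : ℕ) : Prop :=
  ∀ (p : Ideal R) (_ : p.IsPrime), I ≤ p →
    (c : WithBot ℕ∞) ≤ ringKrullDim (Localization.AtPrime p)

/-- the homogeneous component of a product with a homogeneous polynomial. -/
theorem hc_mul {σ S : Type*} [CommRing S] (p q : MvPolynomial σ S) (i j : ℕ)
    (hq : q.IsHomogeneous j) :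
    homogeneousComponent (i + j) (p * q) = homogeneousComponent i p * q := by
  conv_lhs => rw [← sum_homogeneousComponent p]
  rw [Finset.sum_mul, map_sum]
  have key : ∀ l, homogeneousComponent (i + j) (homogeneousComponent l p * q)
      = if l = i then homogeneousComponent i p * q else 0 := by
    intro l
    have h : (homogeneousComponent l p * q) ∈ homogeneousSubmodule σ S (l + j) :=
      (homogeneousComponent_isHomogeneous l p).mul hq
    rw [homogeneousComponent_of_mem h]
    by_cases hl : l = i
    · subst hl; simp
    · have : ¬ (i + j = l + j) := by omega
      rw [if_neg this, if_neg hl]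
  rw [Finset.sum_congr rfl (fun l _ => key l), Finset.sum_ite_eq']
  split_ifs with h
  · rfl
  · have : p.totalDegree < i := by simpa using h
    rw [homogeneousComponent_eq_zero _ _ this, zero_mul]

theorem pow_sq_split {S : Type*} [CommRing S] (M : ℕ) (h : MvPolynomial (Fin 2) S)
    (hh : h.IsHomogeneous (2 * M)) :
    ∃ (c : S) (h1 h2 : MvPolynomial (Fin 2) S),
      h = C c * (X 0 ^ M * X 1 ^ M) + X 0 ^ (M + 1) * h1 + X 1 ^ (M + 1) * h2 := by
  rw [h.as_sum]
  refine Finset.sum_induction _ (fun f => ∃ (c : S) (h1 h2 : MvPolynomial (Fin 2) S),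
      f = C c * (X 0 ^ M * X 1 ^ M) + X 0 ^ (M + 1) * h1 + X 1 ^ (M + 1) * h2) ?_ ?_ ?_
  · rintro a b ⟨c, h1, h2, rfl⟩ ⟨c', h1', h2', rfl⟩
    exact ⟨c + c', h1 + h1', h2 + h2', by rw [C_add]; ring⟩
  · exact ⟨0, 0, 0, by simp⟩
  · intro v hv
    have hd : v 0 + v 1 = 2 * M := by
      have := hh (mem_support_iff.mp hv)
      rw [Finsupp.weight_apply, Finsupp.sum_fintype _ _ (by simp)] at this
      simpa using this
    have hm : monomial v (coeff v h) = C (coeff v h) * (X 0 ^ v 0 * X 1 ^ v 1) := by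
      rw [monomial_eq, Finsupp.prod_fintype _ _ (by simp)]
      simp
    rw [hm]
    by_cases h0 : M + 1 ≤ v 0
    · obtain ⟨r, hr⟩ := Nat.exists_eq_add_of_le h0
      exact ⟨0, C (coeff v h) * (X 0 ^ r * X 1 ^ v 1), 0, by rw [hr]; simp; ring⟩
    · by_cases h1 : M + 1 ≤ v 1
      · obtain ⟨r, hr⟩ := Nat.exists_eq_add_of_le h1
        exact ⟨0, 0, C (coeff v h) * (X 0 ^ v 0 * X 1 ^ r), by rw [hr]; simp; ring⟩
      · have e0 : v 0 = M := by omega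
        have e1 : v 1 = M := by omega
        exact ⟨coeff v h, 0, 0, by rw [e0, e1]; simp⟩

/-- syzygies of a pair are the Koszul ones -/
def Syz {A : Type*} [CommRing A] (q1 q2 : A) : Prop :=
  ∀ α β : A, α * q1 + β * q2 = 0 → ∃ h, α = h * q2 ∧ β = - (h * q1)

theorem X_pow_dvd_of {σ O : Type*} [CommRing O] [IsDomain O] (i j : σ) (hij : i ≠ j) (N M : ℕ)
    (f g : MvPolynomial σ O) (h : X j ^ M * f = X i ^ N * g) : X i ^ N ∣ f := by
  have hp : Prime (X i : MvPolynomial σ O) := X_prime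
  refine hp.pow_dvd_of_dvd_mul_left N (a := X j ^ M) ?_ ⟨g, h⟩
  intro hd
  have := hp.dvd_of_dvd_pow hd
  rw [X_dvd_X] at this
  exact hij this

theorem D2 {O : Type*} [CommRing O] [IsDomain O] (A B' C' D : MvPolynomial (Fin 2) O)
    (hA : A.IsHomogeneous 1) (hB : B'.IsHomogeneous 1) (hC : C'.IsHomogeneous 1)
    (hD : D.IsHomogeneous 1) (q1 q2 : MvPolynomial (Fin 2) O)
    (hq1 : q1 = X 0 * A + X 1 * B') (hq2 : q2 = X 0 * C' + X 1 * D)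
    (hsyz : Syz q1 q2) (v : MvPolynomial (Fin 2) O) (hv : v.IsHomogeneous 2) (M : ℕ)
    (h0 : X 0 ^ (M + 1) * v ∈ Ideal.span {q1, q2})
    (h1 : X 1 ^ (M + 1) * v ∈ Ideal.span {q1, q2}) :
    ∃ c : O, v - C c * (A * D - B' * C') ∈ Ideal.span {q1, q2} := by
  have hq1h : q1.IsHomogeneous 2 := by
    rw [hq1]; exact ((isHomogeneous_X _ _).mul hA).add ((isHomogeneous_X _ _).mul hB)
  have hq2h : q2.IsHomogeneous 2 := by
    rw [hq2]; exact ((isHomogeneous_X _ _).mul hC).add ((isHomogeneous_X _ _).mul hD)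
  have homrep : ∀ i : Fin 2, X i ^ (M + 1) * v ∈ Ideal.span {q1, q2} →
      ∃ α β : MvPolynomial (Fin 2) O, α.IsHomogeneous (M + 1) ∧ β.IsHomogeneous (M + 1) ∧
        α * q1 + β * q2 = X i ^ (M + 1) * v := by
    intro i hi
    obtain ⟨α, β, hab⟩ := Ideal.mem_span_pair.mp hi
    refine ⟨homogeneousComponent (M + 1) α, homogeneousComponent (M + 1) β,
      homogeneousComponent_isHomogeneous _ _, homogeneousComponent_isHomogeneous _ _, ?_⟩
    have := congrArg (homogeneousComponent (M + 1 + 2)) hab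
    rw [map_add, hc_mul _ _ _ _ hq1h, hc_mul _ _ _ _ hq2h, hc_mul _ _ _ _ hv] at this
    rw [this, homogeneousComponent_eq_self]
    have := (isHomogeneous_X O i).pow (M + 1)
    simpa using this
  obtain ⟨α, β, hα, hβ, hab⟩ := homrep 0 h0
  obtain ⟨γ, δ, hγ, hδ, hcd⟩ := homrep 1 h1
  obtain ⟨h, hh1, hh2⟩ := hsyz (X 1 ^ (M + 1) * α - X 0 ^ (M + 1) * γ)
    (X 1 ^ (M + 1) * β - X 0 ^ (M + 1) * δ) (by linear_combination X 1 ^ (M + 1) * hab - X 0 ^ (M + 1) * hcd)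
  have hX : ∀ i : Fin 2, (X i ^ (M + 1) : MvPolynomial (Fin 2) O).IsHomogeneous (M + 1) := fun i => by
    simpa using (isHomogeneous_X O i).pow (M + 1)
  -- replace h by its homogeneous component
  have hh1' : X 1 ^ (M + 1) * α - X 0 ^ (M + 1) * γ = homogeneousComponent (2 * M) h * q2 := by
    rw [← hc_mul _ _ _ _ hq2h, ← hh1, homogeneousComponent_eq_self]
    have e : 2 * M + 2 = (M + 1) + (M + 1) := by ring
    rw [e]; exact ((hX 1).mul hα).sub ((hX 0).mul hγ)
  have hh2' : X 1 ^ (M + 1) * β - X 0 ^ (M + 1) * δ = -(homogeneousComponent (2 * M) h * q1) := by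
    rw [← hc_mul _ _ _ _ hq1h, ← map_neg, ← hh2, homogeneousComponent_eq_self]
    have e : 2 * M + 2 = (M + 1) + (M + 1) := by ring
    rw [e]; exact ((hX 1).mul hβ).sub ((hX 0).mul hδ)
  obtain ⟨c, g1, g2, hg⟩ := pow_sq_split M (homogeneousComponent (2 * M) h)
    (homogeneousComponent_isHomogeneous _ _)
  rw [hg] at hh1' hh2'
  refine ⟨c, ?_⟩
  obtain ⟨α'', hα''⟩ := X_pow_dvd_of (O := O) (0 : Fin 2) 1 (by decide) (M + 1) (M + 1)
    (α - C c * (X 0 ^ M * D) - g2 * q2) (γ + C c * (X 1 ^ M * C') + g1 * q2) (by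
      rw [hq2] at hh1' ⊢
      linear_combination hh1')
  obtain ⟨β'', hβ''⟩ := X_pow_dvd_of (O := O) (0 : Fin 2) 1 (by decide) (M + 1) (M + 1)
    (β + C c * (X 0 ^ M * B') + g2 * q1) (δ - C c * (X 1 ^ M * A) - g1 * q1) (by
      rw [hq1] at hh2' ⊢
      linear_combination hh2')
  rw [Ideal.mem_span_pair]
  refine ⟨α'', β'', ?_⟩
  have hne : (X 0 ^ (M + 1) : MvPolynomial (Fin 2) O) ≠ 0 := pow_ne_zero _ (X_ne_zero _)
  apply mul_left_cancel₀ hne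
  have e1 : X 0 ^ (M + 1) * (α'' * q1 + β'' * q2) = (X 0 ^ (M + 1) * α'') * q1 + (X 0 ^ (M + 1) * β'') * q2 := by ring
  rw [e1, ← hα'', ← hβ'']
  have e2 : (C c : MvPolynomial (Fin 2) O) * X 0 ^ M * (D * q1 - B' * q2) = C c * X 0 ^ (M + 1) * (A * D - B' * C') := by
    rw [hq1, hq2]; ring
  linear_combination hab - e2

theorem mem_monom_span {O : Type*} [CommRing O] (N : ℕ) (h : MvPolynomial (Fin 3) O)
    (hm : ∃ f g, X 2 ^ N * h = X 0 ^ N * f + X 1 ^ N * g) :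
    ∃ f g, h = X 0 ^ N * f + X 1 ^ N * g := by
  obtain ⟨f, g, hfg⟩ := hm
  let s : Set (Fin 3 →₀ ℕ) := {Finsupp.single 0 N, Finsupp.single 1 N}
  have hs : (Ideal.span ((fun a => monomial a (1 : O)) '' s)) = Ideal.span {X 0 ^ N, X 1 ^ N} := by
    simp only [s, Set.image_pair, X_pow_eq_monomial]
  have h1 : X 2 ^ N * h ∈ Ideal.span ((fun a => monomial a (1 : O)) '' s) := by
    rw [hs, Ideal.mem_span_pair]; exact ⟨f, g, by rw [hfg]; ring⟩
  have h2 : h ∈ Ideal.span ((fun a => monomial a (1 : O)) '' s) := by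
    rw [mem_ideal_span_monomial_image] at h1 ⊢
    intro xi hxi
    have : xi + Finsupp.single 2 N ∈ (X 2 ^ N * h).support := by
      rw [mem_support_iff, X_pow_eq_monomial, add_comm, coeff_monomial_mul, one_mul]
      exact mem_support_iff.mp hxi
    obtain ⟨si, hsi, hle⟩ := h1 _ this
    refine ⟨si, hsi, ?_⟩
    rcases hsi with rfl | rfl
    · rw [Finsupp.single_le_iff] at hle ⊢; simpa using hle
    · rw [Finsupp.single_le_iff] at hle ⊢; simpa using hle
  rw [hs, Ideal.mem_span_pair] at h2
  obtain ⟨a, b, hab⟩ := h2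
  exact ⟨a, b, by rw [← hab]; ring⟩

theorem Z3 {O : Type*} [CommRing O] [IsDomain O] (q1 q2 : MvPolynomial (Fin 3) O)
    (hsyz : Syz q1 q2) (hq : q2 ≠ 0) (v : MvPolynomial (Fin 3) O) (N : ℕ)
    (h : ∀ i, X i ^ N * v ∈ Ideal.span {q1, q2}) : v ∈ Ideal.span {q1, q2} := by
  obtain ⟨α0, β0, h0⟩ := Ideal.mem_span_pair.mp (h 0)
  obtain ⟨α1, β1, h1⟩ := Ideal.mem_span_pair.mp (h 1)
  obtain ⟨α2, β2, h2⟩ := Ideal.mem_span_pair.mp (h 2)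
  obtain ⟨a, ha, ha'⟩ := hsyz (X 1 ^ N * α0 - X 0 ^ N * α1) (X 1 ^ N * β0 - X 0 ^ N * β1)
    (by linear_combination X 1 ^ N * h0 - X 0 ^ N * h1)
  obtain ⟨b, hb, hb'⟩ := hsyz (X 2 ^ N * α0 - X 0 ^ N * α2) (X 2 ^ N * β0 - X 0 ^ N * β2)
    (by linear_combination X 2 ^ N * h0 - X 0 ^ N * h2)
  obtain ⟨e, he, he'⟩ := hsyz (X 2 ^ N * α1 - X 1 ^ N * α2) (X 2 ^ N * β1 - X 1 ^ N * β2)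
    (by linear_combination X 2 ^ N * h1 - X 1 ^ N * h2)
  have hrel : X 2 ^ N * a = X 0 ^ N * (-e) + X 1 ^ N * b := by
    apply mul_right_cancel₀ hq
    linear_combination -X 2 ^ N * ha + X 1 ^ N * hb - X 0 ^ N * he
  obtain ⟨f, g, hfg⟩ := mem_monom_span N a ⟨_, _, hrel⟩
  obtain ⟨α'', hα''⟩ := X_pow_dvd_of (O := O) (0 : Fin 3) 1 (by decide) N N
    (α0 - g * q2) (α1 + f * q2) (by rw [hfg] at ha; linear_combination ha)
  obtain ⟨β'', hβ''⟩ := X_pow_dvd_of (O := O) (0 : Fin 3) 1 (by decide) N N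
    (β0 + g * q1) (β1 - f * q1) (by rw [hfg] at ha'; linear_combination ha')
  rw [Ideal.mem_span_pair]
  refine ⟨α'', β'', ?_⟩
  have hne : (X 0 ^ N : MvPolynomial (Fin 3) O) ≠ 0 := pow_ne_zero _ (X_ne_zero _)
  apply mul_left_cancel₀ hne
  linear_combination h0 - hα'' * q1 - hβ'' * q2

theorem syz_of_relprime {A : Type*} [CommRing A] [IsDomain A] [DecompositionMonoid A] (q1 q2 : A)
    (h : IsRelPrime q1 q2) (hq : q2 ≠ 0) : Syz q1 q2 := by
  intro α β hab
  have h1 : q2 ∣ α * q1 := ⟨-β, by linear_combination hab⟩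
  obtain ⟨g, hg⟩ := h.symm.dvd_of_dvd_mul_right h1
  refine ⟨g, by rw [hg]; ring, ?_⟩
  apply mul_right_cancel₀ hq
  rw [hg] at hab
  linear_combination hab

theorem mem_span3 {A : Type*} [CommRing A] {x y z w : A} :
    w ∈ Ideal.span {x, y, z} ↔ ∃ a b c, a * x + b * y + c * z = w := by
  simpa using Submodule.mem_span_triple (R := A) (x := x) (y := y) (z := z) (w := w)

theorem relprime_ne_zero {σ S : Type*} [CommRing S] [Nontrivial S] (q1 q2 : MvPolynomial σ S)
    (h1 : constantCoeff q1 = 0) (h : IsRelPrime q1 q2) : q2 ≠ 0 := by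
  rintro rfl
  have hu : IsUnit q1 := h dvd_rfl (dvd_zero _)
  have := hu.map (constantCoeff (σ := σ) (R := S))
  rw [h1] at this
  exact not_isUnit_zero this

theorem constCoeff_hom {σ S : Type*} [CommRing S] (q : MvPolynomial σ S) (j : ℕ)
    (h : q.IsHomogeneous j) (hj : j ≠ 0) : constantCoeff q = 0 := by
  by_contra hne
  have := h (d := 0) hne
  simp at this
  exact hj this.symm

/-- set the first of three variables to zero -/
def rho0 (O : Type*) [CommRing O] : MvPolynomial (Fin 3) O →ₐ[O] MvPolynomial (Fin 2) O :=
  aeval ![0, X 0, X 1]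

theorem rho0_hom {O : Type*} [CommRing O] (q : MvPolynomial (Fin 3) O) (j : ℕ)
    (h : q.IsHomogeneous j) : (rho0 O q).IsHomogeneous j := by
  have := h.aeval (![0, X 0, X 1] : Fin 3 → MvPolynomial (Fin 2) O) (n := 1) (by
    intro i; fin_cases i
    · exact isHomogeneous_zero _ _ _
    · exact isHomogeneous_X _ _
    · exact isHomogeneous_X _ _)
  rw [one_mul] at this; exact this

theorem rho0_sec {O : Type*} [CommRing O] (q : MvPolynomial (Fin 3) O) :
    q - rename (Fin.succ : Fin 2 → Fin 3) (rho0 O q) ∈ Ideal.span {(X 0 : MvPolynomial (Fin 3) O)} := by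
  let π := Ideal.Quotient.mkₐ O (Ideal.span {(X 0 : MvPolynomial (Fin 3) O)})
  have : π.comp ((rename (Fin.succ : Fin 2 → Fin 3)).comp (rho0 O)) = π := by
    apply MvPolynomial.algHom_ext
    intro i
    fin_cases i
    · simp [rho0, π]
    · simp [rho0, π]
    · simp [rho0, π]
  have h := DFunLike.congr_fun this q
  rw [← Ideal.Quotient.eq]
  exact h.symm

section
variable {O : Type*} [CommRing O] [IsDomain O] [IsDiscreteValuationRing O] {κ : Type*} [Field κ]
    (res : O →+* κ) (ϖ : O) (hϖ : Irreducible ϖ)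
    (hker : ∀ x, res x = 0 ↔ ϖ ∣ x)

include hϖ hker in
theorem relprime2 (q1 q2 : MvPolynomial (Fin 2) O)
    (hC2 : ¬ (map res q1 = 0 ∧ map res q2 = 0)) (u : O) (hu0 : u ≠ 0) (N : ℕ)
    (hu : ∀ i, X i ^ N * C u ∈ Ideal.span {q1, q2}) : IsRelPrime q1 q2 := by
  have hP : Prime (C ϖ : MvPolynomial (Fin 2) O) := (prime_C_iff _).mpr hϖ.prime
  have key : ∀ p : MvPolynomial (Fin 2) O, Prime p → p ∣ q1 → p ∣ q2 → False := by
    intro p hp h1 h2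
    have hd : ∀ i, p ∣ X i ^ N * C u := by
      intro i
      obtain ⟨a, b, hab⟩ := Ideal.mem_span_pair.mp (hu i)
      rw [← hab]
      exact dvd_add (h1.mul_left _) (h2.mul_left _)
    by_cases hpu : p ∣ C u
    · obtain ⟨e, he⟩ := IsDiscreteValuationRing.associated_pow_irreducible hu0 hϖ
      have : p ∣ C (ϖ ^ e) := hpu.trans (_root_.map_dvd C he.dvd)
      rw [C_pow] at this
      have h3 := hp.dvd_of_dvd_pow this
      have h4 : C ϖ ∣ p := (hp.associated_of_dvd hP h3).symm.dvd
      exact hC2 ⟨(C_dvd_iff_map_hom_eq_zero res ϖ hker _).mp (h4.trans h1),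
        (C_dvd_iff_map_hom_eq_zero res ϖ hker _).mp (h4.trans h2)⟩
    · have hx : ∀ i, p ∣ X i := fun i =>
        hp.dvd_of_dvd_pow ((hp.dvd_or_dvd (hd i)).resolve_right hpu)
      have h4 := (hp.associated_of_dvd X_prime (hx 0)).symm.dvd.trans (hx 1)
      rw [X_dvd_X] at h4
      exact absurd h4 (by decide)
  by_cases h1 : q1 = 0
  · have h2 : q2 ≠ 0 := by rintro rfl; exact hC2 (by simp [h1])
    apply IsRelPrime.symm
    rw [UniqueFactorizationMonoid.isRelPrime_iff_no_prime_factors h2]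
    intro p hp2 hp1 hp; exact key p hp hp1 hp2
  · rw [UniqueFactorizationMonoid.isRelPrime_iff_no_prime_factors h1]
    intro p hp1 hp2 hp; exact key p hp hp1 hp2

include hϖ hker in
theorem nzd_mod (hsurj : Function.Surjective res) (Q1 Q2 : MvPolynomial (Fin 3) O)
    (hs : Syz (map res Q1) (map res Q2)) (w : MvPolynomial (Fin 3) O)
    (h : C ϖ * w ∈ Ideal.span {Q1, Q2}) : w ∈ Ideal.span {Q1, Q2} := by
  obtain ⟨a, b, hab⟩ := Ideal.mem_span_pair.mp h
  have h1 := congrArg (map res) hab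
  have h0 : res ϖ = 0 := (hker ϖ).mpr dvd_rfl
  simp only [map_add, map_mul, map_C, h0, C_0, zero_mul] at h1
  obtain ⟨g, hg1, hg2⟩ := hs _ _ h1
  obtain ⟨g, rfl⟩ := map_surjective res hsurj g
  have e1 : C ϖ ∣ a - g * Q2 := by
    rw [C_dvd_iff_map_hom_eq_zero res ϖ hker]; simp [hg1]
  have e2 : C ϖ ∣ b + g * Q1 := by
    rw [C_dvd_iff_map_hom_eq_zero res ϖ hker]; simp [hg2]
  obtain ⟨a', ha'⟩ := e1
  obtain ⟨b', hb'⟩ := e2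
  rw [Ideal.mem_span_pair]
  refine ⟨a', b', ?_⟩
  have hne : (C ϖ : MvPolynomial (Fin 3) O) ≠ 0 := by
    simpa using hϖ.ne_zero
  apply mul_left_cancel₀ hne
  linear_combination hab - ha' * Q1 - hb' * Q2

include hϖ hker in
theorem nzd_mod_pow (hsurj : Function.Surjective res) (Q1 Q2 : MvPolynomial (Fin 3) O)
    (hs : Syz (map res Q1) (map res Q2)) (e : ℕ) (w : MvPolynomial (Fin 3) O)
    (h : C ϖ ^ e * w ∈ Ideal.span {Q1, Q2}) : w ∈ Ideal.span {Q1, Q2} := by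
  induction e with
  | zero => simpa using h
  | succ e ih =>
    apply ih
    apply nzd_mod res ϖ hϖ hker hsurj Q1 Q2 hs
    rwa [pow_succ', mul_assoc] at h

include hϖ hker in
theorem step1 (hsurj : Function.Surjective res) (Q1 Q2 : MvPolynomial (Fin 3) O)
    (hs : Syz (map res Q1) (map res Q2)) (hne : map res Q2 ≠ 0) (N : ℕ) (e : ℕ) :
    ∀ (v : MvPolynomial (Fin 3) O)
    (_ : ∀ i, ∃ w, X i ^ N * v - C ϖ ^ e * w ∈ Ideal.span {Q1, Q2}),
    ∃ w, v - C ϖ ^ e * w ∈ Ideal.span {Q1, Q2} := by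
  induction e with
  | zero => intro v _; exact ⟨v, by simp⟩
  | succ e ih =>
    intro v h
    have h0 : res ϖ = 0 := (hker ϖ).mpr dvd_rfl
    have hz : map res v ∈ Ideal.span {map res Q1, map res Q2} := by
      apply Z3 _ _ hs hne _ N
      intro i
      obtain ⟨w, hw⟩ := h i
      have := Ideal.mem_map_of_mem (map res) hw
      rw [Ideal.map_span, Set.image_pair] at this
      simpa [h0] using this
    obtain ⟨a, b, hab⟩ := Ideal.mem_span_pair.mp hz
    obtain ⟨a, rfl⟩ := map_surjective res hsurj a
    obtain ⟨b, rfl⟩ := map_surjective res hsurj b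
    have e1 : C ϖ ∣ v - (a * Q1 + b * Q2) := by
      rw [C_dvd_iff_map_hom_eq_zero res ϖ hker]; simp [← hab]
    obtain ⟨w, hw⟩ := e1
    obtain ⟨w', hw'⟩ := ih w (by
      intro i
      obtain ⟨w2, hw2⟩ := h i
      refine ⟨w2, ?_⟩
      apply nzd_mod res ϖ hϖ hker hsurj Q1 Q2 hs
      obtain ⟨α, β, hαβ⟩ := Ideal.mem_span_pair.mp hw2
      rw [Ideal.mem_span_pair]
      refine ⟨α - X i ^ N * a, β - X i ^ N * b, ?_⟩
      linear_combination hαβ + X i ^ N * hw)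
    refine ⟨w', ?_⟩
    obtain ⟨α, β, hαβ⟩ := Ideal.mem_span_pair.mp hw'
    rw [Ideal.mem_span_pair]
    exact ⟨C ϖ * α + a, C ϖ * β + b, by linear_combination C ϖ * hαβ - hw⟩

include hϖ hker in
/-- case `a = 1` -/
theorem D3_one (E1 A1 B1 E2 A2 B2 : MvPolynomial (Fin 3) O)
    (hA1 : A1.IsHomogeneous 1) (hB1 : B1.IsHomogeneous 1)
    (hA2 : A2.IsHomogeneous 1) (hB2 : B2.IsHomogeneous 1)
    (Q1 Q2 : MvPolynomial (Fin 3) O) (hQ1 : Q1 = X 0 * E1 + X 1 * A1 + X 2 * B1)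
    (hQ2 : Q2 = X 0 * E2 + X 1 * A2 + X 2 * B2)
    (hC2 : ¬ (map res (rho0 O Q1) = 0 ∧ map res (rho0 O Q2) = 0))
    (u : O) (hu0 : u ≠ 0) (M : ℕ)
    (hu : ∀ i, X i ^ (M + 1) * C u ∈ Ideal.span {X 0, Q1, Q2})
    (v : MvPolynomial (Fin 3) O) (hvh : v.IsHomogeneous 2)
    (hv : ∀ i, X i ^ (M + 1) * v ∈ Ideal.span {X 0, Q1, Q2}) :
    ∃ c, v - C c * (A1 * B2 - B1 * A2) ∈ Ideal.span {X 0, Q1, Q2} := by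
  have hr1 : rho0 O Q1 = X 0 * rho0 O A1 + X 1 * rho0 O B1 := by
    rw [hQ1]; simp [rho0]
  have hr2 : rho0 O Q2 = X 0 * rho0 O A2 + X 1 * rho0 O B2 := by
    rw [hQ2]; simp [rho0]
  have hrX : rho0 O (X 0) = 0 := by simp [rho0]
  have hmap : ∀ f, f ∈ Ideal.span {X 0, Q1, Q2} → rho0 O f ∈ Ideal.span {rho0 O Q1, rho0 O Q2} := by
    intro f hf
    obtain ⟨a, b, c, rfl⟩ := mem_span3.mp hf
    rw [Ideal.mem_span_pair]
    exact ⟨rho0 O b, rho0 O c, by simp [hrX]⟩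
  have hX : ∀ i : Fin 2, ∃ j : Fin 3, rho0 O (X j) = X i := by
    intro i; fin_cases i
    · exact ⟨1, by simp [rho0]⟩
    · exact ⟨2, by simp [rho0]⟩
  have hrel := relprime2 res ϖ hϖ hker (rho0 O Q1) (rho0 O Q2) hC2 u hu0 (M + 1) (by
    intro i
    obtain ⟨j, hj⟩ := hX i
    have := hmap _ (hu j)
    rw [map_mul, map_pow, hj] at this
    simpa [rho0] using this)
  have hv' : ∀ i : Fin 2, X i ^ (M + 1) * rho0 O v ∈ Ideal.span {rho0 O Q1, rho0 O Q2} := by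
    intro i
    obtain ⟨j, hj⟩ := hX i
    have := hmap _ (hv j)
    rwa [map_mul, map_pow, hj] at this
  obtain ⟨c, hc⟩ := D2 (rho0 O A1) (rho0 O B1) (rho0 O A2) (rho0 O B2) (rho0_hom _ _ hA1)
    (rho0_hom _ _ hB1) (rho0_hom _ _ hA2) (rho0_hom _ _ hB2) _ _ hr1 hr2
    (syz_of_relprime _ _ hrel (relprime_ne_zero _ _ (by rw [hr1]; simp) hrel)) (rho0 O v)
    (rho0_hom _ _ hvh) M (hv' 0) (hv' 1)
  refine ⟨c, ?_⟩
  have hc2 : rho0 O (v - C c * (A1 * B2 - B1 * A2)) ∈ Ideal.span {rho0 O Q1, rho0 O Q2} := by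
    have : rho0 O (C c) = C c := by simp [rho0]
    simpa [this] using hc
  set f := v - C c * (A1 * B2 - B1 * A2)
  have hlift : ∀ g, rho0 O g ∈ Ideal.span {rho0 O Q1, rho0 O Q2} → g ∈ Ideal.span {X 0, Q1, Q2} := by
    intro g hg
    obtain ⟨a, b, hab⟩ := Ideal.mem_span_pair.mp hg
    obtain ⟨x, hx⟩ := Ideal.mem_span_singleton'.mp (rho0_sec g)
    obtain ⟨x1, hx1⟩ := Ideal.mem_span_singleton'.mp (rho0_sec Q1)
    obtain ⟨x2, hx2⟩ := Ideal.mem_span_singleton'.mp (rho0_sec Q2)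
    rw [mem_span3]
    rw [← hab, map_add, map_mul, map_mul] at hx
    refine ⟨x - rename Fin.succ a * x1 - rename Fin.succ b * x2, rename Fin.succ a, rename Fin.succ b, ?_⟩
    linear_combination hx - (rename Fin.succ a) * hx1 - (rename Fin.succ b) * hx2
  exact hlift _ hc2

include hϖ hker in
theorem D3 (hsurj : Function.Surjective res) (a : O) (ha : a ≠ 0)
    (E1 A1 B1 E2 A2 B2 : MvPolynomial (Fin 3) O)
    (hE1 : E1.IsHomogeneous 1) (hE2 : E2.IsHomogeneous 1)
    (hA1 : A1.IsHomogeneous 1) (hB1 : B1.IsHomogeneous 1)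
    (hA2 : A2.IsHomogeneous 1) (hB2 : B2.IsHomogeneous 1)
    (Q1 Q2 : MvPolynomial (Fin 3) O) (hQ1 : Q1 = X 0 * E1 + X 1 * A1 + X 2 * B1)
    (hQ2 : Q2 = X 0 * E2 + X 1 * A2 + X 2 * B2)
    (hC2 : ¬ (map res (rho0 O Q1) = 0 ∧ map res (rho0 O Q2) = 0))
    (hC3 : ¬ IsUnit a → IsRelPrime (map res Q1) (map res Q2))
    (u : O) (hu0 : u ≠ 0) (M : ℕ)
    (hu : ∀ i, X i ^ (M + 1) * C u ∈ Ideal.span {C a * X 0, Q1, Q2})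
    (v : MvPolynomial (Fin 3) O) (hvh : v.IsHomogeneous 2)
    (hv : ∀ i, X i ^ (M + 1) * v ∈ Ideal.span {C a * X 0, Q1, Q2}) :
    ∃ c, v - C c * (C a * (A1 * B2 - B1 * A2)) ∈ Ideal.span {C a * X 0, Q1, Q2} := by
  have hle : Ideal.span {C a * X 0, Q1, Q2} ≤ Ideal.span {X 0, Q1, Q2} := by
    rw [Ideal.span_le]
    rintro x (rfl | rfl | rfl)
    · exact Ideal.mul_mem_left _ _ (Ideal.subset_span (by simp))
    · exact Ideal.subset_span (by simp)
    · exact Ideal.subset_span (by simp)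
  by_cases hau : IsUnit a
  · obtain ⟨c, hc⟩ := D3_one res ϖ hϖ hker E1 A1 B1 E2 A2 B2 hA1 hB1 hA2 hB2 Q1 Q2 hQ1 hQ2 hC2
      u hu0 M (fun i => hle (hu i)) v hvh (fun i => hle (hv i))
    obtain ⟨b, hb⟩ := hau.exists_left_inv
    obtain ⟨x, y, z, h⟩ := mem_span3.mp hc
    have hb' : (C b * C a : MvPolynomial (Fin 3) O) = 1 := by rw [← C_mul, hb, C_1]
    refine ⟨c * b, mem_span3.mpr ⟨x * C b, y, z, ?_⟩⟩
    rw [C_mul]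
    linear_combination h + x * X 0 * hb' + C c * (A1 * B2 - B1 * A2) * hb'
  · have hrel := hC3 hau
    have hcc : constantCoeff (map res Q1) = 0 := by
      have h1 : constantCoeff Q1 = 0 := by rw [hQ1]; simp
      rw [constantCoeff_map, h1, map_zero]
    have hne := relprime_ne_zero _ _ hcc hrel
    have hs : Syz (map res Q1) (map res Q2) := syz_of_relprime _ _ hrel hne
    obtain ⟨e, he⟩ := IsDiscreteValuationRing.associated_pow_irreducible ha hϖ
    obtain ⟨t, ht⟩ := he.symm
    -- a = ϖ^e * t
    have hCa : (C a : MvPolynomial (Fin 3) O) = C ϖ ^ e * C (t : O) := by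
      rw [← ht, C_mul, C_pow]
    have hti : (C (t : O) * C ((t⁻¹ : Oˣ) : O) : MvPolynomial (Fin 3) O) = 1 := by
      rw [← C_mul]; simp
    have hnzd : ∀ w, C a * w ∈ Ideal.span {Q1, Q2} → w ∈ Ideal.span {Q1, Q2} := by
      intro w hw
      apply nzd_mod_pow res ϖ hϖ hker hsurj Q1 Q2 hs e
      have := Ideal.mul_mem_left _ (C ((t⁻¹ : Oˣ) : O)) hw
      have e2 : C ((t⁻¹ : Oˣ) : O) * (C a * w) = C ϖ ^ e * w := by
        rw [hCa]; linear_combination C ϖ ^ e * w * hti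
      rwa [e2] at this
    -- step 1
    obtain ⟨w0, hw0⟩ := step1 res ϖ hϖ hker hsurj Q1 Q2 hs hne (M + 1) e v (by
      intro i
      obtain ⟨x, y, z, h⟩ := mem_span3.mp (hv i)
      refine ⟨x * X 0 * C (t : O), Ideal.mem_span_pair.mpr ⟨y, z, ?_⟩⟩
      rw [hCa] at h
      linear_combination h)
    obtain ⟨w1, hw1, w, hvw⟩ : ∃ w1 ∈ Ideal.span {Q1, Q2}, ∃ w, v = C a * w + w1 :=
      ⟨_, hw0, C ((t⁻¹ : Oˣ) : O) * w0, by rw [hCa]; linear_combination -C ϖ ^ e * w0 * hti⟩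
    -- make w homogeneous
    have hQh1 : Q1.IsHomogeneous 2 := by
      rw [hQ1]; exact (((isHomogeneous_X _ _).mul hE1).add ((isHomogeneous_X _ _).mul hA1)).add
        ((isHomogeneous_X _ _).mul hB1)
    have hQh2 : Q2.IsHomogeneous 2 := by
      rw [hQ2]; exact (((isHomogeneous_X _ _).mul hE2).add ((isHomogeneous_X _ _).mul hA2)).add
        ((isHomogeneous_X _ _).mul hB2)
    obtain ⟨α, β, hαβ⟩ := Ideal.mem_span_pair.mp hw1
    have hvw2 : v = C a * homogeneousComponent 2 w +
        (homogeneousComponent 0 α * Q1 + homogeneousComponent 0 β * Q2) := by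
      have := congrArg (homogeneousComponent 2) hvw
      rw [homogeneousComponent_eq_self hvh, ← hαβ, map_add, map_add, homogeneousComponent_C_mul,
        hc_mul α Q1 0 2 hQh1, hc_mul β Q2 0 2 hQh2] at this
      exact this
    obtain ⟨c, hc⟩ := D3_one res ϖ hϖ hker E1 A1 B1 E2 A2 B2 hA1 hB1 hA2 hB2 Q1 Q2 hQ1 hQ2 hC2
      u hu0 M (fun i => hle (hu i)) (homogeneousComponent 2 w) (homogeneousComponent_isHomogeneous _ _) (by
        intro i
        obtain ⟨x, y, z, h⟩ := mem_span3.mp (hv i)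
        have h2 := hnzd (X i ^ (M + 1) * homogeneousComponent 2 w - x * X 0) (by
          rw [Ideal.mem_span_pair]
          refine ⟨y - X i ^ (M + 1) * homogeneousComponent 0 α, z - X i ^ (M + 1) * homogeneousComponent 0 β, ?_⟩
          linear_combination h + X i ^ (M + 1) * hvw2)
        obtain ⟨y', z', h'⟩ := Ideal.mem_span_pair.mp h2
        exact mem_span3.mpr ⟨x, y', z', by linear_combination h'⟩)
    obtain ⟨x, y, z, h⟩ := mem_span3.mp hc
    refine ⟨c, mem_span3.mpr ⟨x, C a * y + homogeneousComponent 0 α, C a * z + homogeneousComponent 0 β, ?_⟩⟩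
    linear_combination C a * h - hvw2

end

/-- index set for variables and equations -/
abbrev V (m : ℕ) := Fin m ⊕ Fin 2

section defs
variable {S : Type*} [CommRing S] {m : ℕ}

def lin (N : Matrix (Fin m) (V m) S) (i : Fin m) : MvPolynomial (V m) S :=
  ∑ j, C (N i j) * X j

def bet (c : Matrix (V m) (V m) S) (j : V m) : MvPolynomial (V m) S :=
  ∑ i, C (c i j) * X i

def quad (c : Matrix (V m) (V m) S) : MvPolynomial (V m) S := ∑ j, bet c j * X j

def Lid (N : Matrix (Fin m) (V m) S) (c : Fin 2 → Matrix (V m) (V m) S) :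
    Ideal (MvPolynomial (V m) S) :=
  Ideal.span (Set.range (lin N) ∪ Set.range (fun a => quad (c a)))

def sigM (N : Matrix (Fin m) (V m) S) (c : Fin 2 → Matrix (V m) (V m) S) :
    Matrix (V m) (V m) (MvPolynomial (V m) S) :=
  Matrix.of (Sum.elim (fun i j => C (N i j)) (fun a j => bet (c a) j))

def sig (N : Matrix (Fin m) (V m) S) (c : Fin 2 → Matrix (V m) (V m) S) :
    MvPolynomial (V m) S := (sigM N c).det

/-- the ideal of the variables -/
def mx (σ S : Type*) [CommRing S] : Ideal (MvPolynomial σ S) := Ideal.span (Set.range X)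

theorem X_mem_mx {σ : Type*} (i : σ) : (X i : MvPolynomial σ S) ∈ mx σ S :=
  Ideal.subset_span ⟨i, rfl⟩

theorem lin_mem (N : Matrix (Fin m) (V m) S) (c : Fin 2 → Matrix (V m) (V m) S) (i) :
    lin N i ∈ Lid N c := Ideal.subset_span (Or.inl ⟨i, rfl⟩)

theorem quad_mem (N : Matrix (Fin m) (V m) S) (c : Fin 2 → Matrix (V m) (V m) S) (a) :
    quad (c a) ∈ Lid N c := Ideal.subset_span (Or.inr ⟨a, rfl⟩)

theorem Lid_le {N : Matrix (Fin m) (V m) S} {c : Fin 2 → Matrix (V m) (V m) S}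
    {J : Ideal (MvPolynomial (V m) S)} (h1 : ∀ i, lin N i ∈ J) (h2 : ∀ a, quad (c a) ∈ J) :
    Lid N c ≤ J := by
  rw [Lid, Ideal.span_le]
  rintro x (⟨i, rfl⟩ | ⟨a, rfl⟩)
  · exact h1 i
  · exact h2 a

theorem bet_hom (c : Matrix (V m) (V m) S) (j : V m) : (bet c j).IsHomogeneous 1 := by
  apply IsHomogeneous.sum
  intro i _
  simpa using (isHomogeneous_C _ _).mul (isHomogeneous_X S i)

/-- no proper ideal containing `L` is generated by `≤ m+1` elements -/
def HH (N : Matrix (Fin m) (V m) S) (c : Fin 2 → Matrix (V m) (V m) S) : Prop :=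
  ∀ s : Finset (MvPolynomial (V m) S), s.card ≤ m + 1 → Lid N c ≤ Ideal.span (s : Set _) →
    Ideal.span (s : Set (MvPolynomial (V m) S)) = ⊤

/-- projection to three variables -/
def th (S : Type*) [CommRing S] {m : ℕ} (i0 : Fin m) : MvPolynomial (V m) S →ₐ[S] MvPolynomial (Fin 3) S :=
  aeval (Sum.elim (fun i => if i = i0 then X 0 else 0) ![X 1, X 2])

def io (S : Type*) [CommRing S] {m : ℕ} (i0 : Fin m) : MvPolynomial (Fin 3) S →ₐ[S] MvPolynomial (V m) S :=
  aeval ![X (Sum.inl i0), X (Sum.inr 0), X (Sum.inr 1)]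

theorem th_io (i0 : Fin m) (f : MvPolynomial (Fin 3) S) : th S i0 (io S i0 f) = f := by
  have : (th S i0).comp (io S i0) = AlgHom.id S _ := by
    apply MvPolynomial.algHom_ext
    intro i
    fin_cases i <;> simp [th, io]
  exact DFunLike.congr_fun this f

theorem io_th (i0 : Fin m) (J : Ideal (MvPolynomial (V m) S)) (hJ : ∀ i, i ≠ i0 → X (Sum.inl i) ∈ J)
    (f : MvPolynomial (V m) S) : f - io S i0 (th S i0 f) ∈ J := by
  let π := Ideal.Quotient.mkₐ S J
  have : π.comp ((io S i0).comp (th S i0)) = π := by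
    apply MvPolynomial.algHom_ext
    rintro (i | i)
    · by_cases h : i = i0
      · subst h; simp [th, io, π]
      · simp [th, io, π, h]
        symm; rw [Ideal.Quotient.eq_zero_iff_mem]; exact hJ i h
    · fin_cases i <;> simp [th, io, π]
  rw [← Ideal.Quotient.eq]
  exact (DFunLike.congr_fun this f).symm

theorem th_hom (i0 : Fin m) (f : MvPolynomial (V m) S) (j : ℕ) (h : f.IsHomogeneous j) :
    (th S i0 f).IsHomogeneous j := by
  have := h.aeval (Sum.elim (fun i => if i = i0 then X 0 else 0) ![X 1, X 2] : V m → MvPolynomial (Fin 3) S) (n := 1) (by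
    rintro (i | i)
    · by_cases h : i = i0
      · simpa [h] using isHomogeneous_X _ _
      · simpa [h] using isHomogeneous_zero _ _ _
    · fin_cases i
      · exact isHomogeneous_X _ _
      · exact isHomogeneous_X _ _)
  rw [one_mul] at this; exact this

theorem th_quad (i0 : Fin m) (c : Matrix (V m) (V m) S) :
    th S i0 (quad c) = X 0 * th S i0 (bet c (Sum.inl i0)) + X 1 * th S i0 (bet c (Sum.inr 0))
      + X 2 * th S i0 (bet c (Sum.inr 1)) := by
  rw [quad, map_sum, Fintype.sum_sum_type, Fin.sum_univ_two]
  simp only [map_mul]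
  rw [Finset.sum_eq_single i0]
  · simp [th]; ring
  · intro b _ hb; simp [th, hb]
  · simp

/-- diagonal normal form -/
def D0 (a : Fin m → S) : Matrix (Fin m) (V m) S := Matrix.of fun i => Sum.elim (fun j => if j = i then a i else 0) 0

theorem lin_D0 (a : Fin m → S) (i) : lin (D0 a) i = C (a i) * X (Sum.inl i) := by
  rw [lin, Fintype.sum_sum_type]
  simp only [D0, Matrix.of_apply, Sum.elim_inl, Sum.elim_inr, Pi.zero_apply, C_0, zero_mul, Finset.sum_const_zero, add_zero]
  rw [Finset.sum_eq_single i]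
  · simp
  · intro b _ hb; simp [hb]
  · simp

theorem sig_D0 (a : Fin m → S) (c : Fin 2 → Matrix (V m) (V m) S) :
    sig (D0 a) c = C (∏ i, a i) * (bet (c 0) (Sum.inr 0) * bet (c 1) (Sum.inr 1) -
      bet (c 0) (Sum.inr 1) * bet (c 1) (Sum.inr 0)) := by
  have : sigM (D0 a) c = Matrix.fromBlocks (Matrix.diagonal fun i => C (a i)) 0
      (Matrix.of fun b j => bet (c b) (Sum.inl j)) (Matrix.of fun b j => bet (c b) (Sum.inr j)) := by
    ext i j
    rcases i with i | i <;> rcases j with j | j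
    · simp only [sigM, D0, Matrix.of_apply, Sum.elim_inl, Matrix.fromBlocks_apply₁₁, Matrix.diagonal_apply]
      by_cases h : i = j
      · subst h; simp
      · simp [h, Ne.symm h]
    · simp [sigM, D0]
    · simp [sigM]
    · simp [sigM]
  rw [sig, this, Matrix.det_fromBlocks_zero₁₂, Matrix.det_diagonal, Matrix.det_fin_two]
  simp

end defs

section
variable {O : Type*} [CommRing O] [IsDomain O] [IsDiscreteValuationRing O] {κ : Type*} [Field κ]
    (res : O →+* κ) (ϖ : O) (hϖ : Irreducible ϖ)
    (hker : ∀ x, res x = 0 ↔ ϖ ∣ x) {m : ℕ}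

theorem constCoeff_quad {S : Type*} [CommRing S] (c : Matrix (V m) (V m) S) : constantCoeff (quad c) = 0 := by
  simp [quad]

include hϖ in
theorem nonunit_dvd (x : O) (h : ¬ IsUnit x) : ϖ ∣ x := by
  have h1 : x ∈ IsLocalRing.maximalIdeal O := h
  rwa [(IsDiscreteValuationRing.irreducible_iff_uniformizer ϖ).mp hϖ, Ideal.mem_span_singleton] at h1

include hϖ hker in
theorem condC1 (a : Fin m → O) (c : Fin 2 → Matrix (V m) (V m) O) (hH : HH (D0 a) c)
    (i1 i2 : Fin m) (hne : i1 ≠ i2) (h1 : ¬ IsUnit (a i1)) (h2 : ¬ IsUnit (a i2)) : False := by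
  classical
  let s : Finset (MvPolynomial (V m) O) :=
    insert (C ϖ) (((Finset.univ.erase i1).erase i2).image (lin (D0 a)) ∪ {quad (c 0), quad (c 1)})
  have hcard : s.card ≤ m + 1 := by
    have e1 : ((Finset.univ.erase i1).erase i2).card = m - 1 - 1 := by
      rw [Finset.card_erase_of_mem (by simp [hne.symm]), Finset.card_erase_of_mem (by simp)]; simp
    have e2 : (((Finset.univ.erase i1).erase i2).image (lin (D0 a))).card ≤ m - 1 - 1 :=
      e1 ▸ Finset.card_image_le
    have e3 : ({quad (c 0), quad (c 1)} : Finset (MvPolynomial (V m) O)).card ≤ 2 := Finset.card_le_two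
    have e4 := Finset.card_insert_le (C ϖ) (((Finset.univ.erase i1).erase i2).image (lin (D0 a)) ∪ {quad (c 0), quad (c 1)})
    have e5 := Finset.card_union_le (((Finset.univ.erase i1).erase i2).image (lin (D0 a))) {quad (c 0), quad (c 1)}
    have : i1.val ≠ i2.val := fun h => hne (Fin.ext h)
    have := i1.2; have := i2.2
    show (insert _ _ : Finset _).card ≤ _
    omega
  have hdiv : ∀ i, ¬ IsUnit (a i) → lin (D0 a) i ∈ Ideal.span (s : Set (MvPolynomial (V m) O)) := by
    intro i hi
    obtain ⟨b, hb⟩ := nonunit_dvd ϖ hϖ _ hi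
    rw [lin_D0, hb, C_mul]
    have : (C ϖ : MvPolynomial (V m) O) ∈ Ideal.span (s : Set (MvPolynomial (V m) O)) := Ideal.subset_span (by simp [s])
    rw [mul_assoc]
    exact Ideal.mul_mem_right _ _ this
  have htop := hH s hcard (Lid_le (by
    intro i
    by_cases e1 : i = i1
    · subst e1; exact hdiv _ h1
    by_cases e2 : i = i2
    · subst e2; exact hdiv _ h2
    apply Ideal.subset_span
    have : lin (D0 a) i ∈ ((Finset.univ.erase i1).erase i2).image (lin (D0 a)) :=
      Finset.mem_image_of_mem _ (by simp [e1, e2])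
    show _ ∈ (insert _ _ : Finset _)
    exact Finset.mem_insert_of_mem (Finset.mem_union_left _ this)) (by
    intro b
    apply Ideal.subset_span
    show _ ∈ (insert _ _ : Finset _)
    refine Finset.mem_insert_of_mem (Finset.mem_union_right _ ?_)
    fin_cases b <;> simp))
  have hle : Ideal.span (s : Set (MvPolynomial (V m) O)) ≤ RingHom.ker (res.comp constantCoeff) := by
    rw [Ideal.span_le]
    intro x hx
    have hx' : x ∈ s := hx
    simp only [s, Finset.mem_insert, Finset.mem_union, Finset.mem_image, Finset.mem_singleton] at hx'
    rw [SetLike.mem_coe, RingHom.mem_ker, RingHom.comp_apply]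
    rcases hx' with rfl | ⟨i, _, rfl⟩ | rfl | rfl
    · simpa using (hker ϖ).mpr dvd_rfl
    · rw [lin_D0]; simp
    · rw [constCoeff_quad, map_zero]
    · rw [constCoeff_quad, map_zero]
  rw [htop, top_le_iff] at hle
  have := (Ideal.eq_top_iff_one _).mp hle
  rw [RingHom.mem_ker, map_one] at this
  exact one_ne_zero this

include hker in
theorem condC2 (a : Fin m → O) (c : Fin 2 → Matrix (V m) (V m) O) (hH : HH (D0 a) c) (i0 : Fin m)
    (h : map res (rho0 O (th O i0 (quad (c 0)))) = 0 ∧ map res (rho0 O (th O i0 (quad (c 1)))) = 0) : False := by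
  classical
  let s : Finset (MvPolynomial (V m) O) :=
    insert (C ϖ) (Finset.univ.image (fun i : Fin m => (X (Sum.inl i) : MvPolynomial (V m) O)))
  have hcard : s.card ≤ m + 1 := by
    refine (Finset.card_insert_le _ _).trans ?_
    have := Finset.card_image_le (s := Finset.univ) (f := (fun i : Fin m => (X (Sum.inl i) : MvPolynomial (V m) O)))
    simpa using this
  set J := Ideal.span (s : Set (MvPolynomial (V m) O)) with hJ
  have hϖJ : C ϖ ∈ J := Ideal.subset_span (by simp [s])
  have hXJ : ∀ i, X (Sum.inl i) ∈ J := fun i => Ideal.subset_span (by simp [s])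
  have hq : ∀ b, map res (rho0 O (th O i0 (quad (c b)))) = 0 → quad (c b) ∈ J := by
    intro b hb
    have h1 := io_th i0 J (fun i _ => hXJ i) (quad (c b))
    have h2 := rho0_sec (th O i0 (quad (c b)))
    obtain ⟨y, hy⟩ := Ideal.mem_span_singleton'.mp h2
    obtain ⟨z, hz⟩ := (C_dvd_iff_map_hom_eq_zero res ϖ hker _).mpr hb
    have h3 : io O i0 (th O i0 (quad (c b))) ∈ J := by
      have : th O i0 (quad (c b)) = y * X 0 + C ϖ * rename Fin.succ z := by
        rw [hy, hz, map_mul, rename_C]; ring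
      rw [this, map_add, map_mul, map_mul]
      refine Ideal.add_mem _ (Ideal.mul_mem_left _ _ ?_) (Ideal.mul_mem_right _ _ ?_)
      · simpa [io] using hXJ i0
      · simpa [io] using hϖJ
    have := Ideal.add_mem _ h1 h3
    simpa using this
  have htop := hH s hcard (Lid_le (fun i => by rw [lin_D0]; exact Ideal.mul_mem_left _ _ (hXJ i)) (by
    intro b; fin_cases b
    · exact hq 0 h.1
    · exact hq 1 h.2))
  have hle : J ≤ RingHom.ker (res.comp constantCoeff) := by
    rw [hJ, Ideal.span_le]
    intro x hx
    have hx' : x ∈ s := hx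
    simp only [s, Finset.mem_insert, Finset.mem_image] at hx'
    rw [SetLike.mem_coe, RingHom.mem_ker, RingHom.comp_apply]
    rcases hx' with rfl | ⟨i, _, rfl⟩
    · simpa using (hker ϖ).mpr dvd_rfl
    · simp
  rw [hJ, htop, top_le_iff] at hle
  have := (Ideal.eq_top_iff_one _).mp hle
  rw [RingHom.mem_ker, map_one] at this
  exact one_ne_zero this

include hϖ hker in
theorem condC3 (hsurj : Function.Surjective res) (a : Fin m → O) (c : Fin 2 → Matrix (V m) (V m) O) (hH : HH (D0 a) c) (i0 : Fin m)
    (hi0 : ¬ IsUnit (a i0)) :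
    IsRelPrime (map res (th O i0 (quad (c 0)))) (map res (th O i0 (quad (c 1)))) := by
  classical
  intro h0 hd0 hd1
  obtain ⟨h, rfl⟩ := map_surjective res hsurj h0
  let s : Finset (MvPolynomial (V m) O) :=
    insert (C ϖ) (insert (io O i0 h) ((Finset.univ.erase i0).image (fun i : Fin m => (X (Sum.inl i) : MvPolynomial (V m) O))))
  have hcard : s.card ≤ m + 1 := by
    refine (Finset.card_insert_le _ _).trans ?_
    have := Finset.card_insert_le (io O i0 h) ((Finset.univ.erase i0).image (fun i : Fin m => (X (Sum.inl i) : MvPolynomial (V m) O)))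
    have h2 := Finset.card_image_le (s := Finset.univ.erase i0) (f := (fun i : Fin m => (X (Sum.inl i) : MvPolynomial (V m) O)))
    rw [Finset.card_erase_of_mem (by simp), Finset.card_univ, Fintype.card_fin] at h2
    have := i0.2
    omega
  set J := Ideal.span (s : Set (MvPolynomial (V m) O)) with hJ
  have hϖJ : C ϖ ∈ J := Ideal.subset_span (by simp [s])
  have hhJ : io O i0 h ∈ J := Ideal.subset_span (by simp [s])
  have hXJ : ∀ i, i ≠ i0 → X (Sum.inl i) ∈ J := fun i hi => Ideal.subset_span (by simp [s, hi])
  have hq : ∀ b, map res h ∣ map res (th O i0 (quad (c b))) → quad (c b) ∈ J := by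
    rintro b ⟨g, hg⟩
    obtain ⟨g, rfl⟩ := map_surjective res hsurj g
    have h1 := io_th i0 J hXJ (quad (c b))
    obtain ⟨z, hz⟩ := (C_dvd_iff_map_hom_eq_zero res ϖ hker (th O i0 (quad (c b)) - h * g)).mpr (by
      simp [hg])
    have h3 : io O i0 (th O i0 (quad (c b))) ∈ J := by
      have : th O i0 (quad (c b)) = h * g + C ϖ * z := by linear_combination hz
      rw [this, map_add, map_mul, map_mul]
      refine Ideal.add_mem _ (Ideal.mul_mem_right _ _ hhJ) (Ideal.mul_mem_right _ _ ?_)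
      simpa [io] using hϖJ
    have := Ideal.add_mem _ h1 h3
    simpa using this
  have htop := hH s hcard (Lid_le (fun i => by
      rw [lin_D0]
      by_cases e : i = i0
      · subst e
        obtain ⟨b, hb⟩ := nonunit_dvd ϖ hϖ _ hi0
        rw [hb, C_mul, mul_assoc]
        exact Ideal.mul_mem_right _ _ hϖJ
      · exact Ideal.mul_mem_left _ _ (hXJ i e)) (by
    intro b; fin_cases b
    · exact hq 0 hd0
    · exact hq 1 hd1))
  have hle : J ≤ Ideal.comap ((map res).comp (th O i0).toRingHom) (Ideal.span {map res h}) := by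
    rw [hJ, Ideal.span_le]
    intro x hx
    have hx' : x ∈ s := hx
    simp only [s, Finset.mem_insert, Finset.mem_image] at hx'
    rw [SetLike.mem_coe, Ideal.mem_comap]
    rcases hx' with rfl | rfl | ⟨i, hi, rfl⟩
    · have : res ϖ = 0 := (hker ϖ).mpr dvd_rfl
      simp [th, this]
    · have : ((map res).comp (th O i0).toRingHom) (io O i0 h) = map res h := by
        simp only [RingHom.comp_apply]
        congr 1
        exact th_io i0 h
      rw [this]; exact Ideal.mem_span_singleton_self _
    · have hne : i ≠ i0 := by simpa using hi
      simp [th, hne]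
  rw [hJ, htop, top_le_iff, Ideal.comap_eq_top_iff] at hle
  exact Ideal.span_singleton_eq_top.mp hle

include hϖ hker in
theorem Dnormal (hsurj : Function.Surjective res) (hm : 0 < m) (a : Fin m → O) (ha : ∀ i, a i ≠ 0)
    (c : Fin 2 → Matrix (V m) (V m) O) (hH : HH (D0 a) c)
    (u : O) (hu0 : u ≠ 0) (M : ℕ)
    (hu : ∀ f ∈ mx (V m) O ^ M, f * C u ∈ Lid (D0 a) c)
    (v : MvPolynomial (V m) O) (hvh : v.IsHomogeneous 2)
    (hv : ∀ f ∈ mx (V m) O ^ M, f * v ∈ Lid (D0 a) c) :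
    ∃ c0, v - C c0 * sig (D0 a) c ∈ Lid (D0 a) c := by
  classical
  obtain ⟨i0, hi0⟩ : ∃ i0 : Fin m, ∀ i, i ≠ i0 → IsUnit (a i) := by
    by_cases h : ∃ i1, ¬ IsUnit (a i1)
    · obtain ⟨i1, h1⟩ := h
      refine ⟨i1, fun i hi => ?_⟩
      by_contra h2
      exact condC1 res ϖ hϖ hker a c hH i i1 hi h2 h1
    · push Not at h
      exact ⟨⟨0, hm⟩, fun i _ => h i⟩
  have hXL : ∀ i, i ≠ i0 → X (Sum.inl i) ∈ Lid (D0 a) c := by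
    intro i hi
    obtain ⟨b, hb⟩ := (hi0 i hi).exists_left_inv
    have := Ideal.mul_mem_left _ (C b) (lin_mem (D0 a) c i)
    rwa [lin_D0, ← mul_assoc, ← C_mul, hb, C_1, one_mul] at this
  set Q1 := th O i0 (quad (c 0)) with hQ1
  set Q2 := th O i0 (quad (c 1)) with hQ2
  set I3 : Ideal (MvPolynomial (Fin 3) O) := Ideal.span {C (a i0) * X 0, Q1, Q2} with hI3
  have hdown : Lid (D0 a) c ≤ I3.comap (th O i0) := by
    apply Lid_le
    · intro i
      rw [Ideal.mem_comap, lin_D0, map_mul]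
      by_cases e : i = i0
      · subst e
        apply Ideal.subset_span; simp [th]
      · simp [th, e]
    · intro b
      rw [Ideal.mem_comap]
      fin_cases b
      · exact Ideal.subset_span (by simp [hQ1])
      · exact Ideal.subset_span (by simp [hQ2])
  have hup : ∀ f, th O i0 f ∈ I3 → f ∈ Lid (D0 a) c := by
    intro f hf
    have h1 : ∀ g, io O i0 (th O i0 g) ∈ Lid (D0 a) c ↔ g ∈ Lid (D0 a) c := by
      intro g
      have := io_th i0 (Lid (D0 a) c) hXL g
      exact ⟨fun h => by simpa using Ideal.add_mem _ this h, fun h => by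
        simpa using Ideal.sub_mem _ h this⟩
    rw [← h1]
    obtain ⟨x, y, z, hxyz⟩ := mem_span3.mp hf
    rw [← hxyz]
    simp only [map_add, map_mul]
    refine Ideal.add_mem _ (Ideal.add_mem _ ?_ ?_) ?_
    · apply Ideal.mul_mem_left
      have := lin_mem (D0 a) c i0
      rw [lin_D0] at this
      simpa [io] using this
    · exact Ideal.mul_mem_left _ _ ((h1 _).mpr (quad_mem _ c 0))
    · exact Ideal.mul_mem_left _ _ ((h1 _).mpr (quad_mem _ c 1))
  have hXpow : ∀ j : Fin 3, io O i0 (X j) ^ (M + 1) ∈ mx (V m) O ^ M := by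
    intro j
    refine Ideal.pow_le_pow_right (Nat.le_succ M) (Ideal.pow_mem_pow ?_ _)
    fin_cases j <;> simp [io, X_mem_mx]
  have hthX : ∀ (j : Fin 3) g, X j ^ (M + 1) * th O i0 g = th O i0 (io O i0 (X j) ^ (M + 1) * g) := by
    intro j g
    rw [map_mul, map_pow, th_io]
  have hCu : th O i0 (C u) = C u := by simp [th]
  obtain ⟨c0, hc0⟩ := D3 res ϖ hϖ hker hsurj (a i0) (ha i0)
    (th O i0 (bet (c 0) (Sum.inl i0))) (th O i0 (bet (c 0) (Sum.inr 0))) (th O i0 (bet (c 0) (Sum.inr 1)))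
    (th O i0 (bet (c 1) (Sum.inl i0))) (th O i0 (bet (c 1) (Sum.inr 0))) (th O i0 (bet (c 1) (Sum.inr 1)))
    (th_hom _ _ _ (bet_hom _ _)) (th_hom _ _ _ (bet_hom _ _)) (th_hom _ _ _ (bet_hom _ _))
    (th_hom _ _ _ (bet_hom _ _)) (th_hom _ _ _ (bet_hom _ _)) (th_hom _ _ _ (bet_hom _ _))
    Q1 Q2 (th_quad _ _) (th_quad _ _)
    (fun h => condC2 res ϖ hker a c hH i0 h)
    (fun h => condC3 res ϖ hϖ hker hsurj a c hH i0 h)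
    u hu0 M (fun j => by rw [← hCu, hthX]; exact hdown (hu _ (hXpow j)))
    (th O i0 v) (th_hom _ _ _ hvh) (fun j => by rw [hthX]; exact hdown (hv _ (hXpow j)))
  have hunit : IsUnit (∏ i ∈ Finset.univ.erase i0, a i) := by
    rw [IsUnit.prod_iff]
    intro i hi
    exact hi0 i (Finset.ne_of_mem_erase hi)
  obtain ⟨b, hb⟩ := hunit.exists_left_inv
  refine ⟨c0 * b, hup _ ?_⟩
  rw [sig_D0, ← Finset.mul_prod_erase Finset.univ a (Finset.mem_univ i0)]
  have e : (C b * C (∏ i ∈ Finset.univ.erase i0, a i) : MvPolynomial (Fin 3) O) = 1 := by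
    rw [← C_mul, hb, C_1]
  have hC : ∀ x, th O i0 (C x) = C x := by intro x; simp [th]
  rw [C_mul, C_mul]
  simp only [map_sub, map_mul (th O i0), hC]
  convert hc0 using 2
  linear_combination C c0 * C (a i0) * (th O i0 (bet (c 0) (Sum.inr 0)) * th O i0 (bet (c 1) (Sum.inr 1)) -
      th O i0 (bet (c 0) (Sum.inr 1)) * th O i0 (bet (c 1) (Sum.inr 0))) * e

end

open scoped Matrix

section coord
variable {S : Type*} [CommRing S] {m : ℕ}

/-- linear change of coordinates -/
def Th (Q : Matrix (V m) (V m) S) : MvPolynomial (V m) S →ₐ[S] MvPolynomial (V m) S :=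
  aeval (fun l => ∑ k, C (Q l k) * X k)

theorem Th_X (Q : Matrix (V m) (V m) S) (l) : Th Q (X l) = ∑ k, C (Q l k) * X k := by
  simp [Th]

theorem Th_C (Q : Matrix (V m) (V m) S) (x) : Th Q (C x) = C x := by
  simp [Th]

theorem Th_lin (Q : Matrix (V m) (V m) S) (N : Matrix (Fin m) (V m) S) (i) :
    Th Q (lin N i) = lin (N * Q) i := by
  simp only [lin, map_sum, map_mul, Th_C, Th_X, Matrix.mul_apply, Finset.mul_sum, Finset.sum_mul]
  rw [Finset.sum_comm]
  refine Finset.sum_congr rfl fun l _ => Finset.sum_congr rfl fun j _ => by ring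

theorem Th_bet (Q c : Matrix (V m) (V m) S) (j) : Th Q (bet c j) = bet (Qᵀ * c) j := by
  simp only [bet, map_sum, map_mul, Th_C, Th_X, Matrix.mul_apply, Finset.mul_sum, Finset.sum_mul, Matrix.transpose_apply]
  rw [Finset.sum_comm]
  refine Finset.sum_congr rfl fun l _ => Finset.sum_congr rfl fun j _ => by ring

theorem bet_mul (Q c : Matrix (V m) (V m) S) (j) : bet (c * Q) j = ∑ l, bet c l * C (Q l j) := by
  simp only [bet, Matrix.mul_apply, map_sum, map_mul, Finset.sum_mul]
  rw [Finset.sum_comm]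
  refine Finset.sum_congr rfl fun l _ => Finset.sum_congr rfl fun j _ => by ring

theorem Th_quad (Q c : Matrix (V m) (V m) S) : Th Q (quad c) = quad (Qᵀ * c * Q) := by
  simp only [quad, map_sum, map_mul, Th_bet, bet_mul Q (Qᵀ * c), Th_X]
  simp only [Finset.mul_sum, Finset.sum_mul]
  rw [Finset.sum_comm]
  refine Finset.sum_congr rfl fun l _ => Finset.sum_congr rfl fun j _ => by ring

theorem Th_sig (Q : Matrix (V m) (V m) S) (N : Matrix (Fin m) (V m) S) (c : Fin 2 → Matrix (V m) (V m) S) :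
    sig (N * Q) (fun a => Qᵀ * c a * Q) = Th Q (sig N c) * C Q.det := by
  have : sigM (N * Q) (fun a => Qᵀ * c a * Q) = (sigM N c).map (Th Q) * Q.map C := by
    ext1 i j
    rcases i with i | i
    · simp [sigM, Matrix.mul_apply, Th_C, map_sum]
    · simp [sigM, Matrix.mul_apply, Th_bet, bet_mul]
  rw [sig, this, Matrix.det_mul, sig]
  congr 1
  · exact (AlgHom.map_det (Th Q) (sigM N c)).symm
  · exact (RingHom.map_det C Q).symm

theorem Th_comp (Q Q' : Matrix (V m) (V m) S) (f) : Th Q (Th Q' f) = Th (Q' * Q) f := by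
  have : (Th Q).comp (Th Q') = Th (Q' * Q) := by
    apply MvPolynomial.algHom_ext
    intro i
    simp only [AlgHom.comp_apply, Th_X, map_sum, map_mul, Th_C, Matrix.mul_apply, Finset.mul_sum, Finset.sum_mul]
    rw [Finset.sum_comm]
    refine Finset.sum_congr rfl fun l _ => Finset.sum_congr rfl fun j _ => by ring
  exact DFunLike.congr_fun this f

theorem Th_one (f) : Th (1 : Matrix (V m) (V m) S) f = f := by
  have : Th (1 : Matrix (V m) (V m) S) = AlgHom.id S _ := by
    apply MvPolynomial.algHom_ext
    intro i
    rw [Th_X, Finset.sum_eq_single i]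
    · simp
    · intro b _ hb; simp [Matrix.one_apply_ne' hb]
    · simp
  exact DFunLike.congr_fun this f

theorem Th_mx (Q : Matrix (V m) (V m) S) (M : ℕ) (f) (hf : f ∈ mx (V m) S ^ M) : Th Q f ∈ mx (V m) S ^ M := by
  have h1 : (mx (V m) S).map (Th Q) ≤ mx (V m) S := by
    rw [mx, Ideal.map_span, Ideal.span_le]
    rintro _ ⟨_, ⟨i, rfl⟩, rfl⟩
    rw [Th_X]
    exact Ideal.sum_mem _ fun k _ => Ideal.mul_mem_left _ _ (X_mem_mx k)
  have h2 := Ideal.mem_map_of_mem (Th Q) hf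
  rw [Ideal.map_pow] at h2
  exact Ideal.pow_right_mono h1 M h2

theorem Th_hom (Q : Matrix (V m) (V m) S) (f : MvPolynomial (V m) S) (j : ℕ) (hf : f.IsHomogeneous j) :
    (Th Q f).IsHomogeneous j := by
  have := hf.aeval (fun l => ∑ k, C (Q l k) * X k : V m → MvPolynomial (V m) S) (n := 1) (by
    intro i
    apply IsHomogeneous.sum
    intro i _
    simpa using (isHomogeneous_C _ _).mul (isHomogeneous_X S i))
  rw [one_mul] at this; exact this

theorem Th_Lid (Q : Matrix (V m) (V m) S) (N : Matrix (Fin m) (V m) S) (c : Fin 2 → Matrix (V m) (V m) S)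
    (f) (hf : f ∈ Lid N c) : Th Q f ∈ Lid (N * Q) (fun a => Qᵀ * c a * Q) := by
  have : Lid N c ≤ (Lid (N * Q) (fun a => Qᵀ * c a * Q)).comap (Th Q) := by
    apply Lid_le
    · intro i; rw [Ideal.mem_comap, Th_lin]; exact lin_mem _ _ _
    · intro i; rw [Ideal.mem_comap, Th_quad]; exact quad_mem _ (fun a => Qᵀ * c a * Q) i
  exact this hf

theorem lin_mul (P : Matrix (Fin m) (Fin m) S) (N : Matrix (Fin m) (V m) S) (i) :
    lin (P * N) i = ∑ j, C (P i j) * lin N j := by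
  simp only [lin, Matrix.mul_apply, map_sum, map_mul, Finset.sum_mul, Finset.mul_sum]
  rw [Finset.sum_comm]
  refine Finset.sum_congr rfl fun l _ => Finset.sum_congr rfl fun j _ => by ring

theorem Lid_mul_le (P : Matrix (Fin m) (Fin m) S) (N : Matrix (Fin m) (V m) S) (c : Fin 2 → Matrix (V m) (V m) S) :
    Lid (P * N) c ≤ Lid N c := by
  apply Lid_le
  · intro i; rw [lin_mul]; exact Ideal.sum_mem _ fun j _ => Ideal.mul_mem_left _ _ (lin_mem _ _ _)
  · exact quad_mem N c

theorem Lid_mul (P P' : Matrix (Fin m) (Fin m) S) (hP : P' * P = 1) (N : Matrix (Fin m) (V m) S) (c : Fin 2 → Matrix (V m) (V m) S) :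
    Lid (P * N) c = Lid N c := by
  apply le_antisymm (Lid_mul_le P N c)
  have := Lid_mul_le P' (P * N) c
  rwa [← Matrix.mul_assoc, hP, Matrix.one_mul] at this

theorem sig_mul (P : Matrix (Fin m) (Fin m) S) (N : Matrix (Fin m) (V m) S) (c : Fin 2 → Matrix (V m) (V m) S) :
    sig (P * N) c = C P.det * sig N c := by
  have : sigM (P * N) c = Matrix.fromBlocks (P.map C) 0 0 1 * sigM N c := by
    ext1 i j
    rcases i with i | i
    · simp [sigM, Matrix.mul_apply, Fintype.sum_sum_type, map_sum]
    · simp [sigM, Matrix.mul_apply, Fintype.sum_sum_type, Matrix.one_apply]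
  rw [sig, this, Matrix.det_mul, Matrix.det_fromBlocks_zero₁₂, Matrix.det_one, mul_one]
  congr 1
  exact (RingHom.map_det C P).symm

theorem HH_transfer (N N' : Matrix (Fin m) (V m) S) (c c' : Fin 2 → Matrix (V m) (V m) S)
    (Q Q' : Matrix (V m) (V m) S) (h1 : Q * Q' = 1) (h2 : Q' * Q = 1)
    (hL : ∀ f ∈ Lid N c, Th Q f ∈ Lid N' c') (hH : HH N c) : HH N' c' := by
  classical
  intro s hs hle
  have e : Ideal.span ((s.image (Th Q') : Finset _) : Set (MvPolynomial (V m) S)) = (Ideal.span (s : Set (MvPolynomial (V m) S))).map (Th Q') := by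
    rw [Ideal.map_span, Finset.coe_image]
  have h3 := hH (s.image (Th Q')) (Finset.card_image_le.trans hs) (by
    intro f hf
    rw [e]
    have := Ideal.mem_map_of_mem (Th Q') (hle (hL f hf))
    rwa [Th_comp, h1, Th_one] at this)
  rw [e] at h3
  rw [Ideal.eq_top_iff_one]
  have h4 : (1 : MvPolynomial (V m) S) ∈ Ideal.map (Th Q') (Ideal.span (s : Set (MvPolynomial (V m) S))) := by rw [h3]; trivial
  have h5 : Ideal.map (Th Q') (Ideal.span (s : Set (MvPolynomial (V m) S))) ≤ (Ideal.span (s : Set (MvPolynomial (V m) S))).comap (Th Q) := by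
    rw [Ideal.map_le_iff_le_comap]
    intro f hf
    rw [Ideal.mem_comap, Ideal.mem_comap, Th_comp, h2, Th_one]
    exact hf
  have := h5 h4
  rwa [Ideal.mem_comap, map_one] at this

end coord

section smith
variable {O : Type*} [CommRing O] [IsDomain O] [IsPrincipalIdealRing O] {m : ℕ}

/-- linear form of a vector -/
def lf {S : Type*} [CommRing S] {m : ℕ} : (V m → S) →ₗ[S] MvPolynomial (V m) S where
  toFun w := ∑ j, C (w j) * X j
  map_add' a b := by simp [add_mul, Finset.sum_add_distrib]
  map_smul' r a := by
    simp only [Pi.smul_apply, smul_eq_mul, C_mul, RingHom.id_apply, Finset.smul_sum, smul_eq_C_mul, mul_assoc]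

theorem lf_cc {S : Type*} [CommRing S] {m : ℕ} (w : V m → S) : constantCoeff (lf w) = 0 := by
  simp [lf]

theorem smith_exists (N : Matrix (Fin m) (V m) O) (c : Fin 2 → Matrix (V m) (V m) O) (hH : HH N c) :
    ∃ (P P' : Matrix (Fin m) (Fin m) O) (a : Fin m → O) (W W' : Matrix (V m) (V m) O),
      P * P' = 1 ∧ P' * P = 1 ∧ W * W' = 1 ∧ W' * W = 1 ∧ (∀ i, a i ≠ 0) ∧ N = P * D0 a * W := by
  classical
  set R : Submodule O (V m → O) := Submodule.span O (Set.range N) with hR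
  obtain ⟨r, snf⟩ := Submodule.smithNormalForm (Pi.basisFun O (V m)) R
  have hr1 : r ≤ m := by
    have h1 : Module.finrank O R ≤ m := by
      have := finrank_range_le_card (R := O) N
      simpa [Set.finrank] using this
    rw [Module.finrank_eq_card_basis snf.bN] at h1
    simpa using h1
  have hNR : ∀ i, N i ∈ R := fun i => Submodule.subset_span ⟨i, rfl⟩
  have hNrep : ∀ i, N i = ∑ j, snf.bN.repr ⟨N i, hNR i⟩ j • (snf.bN j : V m → O) := by
    intro i
    have := congrArg Subtype.val (snf.bN.sum_repr ⟨N i, hNR i⟩)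
    refine this.symm.trans ?_
    rw [AddSubmonoidClass.coe_finsetSum]
    rfl
  have hr2 : m ≤ r := by
    by_contra hlt
    push Not at hlt
    let s : Finset (MvPolynomial (V m) O) :=
      Finset.univ.image (fun j => lf (snf.bN j : V m → O)) ∪ {quad (c 0), quad (c 1)}
    have hcard : s.card ≤ m + 1 := by
      have e1 := Finset.card_union_le (Finset.univ.image (fun j => lf (snf.bN j : V m → O))) {quad (c 0), quad (c 1)}
      have e2 := Finset.card_image_le (s := Finset.univ) (f := fun j => lf (snf.bN j : V m → O))
      have e3 : ({quad (c 0), quad (c 1)} : Finset (MvPolynomial (V m) O)).card ≤ 2 := Finset.card_le_two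
      rw [Finset.card_univ, Fintype.card_fin] at e2
      show (_ ∪ _ : Finset _).card ≤ _
      omega
    have htop := hH s hcard (Lid_le (by
      intro i
      have : lin N i = lf (N i) := rfl
      rw [this, hNrep, map_sum]
      refine Ideal.sum_mem _ fun j _ => ?_
      rw [map_smul, smul_eq_C_mul]
      exact Ideal.mul_mem_left _ _ (Ideal.subset_span (by simp [s]))) (by
      intro b
      apply Ideal.subset_span
      show _ ∈ (_ ∪ _ : Finset _)
      refine (Finset.mem_union_right _ ?_)
      fin_cases b <;> simp))
    have hle : Ideal.span (s : Set (MvPolynomial (V m) O)) ≤ RingHom.ker constantCoeff := by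
      rw [Ideal.span_le]
      intro x hx
      have hx' : x ∈ s := hx
      simp only [s, Finset.mem_union, Finset.mem_image, Finset.mem_insert, Finset.mem_singleton] at hx'
      rw [SetLike.mem_coe, RingHom.mem_ker]
      rcases hx' with ⟨i, _, rfl⟩ | rfl | rfl
      · exact lf_cc _
      · exact constCoeff_quad _
      · exact constCoeff_quad _
    rw [htop, top_le_iff] at hle
    have := (Ideal.eq_top_iff_one _).mp hle
    rw [RingHom.mem_ker, map_one] at this
    exact one_ne_zero this
  obtain rfl : r = m := le_antisymm hr1 hr2
  let P : Matrix (Fin r) (Fin r) O := Matrix.of fun i j => snf.bN.repr ⟨N i, hNR i⟩ j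
  have hex : ∀ j, ∃ q : Fin r → O, ∑ i, q i • N i = (snf.bN j : V r → O) := by
    intro j
    exact (Submodule.mem_span_range_iff_exists_fun O).mp (snf.bN j).2
  choose q hq using hex
  let P' : Matrix (Fin r) (Fin r) O := Matrix.of q
  have hPP : P' * P = 1 := by
    ext j l
    have h1 : snf.bN j = ∑ l, (P' * P) j l • snf.bN l := by
      apply Subtype.ext
      rw [← hq j]
      simp only [Matrix.mul_apply, AddSubmonoidClass.coe_finsetSum, Submodule.coe_smul, Finset.sum_smul]
      rw [Finset.sum_comm]
      refine Finset.sum_congr rfl fun i _ => ?_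
      conv_lhs => rw [hNrep i, Finset.smul_sum]
      refine Finset.sum_congr rfl fun l _ => ?_
      rw [smul_smul]; rfl
    have h2 := congrArg (fun x => snf.bN.repr x l) h1
    simp only [map_sum, map_smul, Module.Basis.repr_self, Finsupp.coe_finsetSum, Finset.sum_apply, Finsupp.smul_apply] at h2
    rw [Finset.sum_eq_single l] at h2
    · simp only [Finsupp.single_apply, if_true, smul_eq_mul, mul_one] at h2
      rw [← h2, Matrix.one_apply]
    · intro b _ hb; simp [Finsupp.single_apply, hb]
    · simp
  let e0 : {x : V r // x ∈ Set.range (Sum.inl : Fin r → V r)} ≃ {x : V r // x ∈ Set.range snf.f} :=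
    (Equiv.ofInjective _ Sum.inl_injective).symm.trans (Equiv.ofInjective _ snf.f.injective)
  let e : V r ≃ V r := e0.extendSubtype
  have he : ∀ j, e (Sum.inl j) = snf.f j := by
    intro j
    have := Equiv.extendSubtype_apply_of_mem e0 (Sum.inl j) ⟨j, rfl⟩
    rw [show e (Sum.inl j) = e0.extendSubtype (Sum.inl j) from rfl, this]
    have h : (Equiv.ofInjective _ (Sum.inl_injective (α := Fin r) (β := Fin 2))).symm ⟨Sum.inl j, ⟨j, rfl⟩⟩ = j := by
      rw [Equiv.symm_apply_eq]; rfl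
    simp only [e0, Equiv.trans_apply, h]
    rfl
  let bM' := snf.bM.reindex e.symm
  let W : Matrix (V r) (V r) O := ((Pi.basisFun O (V r)).toMatrix bM')ᵀ
  let W' : Matrix (V r) (V r) O := (bM'.toMatrix (Pi.basisFun O (V r)))ᵀ
  have hW1 : W * W' = 1 := by
    simp only [W, W']
    rw [← Matrix.transpose_mul, Module.Basis.toMatrix_mul_toMatrix_flip, Matrix.transpose_one]
  have hW2 : W' * W = 1 := by
    simp only [W, W']
    rw [← Matrix.transpose_mul, Module.Basis.toMatrix_mul_toMatrix_flip, Matrix.transpose_one]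
  have hsnf : ∀ j, (snf.bN j : V r → O) = snf.a j • bM' (Sum.inl j) := by
    intro j
    rw [snf.snf j]
    simp [bM', he]
  refine ⟨P, P', snf.a, W, W', mul_eq_one_comm.mp hPP, hPP, hW1, hW2, ?_, ?_⟩
  · intro i hi
    have := hsnf i
    rw [hi, zero_smul] at this
    exact snf.bN.ne_zero i (Subtype.ext this)
  · rw [Matrix.mul_assoc]
    have hDW : D0 snf.a * W = Matrix.of fun j => (snf.bN j : V r → O) := by
      ext j l
      rw [Matrix.mul_apply, Fintype.sum_sum_type]
      simp only [D0, Matrix.of_apply, Sum.elim_inl, Sum.elim_inr, Pi.zero_apply, zero_mul, Finset.sum_const_zero, add_zero]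
      rw [Finset.sum_eq_single j]
      · rw [if_pos rfl, hsnf j]
        simp [W, Module.Basis.toMatrix_apply]
      · intro b _ hb; simp [hb]
      · simp
    rw [hDW]
    ext i l
    rw [hNrep i, Matrix.mul_apply, Finset.sum_apply]
    rfl

end smith

section
variable {O : Type*} [CommRing O] [IsDomain O] [IsDiscreteValuationRing O] {κ : Type*} [Field κ]
    (res : O →+* κ) (ϖ : O) (hϖ : Irreducible ϖ)
    (hker : ∀ x, res x = 0 ↔ ϖ ∣ x) {m : ℕ}

include hϖ hker in
theorem Dlocal (hsurj : Function.Surjective res) (hm : 0 < m) (N : Matrix (Fin m) (V m) O)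
    (c : Fin 2 → Matrix (V m) (V m) O) (hH : HH N c)
    (u : O) (hu0 : u ≠ 0) (M : ℕ)
    (hu : ∀ f ∈ mx (V m) O ^ M, f * C u ∈ Lid N c)
    (v : MvPolynomial (V m) O) (hvh : v.IsHomogeneous 2)
    (hv : ∀ f ∈ mx (V m) O ^ M, f * v ∈ Lid N c) :
    ∃ c0, v - C c0 * sig N c ∈ Lid N c := by
  obtain ⟨P, P', a, W, Q, hP1, hP2, hW1, hW2, ha, rfl⟩ := smith_exists N c hH
  let c' : Fin 2 → Matrix (V m) (V m) O := fun b => Qᵀ * c b * Q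
  have hNQ : P * D0 a * W * Q = P * D0 a := by rw [Matrix.mul_assoc _ W Q, hW1, Matrix.mul_one]
  have hto : ∀ f ∈ Lid (P * D0 a * W) c, Th Q f ∈ Lid (D0 a) c' := by
    intro f hf
    have := Th_Lid Q _ _ f hf
    rwa [hNQ, Lid_mul P P' hP2] at this
  have hback : ∀ f ∈ Lid (D0 a) c', Th W f ∈ Lid (P * D0 a * W) c := by
    intro f hf
    rw [← Lid_mul P P' hP2] at hf
    have := Th_Lid W _ _ f hf
    have e : (fun b => Wᵀ * c' b * W) = c := by
      funext b
      have e1 : Wᵀ * Qᵀ = 1 := by rw [← Matrix.transpose_mul, hW2, Matrix.transpose_one]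
      calc Wᵀ * (Qᵀ * c b * Q) * W = (Wᵀ * Qᵀ) * c b * (Q * W) := by simp only [Matrix.mul_assoc]
        _ = c b := by rw [e1, hW2, Matrix.one_mul, Matrix.mul_one]
    rwa [e] at this
  have hWQ : ∀ f, Th W (Th Q f) = f := fun f => by rw [Th_comp, hW2, Th_one]
  have hQW : ∀ f, Th Q (Th W f) = f := fun f => by rw [Th_comp, hW1, Th_one]
  have hH' : HH (D0 a) c' := HH_transfer _ _ c c' Q W hW2 hW1 hto hH
  obtain ⟨c0, hc0⟩ := Dnormal res ϖ hϖ hker hsurj hm a ha c' hH' u hu0 M (by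
    intro f hf
    have := hto _ (hu _ (Th_mx W M f hf))
    rwa [map_mul, hQW, Th_C] at this) (Th Q v) (Th_hom _ _ _ hvh) (by
    intro f hf
    have := hto _ (hv _ (Th_mx W M f hf))
    rwa [map_mul, hQW] at this)
  have h1 := hback _ hc0
  rw [map_sub, hWQ, map_mul, Th_C] at h1
  have h2 : sig (P * D0 a) c' = Th Q (sig (P * D0 a * W) c) * C Q.det := by
    rw [← Th_sig, hNQ]
  rw [sig_mul] at h2
  have h3 := congrArg (fun x => C P'.det * Th W x) h2
  simp only [map_mul, Th_C, hWQ] at h3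
  have h4 : (C P'.det * C P.det : MvPolynomial (V m) O) = 1 := by
    rw [← C_mul, ← Matrix.det_mul, hP2, Matrix.det_one, C_1]
  rw [← mul_assoc, h4, one_mul] at h3
  refine ⟨c0 * (P'.det * Q.det), ?_⟩
  rw [h3] at h1
  convert h1 using 2
  simp only [C_mul]; ring

end

open scoped Matrix

theorem det_hom {σ S ι : Type*} [CommRing S] [Fintype ι] [DecidableEq ι]
    (M : Matrix ι ι (MvPolynomial σ S)) (r : ι → ℕ) (h : ∀ i j, (M i j).IsHomogeneous (r i)) :
    M.det.IsHomogeneous (∑ i, r i) := by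
  rw [← Matrix.det_transpose, Matrix.det_apply]
  apply IsHomogeneous.sum
  intro p _
  have h1 : (∏ i, Mᵀ (p i) i).IsHomogeneous (∑ i, r i) :=
    IsHomogeneous.prod _ _ _ fun i _ => h i (p i)
  rw [Units.smul_def, zsmul_eq_mul]
  have h2 : ((((Equiv.Perm.sign p : ℤˣ) : ℤ) : MvPolynomial σ S)).IsHomogeneous 0 := by
    rw [show ((((Equiv.Perm.sign p : ℤˣ) : ℤ) : MvPolynomial σ S)) = C (((Equiv.Perm.sign p : ℤˣ) : ℤ) : S) by simp]
    exact isHomogeneous_C _ _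
  simpa using h2.mul h1

section two
variable {R : Type*} [CommRing R] {m : ℕ}

/-- determinant with fixed first rows, as a function of the last two rows -/
def DD (n : Fin m → V m → R) (x y : V m → R) : R := (Matrix.of (Sum.elim n ![x, y]) : Matrix (V m) (V m) R).det

theorem DD_add0 (n : Fin m → V m → R) (x x' y : V m → R) : DD n (x + x') y = DD n x y + DD n x' y := by
  have e : ∀ z, (Matrix.of (Sum.elim n ![z, y]) : Matrix (V m) (V m) R) =
      (Matrix.of (Sum.elim n ![0, y]) : Matrix (V m) (V m) R).updateRow (Sum.inr 0) z := by
    intro z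
    ext i j
    rcases i with i | i
    · simp [Matrix.updateRow_apply]
    · fin_cases i <;> simp [Matrix.updateRow_apply]
  unfold DD
  rw [e (x + x'), e x, e x', Matrix.det_updateRow_add]

theorem DD_add1 (n : Fin m → V m → R) (x y y' : V m → R) : DD n x (y + y') = DD n x y + DD n x y' := by
  have e : ∀ z, (Matrix.of (Sum.elim n ![x, z]) : Matrix (V m) (V m) R) =
      (Matrix.of (Sum.elim n ![x, 0]) : Matrix (V m) (V m) R).updateRow (Sum.inr 1) z := by
    intro z
    ext i j
    rcases i with i | i
    · simp [Matrix.updateRow_apply]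
    · fin_cases i <;> simp [Matrix.updateRow_apply]
  unfold DD
  rw [e (y + y'), e y, e y', Matrix.det_updateRow_add]

end two

theorem Lid_eq {S : Type*} [CommRing S] {m : ℕ} (N : Matrix (Fin m) (V m) S) (c : Fin 2 → Matrix (V m) (V m) S) :
    sig N c = DD (fun i j => C (N i j)) (bet (c 0)) (bet (c 1)) := by
  rw [sig, sigM, DD]
  congr 2
  funext i
  rcases i with i | i
  · rfl
  · fin_cases i <;> rfl

section morley
variable {S : Type*} [CommRing S] {m : ℕ}

/-- extension of a functional to the polynomial ring in a second set of variables -/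
def pst (ψ : MvPolynomial (V m) S →ₗ[S] S) :
    MvPolynomial (V m) (MvPolynomial (V m) S) →ₗ[MvPolynomial (V m) S] MvPolynomial (V m) S :=
  (basisMonomials (V m) (MvPolynomial (V m) S)).constr (MvPolynomial (V m) S)
    (fun α => C (ψ (monomial α 1)))

theorem pst_monomial (ψ : MvPolynomial (V m) S →ₗ[S] S) (α b) :
    pst ψ (monomial α b) = b * C (ψ (monomial α 1)) := by
  have h : (monomial α b : MvPolynomial (V m) (MvPolynomial (V m) S)) =
      b • basisMonomials (V m) (MvPolynomial (V m) S) α := by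
    rw [coe_basisMonomials, smul_monomial, smul_eq_mul, mul_one]
  rw [h, map_smul, pst, Module.Basis.constr_basis, smul_eq_mul]

theorem pst_C_mul (ψ : MvPolynomial (V m) S →ₗ[S] S) (b H) : pst ψ (C b * H) = b * pst ψ H := by
  rw [← smul_eq_C_mul, map_smul, smul_eq_mul]

theorem pst_map (ψ : MvPolynomial (V m) S →ₗ[S] S) (f) : pst ψ (map C f) = C (ψ f) := by
  induction f using MvPolynomial.induction_on' with
  | monomial α b =>
    rw [map_monomial, pst_monomial, ← C_mul]
    congr 1
    rw [← smul_eq_mul, ← map_smul, smul_monomial, smul_eq_mul, mul_one]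
  | add p q hp hq => rw [map_add, map_add, map_add, hp, hq, C_add]

theorem pst_mul_map (ψ : MvPolynomial (V m) S →ₗ[S] S) (L : Ideal (MvPolynomial (V m) S))
    (hL : ∀ f ∈ L, ψ f = 0) (l) (hl : l ∈ L) (H) : pst ψ (H * map C l) = 0 := by
  induction H using MvPolynomial.induction_on' with
  | monomial α b =>
    have : (monomial α b : MvPolynomial (V m) (MvPolynomial (V m) S)) = C b * map C (monomial α 1) := by
      rw [map_monomial, C_mul_monomial]; simp
    rw [this, mul_assoc, ← map_mul, pst_C_mul, pst_map, hL _ (Ideal.mul_mem_left _ _ hl)]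
    simp
  | add p q hp hq => rw [add_mul, map_add, hp, hq, add_zero]

theorem pst_hom (ψ : MvPolynomial (V m) S →ₗ[S] S)
    (h2 : ∀ α : V m →₀ ℕ, α.degree ≠ 2 → ψ (monomial α 1) = 0)
    (H : MvPolynomial (V m) (MvPolynomial (V m) S)) (r : ℕ) (hr : r ≠ 2) (hH : H.IsHomogeneous r) :
    pst ψ H = 0 := by
  rw [H.as_sum, map_sum]
  refine Finset.sum_eq_zero fun α hα => ?_
  rw [pst_monomial, h2 α, C_0, mul_zero]
  have := hH (mem_support_iff.mp hα)
  rw [Finsupp.degree_eq_weight_one]; exact fun h => hr (this.symm.trans h)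

theorem pst_mul_X3 (ψ : MvPolynomial (V m) S →ₗ[S] S)
    (h2 : ∀ α : V m →₀ ℕ, α.degree ≠ 2 → ψ (monomial α 1) = 0) (j)
    (H : MvPolynomial (V m) (MvPolynomial (V m) S)) : pst ψ (X j ^ 3 * H) = 0 := by
  induction H using MvPolynomial.induction_on' with
  | monomial α b =>
    rw [X_pow_eq_monomial, monomial_mul, one_mul, pst_monomial, h2, C_0, mul_zero]
    rw [map_add, Finsupp.degree_single]
    omega
  | add p q hp hq => rw [mul_add, map_add, hp, hq, add_zero]

/-- the Morley matrix -/
def mor (N : Matrix (Fin m) (V m) S) (c : Fin 2 → Matrix (V m) (V m) S) :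
    Matrix (V m) (V m) (MvPolynomial (V m) (MvPolynomial (V m) S)) :=
  Matrix.of (Sum.elim (fun i j => C (C (N i j)))
    ![(fun j => C (bet (c 0)ᵀ j)) + (fun j => map C (bet (c 0) j)), (fun j => C (bet (c 1)ᵀ j)) + (fun j => map C (bet (c 1) j))])

theorem quad_dif (c : Matrix (V m) (V m) S) :
    ∑ j, ((C (bet cᵀ j) + map C (bet c j)) * (C (X j) - X j) : MvPolynomial (V m) (MvPolynomial (V m) S))
      = C (quad c) - map C (quad c) := by
  have e1 : ∑ j, (C (bet cᵀ j) * X j : MvPolynomial (V m) (MvPolynomial (V m) S)) = ∑ j, map C (bet c j) * C (X j) := by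
    simp only [bet, map_sum, map_mul, map_C, map_X, Finset.sum_mul, Matrix.transpose_apply]
    rw [Finset.sum_comm]
    refine Finset.sum_congr rfl fun l _ => Finset.sum_congr rfl fun j _ => by ring
  have e2 : quad c = ∑ j, bet cᵀ j * X j := by
    simp only [quad, bet, Finset.sum_mul, Matrix.transpose_apply]
    rw [Finset.sum_comm]
    refine Finset.sum_congr rfl fun l _ => Finset.sum_congr rfl fun j _ => by ring
  have e3 : C (quad c) = ∑ j, (C (bet cᵀ j) * C (X j) : MvPolynomial (V m) (MvPolynomial (V m) S)) := by
    rw [e2]; simp only [map_sum, map_mul]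
  have e4 : map C (quad c) = ∑ j, (map C (bet c j) * X j : MvPolynomial (V m) (MvPolynomial (V m) S)) := by
    simp only [quad, map_sum, map_mul, map_X]
  rw [e3, e4]
  have : ∀ j, ((C (bet cᵀ j) + map C (bet c j)) * (C (X j) - X j) : MvPolynomial (V m) (MvPolynomial (V m) S)) =
    C (bet cᵀ j) * C (X j) - map C (bet c j) * X j + (map C (bet c j) * C (X j) - C (bet cᵀ j) * X j) := fun j => by ring
  simp only [this, Finset.sum_add_distrib, Finset.sum_sub_distrib]
  rw [e1]; ring

theorem mor_mulVec (N : Matrix (Fin m) (V m) S) (c : Fin 2 → Matrix (V m) (V m) S) :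
    mor N c *ᵥ (fun j => C (X j) - X j) = fun i =>
      C (Sum.elim (lin N) (fun a => quad (c a)) i) - map C (Sum.elim (lin N) (fun a => quad (c a)) i) := by
  funext i
  rcases i with i | i
  · simp only [mor, Matrix.mulVec, dotProduct, Matrix.of_apply, Sum.elim_inl, lin, map_sum, map_mul, map_C, map_X]
    rw [← Finset.sum_sub_distrib]
    exact Finset.sum_congr rfl fun j _ => by ring
  · have := quad_dif (c i)
    simp only [Matrix.mulVec, dotProduct, Sum.elim_inr]
    rw [← this]
    refine Finset.sum_congr rfl fun j _ => ?_
    fin_cases i <;> rfl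

theorem morley (N : Matrix (Fin m) (V m) S) (c : Fin 2 → Matrix (V m) (V m) S)
    (ψ : MvPolynomial (V m) S →ₗ[S] S) (hL : ∀ f ∈ Lid N c, ψ f = 0)
    (h2 : ∀ α : V m →₀ ℕ, α.degree ≠ 2 → ψ (monomial α 1) = 0) (j : V m) :
    X j ^ 3 * C (ψ (sig N c)) ∈ Lid N c := by
  have hCr : (C (X j) - X j) * (mor N c).det = ∑ i, (mor N c).adjugate j i *
      (C (Sum.elim (lin N) (fun a => quad (c a)) i) - map C (Sum.elim (lin N) (fun a => quad (c a)) i)) := by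
    have h1 := congrFun (congrArg (fun v => (mor N c).adjugate *ᵥ v) (mor_mulVec N c)) j
    simp only [Matrix.mulVec_mulVec, Matrix.adjugate_mul, Matrix.smul_mulVec, Matrix.one_mulVec, Pi.smul_apply, smul_eq_mul] at h1
    rw [mul_comm, h1]; rfl
  have hmem : ∀ i, Sum.elim (lin N) (fun a => quad (c a)) i ∈ Lid N c := by
    rintro (i | i)
    · exact lin_mem _ _ _
    · exact quad_mem N c i
  have hG : ∀ H, pst ψ (H * ((C (X j) - X j) * (mor N c).det)) ∈ Lid N c := by
    intro H
    rw [hCr, Finset.mul_sum, map_sum]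
    refine Ideal.sum_mem _ fun i _ => ?_
    rw [mul_sub, mul_sub, map_sub]
    refine Ideal.sub_mem _ ?_ ?_
    · rw [← mul_assoc, mul_comm, pst_C_mul]
      exact Ideal.mul_mem_right _ _ (hmem i)
    · rw [← mul_assoc, pst_mul_map ψ _ hL _ (hmem i)]
      exact Ideal.zero_mem _
  have hdet : pst ψ (mor N c).det = C (ψ (sig N c)) := by
    have e : (mor N c).det = DD (fun i j => C (C (N i j)))
      ((fun j => C (bet (c 0)ᵀ j)) + (fun j => map C (bet (c 0) j))) ((fun j => C (bet (c 1)ᵀ j)) + (fun j => map C (bet (c 1) j))) := rfl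
    have key : ∀ (x y : V m → MvPolynomial (V m) (MvPolynomial (V m) S)) (a b : ℕ), (∀ j, (x j).IsHomogeneous a) →
        (∀ j, (y j).IsHomogeneous b) → a + b ≠ 2 → pst ψ (DD (fun i j => C (C (N i j))) x y) = 0 := by
      intro x y a b hx hy hab
      apply pst_hom ψ h2 _ (a + b) hab
      have := det_hom (Matrix.of (Sum.elim (fun i j => C (C (N i j))) ![x, y]) : Matrix (V m) (V m) (MvPolynomial (V m) (MvPolynomial (V m) S)))
        (Sum.elim 0 ![a, b]) (by
          rintro (i | i) j
          · exact isHomogeneous_C _ _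
          · fin_cases i
            · exact hx j
            · exact hy j)
      have e : ∑ i, (Sum.elim 0 ![a, b] : V m → ℕ) i = a + b := by
        simp [Fintype.sum_sum_type, Fin.sum_univ_two]
      rw [e] at this
      exact this
    have hb : ∀ a j, (map C (bet (c a) j) : MvPolynomial (V m) (MvPolynomial (V m) S)).IsHomogeneous 1 :=
      fun a j => (bet_hom _ _).map _
    rw [e, DD_add0, DD_add1, DD_add1, map_add, map_add, map_add]
    rw [key _ _ 0 0 (fun j => isHomogeneous_C _ _) (fun j => isHomogeneous_C _ _) (by norm_num),
      key _ _ 0 1 (fun j => isHomogeneous_C _ _) (hb 1) (by norm_num),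
      key _ _ 1 0 (hb 0) (fun j => isHomogeneous_C _ _) (by norm_num), ← pst_map, Lid_eq]
    rw [zero_add, zero_add, zero_add]
    congr 1
    rw [DD, DD, RingHom.map_det]
    congr 1
    ext1 i j
    rcases i with i | i
    · simp
    · fin_cases i <;> simp
  have h3 := hG (C (X j) ^ 2 + C (X j) * X j + X j ^ 2)
  have e : (C (X j) ^ 2 + C (X j) * X j + X j ^ 2) * ((C (X j) - X j) * (mor N c).det) =
    C (X j ^ 3) * (mor N c).det - X j ^ 3 * (mor N c).det := by rw [C_pow]; ring
  rw [e, map_sub, pst_C_mul, pst_mul_X3 ψ h2, sub_zero, hdet] at h3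
  exact h3

end morley

open scoped Matrix

section mapping
variable {S S' : Type*} [CommRing S] [CommRing S'] {m : ℕ} (g : S →+* S')

theorem map_lin (N : Matrix (Fin m) (V m) S) (i) : map g (lin N i) = lin (N.map g) i := by
  simp [lin, map_sum]

theorem map_bet (c : Matrix (V m) (V m) S) (j) : map g (bet c j) = bet (c.map g) j := by
  simp [bet, map_sum]

theorem map_quad (c : Matrix (V m) (V m) S) : map g (quad c) = quad (c.map g) := by
  simp [quad, map_sum, map_bet]

theorem map_sig (N : Matrix (Fin m) (V m) S) (c : Fin 2 → Matrix (V m) (V m) S) :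
    map g (sig N c) = sig (N.map g) (fun a => (c a).map g) := by
  rw [sig, sig, RingHom.map_det]
  congr 1
  ext1 i j
  rcases i with i | i
  · simp [sigM]
  · simp [sigM, map_bet]

theorem map_Lid (N : Matrix (Fin m) (V m) S) (c : Fin 2 → Matrix (V m) (V m) S) :
    (Lid N c).map (map g) = Lid (N.map g) (fun a => (c a).map g) := by
  rw [Lid, Ideal.map_span, Set.image_union, ← Set.range_comp, ← Set.range_comp, Lid]
  congr 2
  · congr 1; funext i; exact map_lin g N i
  · congr 1; funext i; exact map_quad g _

theorem map_mx {σ : Type*} : (mx σ S).map (map g) = mx σ S' := by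
  rw [mx, Ideal.map_span, ← Set.range_comp, mx]
  congr 2
  funext i
  simp

end mapping

section loc
variable {T : Type*} [CommRing T] [IsDomain T] [IsNoetherianRing T] {m : ℕ}

/-- height hypothesis -/
def HG (N : Matrix (Fin m) (V m) T) (c : Fin 2 → Matrix (V m) (V m) T) : Prop :=
  ∀ P : Ideal (MvPolynomial (V m) T), P.IsPrime → Lid N c ≤ P → ((m + 2 : ℕ) : ℕ∞) ≤ P.height

theorem HH_of_HG (N : Matrix (Fin m) (V m) T) (c : Fin 2 → Matrix (V m) (V m) T) (h : HG N c)
    (M : Submonoid T) (O : Type*) [CommRing O] [Algebra T O] [IsLocalization M O] :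
    HH (N.map (algebraMap T O)) (fun a => (c a).map (algebraMap T O)) := by
  intro s hs hle
  by_contra hne
  have : IsNoetherianRing O := IsLocalization.isNoetherianRing M O inferInstance
  letI := MvPolynomial.algebraMvPolynomial (σ := V m) (R := T) (S := O)
  obtain ⟨P', hP'⟩ := Ideal.nonempty_minimalPrimes hne
  have hh := Ideal.height_le_card_of_mem_minimalPrimes_span_finset hP'
  have hpr : P'.IsPrime := hP'.1.1
  have h2 := IsLocalization.height_under (M.map (C : T →+* MvPolynomial (V m) T)) P'
  have h3 := h (P'.under (MvPolynomial (V m) T)) inferInstance (by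
    rw [Ideal.under_def, ← Ideal.map_le_iff_le_comap]
    rw [algebraMap_def, map_Lid]
    exact hle.trans hP'.1.2)
  rw [h2] at h3
  have := h3.trans hh
  norm_cast at this
  omega

theorem dvr_loc (ϖ : T) (hp : Prime ϖ) [(Ideal.span {ϖ}).IsPrime] :
    IsDiscreteValuationRing (Localization.AtPrime (Ideal.span {ϖ})) := by
  have hinj : Function.Injective (algebraMap T (Localization.AtPrime (Ideal.span {ϖ}))) :=
    IsLocalization.injective _ (Ideal.primeCompl_le_nonZeroDivisors (Ideal.span {ϖ}))
  have e := Localization.AtPrime.map_eq_maximalIdeal (I := Ideal.span {ϖ})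
  rw [Ideal.map_span, Set.image_singleton] at e
  have : IsNoetherianRing (Localization.AtPrime (Ideal.span {ϖ})) :=
    IsLocalization.isNoetherianRing (Ideal.span {ϖ}).primeCompl _ inferInstance
  have hnf : ¬ IsField (Localization.AtPrime (Ideal.span {ϖ})) := by
    rw [IsLocalRing.isField_iff_maximalIdeal_eq, ← e, Ideal.span_singleton_eq_bot,
      map_eq_zero_iff _ hinj]
    exact hp.ne_zero
  refine ((IsDiscreteValuationRing.TFAE _ hnf).out 0 4).2 ?_
  rw [← e]
  exact ⟨⟨_, rfl⟩⟩

/-- `u` is killed up to a power of `mx` -/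
def Tor (N : Matrix (Fin m) (V m) T) (c : Fin 2 → Matrix (V m) (V m) T) (u : T) : Prop :=
  ∃ M : ℕ, ∀ f ∈ mx (V m) T ^ M, f * C u ∈ Lid N c

theorem Dglob (N : Matrix (Fin m) (V m) T) (c : Fin 2 → Matrix (V m) (V m) T) (h : HG N c) (hm : 0 < m)
    (u : T) (hu0 : u ≠ 0) (hu : Tor N c u) (ϖ : T) (hp : Prime ϖ)
    (f : MvPolynomial (V m) T) (hf : f.IsHomogeneous 2) :
    ∃ τ c0 : T, ¬ ϖ ∣ τ ∧ C (τ * u) * f - C c0 * sig N c ∈ Lid N c := by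
  obtain ⟨M, hM⟩ := hu
  have hprime : (Ideal.span {ϖ}).IsPrime := (Ideal.span_singleton_prime hp.ne_zero).2 hp
  have hdvr := dvr_loc ϖ hp
  let O := Localization.AtPrime (Ideal.span {ϖ})
  let al := algebraMap T O
  have hinj : Function.Injective al :=
    IsLocalization.injective _ (Ideal.primeCompl_le_nonZeroDivisors (Ideal.span {ϖ}))
  have e := Localization.AtPrime.map_eq_maximalIdeal (I := Ideal.span {ϖ})
  rw [Ideal.map_span, Set.image_singleton] at e
  have hirr : Irreducible (al ϖ) := IsDiscreteValuationRing.irreducible_of_span_eq_maximalIdeal _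
    (by rw [ne_eq, map_eq_zero_iff _ hinj]; exact hp.ne_zero) e.symm
  have hmul : ∀ g ∈ mx (V m) O ^ M, g * C (al u) ∈ Lid (N.map al) (fun a => (c a).map al) := by
    intro g hg
    rw [← map_mx al, ← Ideal.map_pow] at hg
    rw [← map_Lid]
    induction hg using Submodule.span_induction with
    | mem x hx =>
      obtain ⟨y, hy, rfl⟩ := hx
      have := Ideal.mem_map_of_mem (map al) (hM y hy)
      rwa [map_mul, map_C] at this
    | zero => simp
    | add x y _ _ hx hy => rw [add_mul]; exact Ideal.add_mem _ hx hy
    | smul a x _ hx => rw [smul_eq_mul, mul_assoc]; exact Ideal.mul_mem_left _ _ hx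
  obtain ⟨c0, hc0⟩ := Dlocal (O := O) (κ := IsLocalRing.ResidueField O) (IsLocalRing.residue O) (al ϖ) hirr
    (by
      intro x
      rw [IsLocalRing.residue_eq_zero_iff, ← e, Ideal.mem_span_singleton]) IsLocalRing.residue_surjective hm
    (N.map al) (fun a => (c a).map al) (HH_of_HG N c h (Ideal.span {ϖ}).primeCompl O) (al u)
    (by rw [ne_eq, map_eq_zero_iff _ hinj]; exact hu0) M hmul (C (al u) * map al f)
    (by simpa using (isHomogeneous_C _ _).mul (hf.map al))
    (by
      intro g hg
      rw [← mul_assoc]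
      exact Ideal.mul_mem_right _ _ (hmul g hg))
  obtain ⟨a, s, rfl⟩ := IsLocalization.exists_mk'_eq (Ideal.span {ϖ}).primeCompl c0
  letI := MvPolynomial.algebraMvPolynomial (σ := V m) (R := T) (S := O)
  have h1 : algebraMap (MvPolynomial (V m) T) (MvPolynomial (V m) O) (C (s * u) * f - C a * sig N c) ∈
      (Lid N c).map (algebraMap (MvPolynomial (V m) T) (MvPolynomial (V m) O)) := by
    rw [algebraMap_def, map_Lid]
    have := Ideal.mul_mem_left _ (C (al s)) hc0
    convert this using 1
    rw [mul_sub, ← mul_assoc, ← mul_assoc, ← C_mul, ← C_mul]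
    rw [show al s * IsLocalization.mk' O a s = al a from IsLocalization.mk'_spec' O a s]
    simp [map_sig, al]
  rw [IsLocalization.algebraMap_mem_map_algebraMap_iff ((Ideal.span {ϖ}).primeCompl.map (C : T →+* MvPolynomial (V m) T))] at h1
  obtain ⟨_, ⟨t, ht, rfl⟩, h2⟩ := h1
  refine ⟨t * s, t * a, ?_, ?_⟩
  · intro hd
    rcases hp.dvd_or_dvd hd with h | h
    · exact ht (Ideal.mem_span_singleton.2 h)
    · exact s.2 (Ideal.mem_span_singleton.2 h)
  · convert h2 using 1
    simp only [C_mul]; ring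

end loc

theorem ufd_local {T : Type*} [CommRing T] [IsDomain T] [UniqueFactorizationMonoid T] (w u : T) (hw : w ≠ 0)
    (hu : u ≠ 0)
    (h : ∀ ϖ : T, Prime ϖ → ∃ τ, ¬ ϖ ∣ τ ∧ w ∣ τ * u) : w ∣ u := by
  have key : ∀ w : T, w ≠ 0 → ∀ u, u ≠ 0 → (∀ ϖ : T, Prime ϖ → ∃ τ, ¬ ϖ ∣ τ ∧ w ∣ τ * u) → w ∣ u := by
    intro w hw
    induction w using UniqueFactorizationMonoid.induction_on_prime with
    | h₁ => exact absurd rfl hw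
    | h₂ x hx => intro u _ _; exact hx.dvd
    | h₃ a p ha hp ih =>
      intro u hu0 hu
      obtain ⟨τ, h1, h2⟩ := hu p hp
      have h3 : p ∣ u := (hp.dvd_or_dvd ((Dvd.intro _ rfl).trans h2)).resolve_left h1
      obtain ⟨u', rfl⟩ := h3
      apply mul_dvd_mul_left
      apply ih ha _ (right_ne_zero_of_mul hu0)
      intro ϖ hϖ
      obtain ⟨τ, h1, h2⟩ := hu ϖ hϖ
      refine ⟨τ, h1, ?_⟩
      rw [mul_left_comm] at h2
      exact (mul_dvd_mul_iff_left hp.ne_zero).1 h2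
  exact key w hw u hu h

open scoped Matrix

section fn
variable {T : Type*} [CommRing T] {m : ℕ}

/-- functionals on the degree two part of the quotient -/
def Fn (N : Matrix (Fin m) (V m) T) (c : Fin 2 → Matrix (V m) (V m) T) (ψ : MvPolynomial (V m) T →ₗ[T] T) : Prop :=
  (∀ f ∈ Lid N c, ψ f = 0) ∧ ∀ α : V m →₀ ℕ, α.degree ≠ 2 → ψ (monomial α 1) = 0

def Prim (ψ : MvPolynomial (V m) T →ₗ[T] T) : Prop :=
  ∀ ϖ : T, Prime ϖ → ∃ f : MvPolynomial (V m) T, f.IsHomogeneous 2 ∧ ¬ ϖ ∣ ψ f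

theorem lin_hom (N : Matrix (Fin m) (V m) T) (i) : (lin N i).IsHomogeneous 1 := by
  apply IsHomogeneous.sum
  intro j _
  simpa using (isHomogeneous_C _ _).mul (isHomogeneous_X T j)

theorem quad_hom (c : Matrix (V m) (V m) T) : (quad c).IsHomogeneous 2 := by
  apply IsHomogeneous.sum
  intro j _
  exact (bet_hom c j).mul (isHomogeneous_X T j)

theorem sig_hom (N : Matrix (Fin m) (V m) T) (c : Fin 2 → Matrix (V m) (V m) T) : (sig N c).IsHomogeneous 2 := by
  have := det_hom (sigM N c) (Sum.elim 0 1) (by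
    rintro (i | i) j
    · exact isHomogeneous_C _ _
    · exact bet_hom _ _)
  rw [sig]
  simpa [Fintype.sum_sum_type] using this

theorem kill_Lid {W : Type*} [AddCommGroup W] (N : Matrix (Fin m) (V m) T) (c : Fin 2 → Matrix (V m) (V m) T)
    (ψ : MvPolynomial (V m) T →+ W) (h1 : ∀ g i, g.IsHomogeneous 1 → ψ (g * lin N i) = 0)
    (h2 : ∀ a x, ψ (C x * quad (c a)) = 0) (f) (hf : f ∈ Lid N c) : ψ (homogeneousComponent 2 f) = 0 := by
  have key : ∀ g, ψ (homogeneousComponent 2 (g * f)) = 0 := by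
    induction hf using Submodule.span_induction with
    | mem x hx =>
      intro g
      rcases hx with ⟨i, rfl⟩ | ⟨a, rfl⟩
      · rw [hc_mul g _ 1 1 (lin_hom N i)]
        exact h1 _ i (homogeneousComponent_isHomogeneous _ _)
      · have := hc_mul g _ 0 2 (quad_hom (c a))
        rw [zero_add] at this
        simp only [this, homogeneousComponent_zero]
        exact h2 a _
    | zero => simp
    | add x y _ _ hx hy => intro g; rw [mul_add, map_add, map_add, hx, hy, add_zero]
    | smul b x _ hx => intro g; rw [smul_eq_mul, ← mul_assoc]; exact hx _
  simpa using key 1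

theorem hc_monomial_ne (α : V m →₀ ℕ) (x : T) (h : α.degree ≠ 2) : homogeneousComponent 2 (monomial α x) = 0 := by
  rw [homogeneousComponent_of_mem ((mem_homogeneousSubmodule _ _).2 (isHomogeneous_monomial x rfl)), if_neg (Ne.symm h)]

theorem hc_hom {f : MvPolynomial (V m) T} (h : f.IsHomogeneous 2) : homogeneousComponent 2 f = f := by
  rw [homogeneousComponent_of_mem ((mem_homogeneousSubmodule _ _).2 h), if_pos rfl]

theorem Fn_mk (N : Matrix (Fin m) (V m) T) (c : Fin 2 → Matrix (V m) (V m) T)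
    (ψ : MvPolynomial (V m) T →ₗ[T] T) (h1 : ∀ g i, g.IsHomogeneous 1 → ψ (g * lin N i) = 0)
    (h2 : ∀ a, ψ (quad (c a)) = 0) : Fn N c (ψ ∘ₗ homogeneousComponent 2) := by
  refine ⟨fun f hf => ?_, fun α hα => ?_⟩
  · exact kill_Lid N c ψ.toAddMonoidHom h1 (fun a x => by
      have : ψ (C x * quad (c a)) = 0 := by rw [← smul_eq_C_mul, map_smul, h2, smul_zero]
      exact this) f hf
  · rw [LinearMap.comp_apply, hc_monomial_ne α _ hα, map_zero]

theorem Fn.hc {N : Matrix (Fin m) (V m) T} {c : Fin 2 → Matrix (V m) (V m) T}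
    {ψ : MvPolynomial (V m) T →ₗ[T] T} (h : Fn N c ψ) (f) : ψ (homogeneousComponent 2 f) = ψ f := by
  induction f using MvPolynomial.induction_on' with
  | monomial α b =>
    by_cases hα : α.degree = 2
    · rw [hc_hom (isHomogeneous_monomial b hα)]
    · have : (monomial α b : MvPolynomial (V m) T) = b • monomial α 1 := by
        rw [smul_monomial, smul_eq_mul, mul_one]
      rw [hc_monomial_ne α b hα, map_zero, this, map_smul, h.2 α hα, smul_zero]
  | add p q hp hq => rw [map_add, map_add, map_add, hp, hq]

theorem Tor_sig (N : Matrix (Fin m) (V m) T) (c : Fin 2 → Matrix (V m) (V m) T)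
    (ψ : MvPolynomial (V m) T →ₗ[T] T) (h : Fn N c ψ) : Tor N c (ψ (sig N c)) := by
  have hmor := morley N c ψ h.1 h.2
  generalize ψ (sig N c) = u at hmor ⊢
  obtain ⟨J, hJ⟩ : ∃ J : Ideal (MvPolynomial (V m) T), ∀ f, f ∈ J ↔ f * C u ∈ Lid N c :=
    ⟨Submodule.comap (LinearMap.mulRight (MvPolynomial (V m) T) (C u)) (Lid N c), fun f => by
      rw [Submodule.mem_comap, LinearMap.mulRight_apply]⟩
  have h1 : mx (V m) T ≤ J.radical := by
    rw [mx, Ideal.span_le]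
    rintro _ ⟨j, rfl⟩
    refine Ideal.mem_radical_iff.2 ⟨3, ?_⟩
    rw [hJ]
    exact hmor j
  obtain ⟨M, hM⟩ := Ideal.exists_pow_le_of_le_radical_of_fg h1 (Submodule.fg_span (Set.finite_range _))
  exact ⟨M, fun f hf => (hJ f).1 (hM hf)⟩

theorem Tor_mul (N : Matrix (Fin m) (V m) T) (c : Fin 2 → Matrix (V m) (V m) T) (u v : T)
    (h : Tor N c u) : Tor N c (u * v) := by
  obtain ⟨M, hM⟩ := h
  refine ⟨M, fun f hf => ?_⟩
  rw [C_mul, ← mul_assoc]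
  exact Ideal.mul_mem_right _ _ (hM f hf)

end fn

section glob
variable {T : Type*} [CommRing T] [IsDomain T] [IsNoetherianRing T] {m : ℕ}
  (N : Matrix (Fin m) (V m) T) (c : Fin 2 → Matrix (V m) (V m) T) 

theorem Fn_prop (h : HG N c) (hm : 0 < m) (u : T) (hu0 : u ≠ 0) (hu : Tor N c u) (ϖ : T) (hp : Prime ϖ)
    (ψ ψ' : MvPolynomial (V m) T →ₗ[T] T) (hψ : Fn N c ψ) (hψ' : Fn N c ψ') (f) (hf : f.IsHomogeneous 2) :
    ψ f * ψ' (sig N c) = ψ' f * ψ (sig N c) := by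
  obtain ⟨τ, c0, h1, h2⟩ := Dglob N c h hm u hu0 hu ϖ hp f hf
  have h3 := hψ.1 _ h2
  have h4 := hψ'.1 _ h2
  rw [← smul_eq_C_mul, ← smul_eq_C_mul, map_sub, map_smul, map_smul, smul_eq_mul, smul_eq_mul, sub_eq_zero] at h3 h4
  have hτ : τ * u ≠ 0 := mul_ne_zero (fun h => h1 (h ▸ dvd_zero _)) hu0
  apply mul_left_cancel₀ hτ
  rw [← mul_assoc, ← mul_assoc, h3, h4]; ring

theorem Fn_zero (h : HG N c) (hm : 0 < m) (u : T) (hu0 : u ≠ 0) (hu : Tor N c u) (ϖ : T) (hp : Prime ϖ)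
    (ψ : MvPolynomial (V m) T →ₗ[T] T) (hψ : Fn N c ψ) (h0 : ψ (sig N c) = 0) : ψ = 0 := by
  have key : ∀ f : MvPolynomial (V m) T, f.IsHomogeneous 2 → ψ f = 0 := by
    intro f hf
    obtain ⟨τ, c0, h1, h2⟩ := Dglob N c h hm u hu0 hu ϖ hp f hf
    have h3 := hψ.1 _ h2
    rw [← smul_eq_C_mul, ← smul_eq_C_mul, map_sub, map_smul, map_smul, smul_eq_mul, smul_eq_mul, sub_eq_zero, h0, mul_zero] at h3
    have hτ : τ * u ≠ 0 := mul_ne_zero (fun h => h1 (h ▸ dvd_zero _)) hu0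
    exact (mul_eq_zero.1 h3).resolve_left hτ
  refine LinearMap.ext fun f => ?_
  rw [← hψ.hc, key _ (homogeneousComponent_isHomogeneous _ _)]; rfl

theorem Tor_iff [UniqueFactorizationMonoid T] (h : HG N c) (hm : 0 < m) (ϖ : T) (hp : Prime ϖ)
    (ψ : MvPolynomial (V m) T →ₗ[T] T) (hψ : Fn N c ψ) (hpr : Prim ψ) (u : T) : Tor N c u ↔ ψ (sig N c) ∣ u := by
  constructor
  · intro hu
    by_cases hu0 : u = 0
    · rw [hu0]; exact dvd_zero _
    have hs : ψ (sig N c) ≠ 0 := by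
      intro h0
      obtain ⟨f, _, hf⟩ := hpr ϖ hp
      rw [Fn_zero N c h hm u hu0 hu ϖ hp ψ hψ h0] at hf
      exact hf (dvd_zero _)
    refine ufd_local _ _ hs hu0 fun ϖ' hp' => ?_
    obtain ⟨f, hf, hn⟩ := hpr ϖ' hp'
    obtain ⟨τ, c0, h1, h2⟩ := Dglob N c h hm u hu0 hu ϖ' hp' f hf
    refine ⟨τ * ψ f, fun hd => ?_, c0, ?_⟩
    · rcases hp'.dvd_or_dvd hd with h | h
      · exact h1 h
      · exact hn h
    · have h3 := hψ.1 _ h2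
      rw [← smul_eq_C_mul, ← smul_eq_C_mul, map_sub, map_smul, map_smul, smul_eq_mul, smul_eq_mul, sub_eq_zero] at h3
      rw [mul_comm (ψ _), ← h3]; ring
  · rintro ⟨v, rfl⟩
    exact Tor_mul N c _ _ (Tor_sig N c ψ hψ)

omit [IsNoetherianRing T] in
theorem Prim_of_ne_zero [UniqueFactorizationMonoid T] (ψ : MvPolynomial (V m) T →ₗ[T] T) (hψ : Fn N c ψ) (h0 : ψ ≠ 0) :
    ∃ ψ' : MvPolynomial (V m) T →ₗ[T] T, Fn N c ψ' ∧ Prim ψ' := by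
  classical
  let _ : StrongNormalizationMonoid T := UniqueFactorizationMonoid.strongNormalizationMonoid
  let _ : NormalizedGCDMonoid T := UniqueFactorizationMonoid.toNormalizedGCDMonoid T
  let s : Finset (V m →₀ ℕ) := Finset.finsuppAntidiag Finset.univ 2
  have hs : ∀ α, α ∈ s ↔ α.degree = 2 := by
    intro α
    simp [s, Finset.mem_finsuppAntidiag, Finsupp.degree_eq_sum]
  have hne : s.Nonempty := ⟨Finsupp.single (Sum.inr 0) 2, by rw [hs]; simp⟩
  obtain ⟨g, hg, hg1⟩ := Finset.extract_gcd (fun α => ψ (monomial α 1)) hne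
  let ψ' : MvPolynomial (V m) T →ₗ[T] T := (basisMonomials (V m) T).constr T (fun α => if α ∈ s then g α else 0)
  have hψ'm : ∀ α, ψ' (monomial α 1) = if α ∈ s then g α else 0 := by
    intro α
    have := (basisMonomials (V m) T).constr_basis T (fun α => if α ∈ s then g α else 0) α
    rwa [coe_basisMonomials] at this
  have e : ψ = (s.gcd fun α => ψ (monomial α 1)) • ψ' := by
    apply (basisMonomials (V m) T).ext
    intro α
    rw [coe_basisMonomials]
    simp only [LinearMap.smul_apply]
    rw [hψ'm, smul_eq_mul]
    by_cases hα : α ∈ s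
    · rw [if_pos hα, ← hg α hα]
    · rw [if_neg hα, mul_zero, hψ.2 α (by rwa [hs] at hα)]
  have hG0 : (s.gcd fun α => ψ (monomial α 1)) ≠ 0 := by
    intro h
    rw [h, zero_smul] at e
    exact h0 e
  refine ⟨ψ', ⟨fun f hf => ?_, fun α hα => ?_⟩, fun ϖ hp => ?_⟩
  · have := hψ.1 f hf
    rw [e, LinearMap.smul_apply, smul_eq_mul] at this
    exact (mul_eq_zero.1 this).resolve_left hG0
  · rw [hψ'm, if_neg]; rwa [hs]
  · by_contra hcon
    push Not at hcon
    apply hp.not_isUnit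
    apply isUnit_of_dvd_one
    rw [← hg1]
    apply Finset.dvd_gcd
    intro α hα
    have := hcon (monomial α 1) (isHomogeneous_monomial 1 ((hs α).1 hα))
    rwa [hψ'm, if_pos hα] at this

end glob

open scoped Matrix

theorem hom2_ind {S σ : Type*} [CommRing S] (P : MvPolynomial σ S → Prop) (h0 : P 0)
    (hadd : ∀ f g, P f → P g → P (f + g)) (hX : ∀ b i j, P (C b * (X i * X j)))
    (f : MvPolynomial σ S) (hf : f.IsHomogeneous 2) : P f := by
  classical
  rw [f.as_sum]
  have hs : ∀ s : Finset (σ →₀ ℕ), s ⊆ f.support → P (∑ v ∈ s, monomial v (coeff v f)) := by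
    intro s
    induction s using Finset.induction_on with
    | empty => intro _; simpa using h0
    | insert a s ha ih =>
      intro hs
      rw [Finset.sum_insert ha]
      refine hadd _ _ ?_ (ih fun x hx => hs (Finset.mem_insert_of_mem hx))
      have h2 : a.degree = 2 := by
        have := hf (mem_support_iff.mp (hs (Finset.mem_insert_self _ _)))
        rw [Finsupp.degree_eq_weight_one]; exact this
      have hne : a ≠ 0 := by rintro rfl; simp at h2
      obtain ⟨i, hi⟩ := Finsupp.ne_iff.1 hne
      have e1 : a = Finsupp.single i 1 + (a - Finsupp.single i 1) := by
        rw [add_tsub_cancel_of_le]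
        rw [Finsupp.single_le_iff]
        simp at hi; omega
      have h3 : (a - Finsupp.single i 1).degree = 1 := by
        rw [e1, map_add, Finsupp.degree_single] at h2; omega
      obtain ⟨j, hj⟩ := (Finsupp.sum_eq_one_iff _).1 h3
      rw [hj] at e1
      have := hX (coeff a f) i j
      have e2 : (X i * X j : MvPolynomial σ S) = monomial a 1 := by
        rw [e1, X, X, monomial_mul, one_mul]
      rwa [e2, C_mul_monomial, mul_one] at this
  exact hs _ le_rfl

section delta
variable {S : Type*} [CommRing S] {m : ℕ}

/-- maximal minors of `N`, indexed by the two omitted columns -/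
def del (N : Matrix (Fin m) (V m) S) (i j : V m) : S :=
  DD (fun r l => N r l) (Pi.single i 1) (Pi.single j 1)

def Mij (N : Matrix (Fin m) (V m) S) (i j : V m) : Matrix (V m) (V m) S :=
  Matrix.of (Sum.elim (fun r l => N r l) ![Pi.single i 1, Pi.single j 1])

theorem adj0 (N : Matrix (Fin m) (V m) S) (i j l : V m) : (Mij N i j).adjugate l (Sum.inr 0) = del N l j := by
  rw [Matrix.adjugate_apply, del, DD]
  congr 1
  ext a b
  rcases a with a | a
  · simp [Mij, Matrix.updateRow_apply]
  · fin_cases a <;> simp [Mij, Matrix.updateRow_apply]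

theorem adj1 (N : Matrix (Fin m) (V m) S) (i j l : V m) : (Mij N i j).adjugate l (Sum.inr 1) = del N i l := by
  rw [Matrix.adjugate_apply, del, DD]
  congr 1
  ext a b
  rcases a with a | a
  · simp [Mij, Matrix.updateRow_apply]
  · fin_cases a <;> simp [Mij, Matrix.updateRow_apply]

theorem va_ker (N : Matrix (Fin m) (V m) S) (j : V m) : N *ᵥ (fun l => del N l j) = 0 := by
  funext i
  have := congrFun (congrFun (Matrix.mul_adjugate (Mij N j j)) (Sum.inl i)) (Sum.inr 0)
  rw [Matrix.mul_apply] at this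
  simp only [adj0] at this
  simpa [Mij, Matrix.mulVec, dotProduct] using this

theorem vb_ker (N : Matrix (Fin m) (V m) S) (i : V m) : N *ᵥ (fun l => del N i l) = 0 := by
  funext r
  have := congrFun (congrFun (Matrix.mul_adjugate (Mij N i i)) (Sum.inl r)) (Sum.inr 1)
  rw [Matrix.mul_apply] at this
  simp only [adj1] at this
  simpa [Mij, Matrix.mulVec, dotProduct] using this

theorem del_self (N : Matrix (Fin m) (V m) S) (i : V m) : del N i i = 0 := by
  rw [del, DD]
  exact Matrix.det_zero_of_row_eq (i := Sum.inr 0) (j := Sum.inr 1) (by simp) rfl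

theorem DD_self (N : Fin m → V m → S) (x : V m → S) : DD N x x = 0 := by
  rw [DD]
  exact Matrix.det_zero_of_row_eq (i := Sum.inr 0) (j := Sum.inr 1) (by simp) rfl

theorem del_swap (N : Matrix (Fin m) (V m) S) (i j : V m) : del N i j = - del N j i := by
  have := DD_self (fun r l => N r l) (Pi.single i 1 + Pi.single j 1)
  rw [DD_add0, DD_add1, DD_add1, DD_self, DD_self] at this
  rw [del, del]
  linear_combination this

theorem cramer_ker (N : Matrix (Fin m) (V m) S) (w : V m → S) (hw : N *ᵥ w = 0) (i j l : V m) :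
    del N i j * w l = w i * del N l j + w j * del N i l := by
  have h1 := congrFun (congrArg (fun A => A *ᵥ w) (Matrix.adjugate_mul (Mij N i j))) l
  simp only [← Matrix.mulVec_mulVec, Matrix.smul_mulVec, Matrix.one_mulVec, Pi.smul_apply, smul_eq_mul] at h1
  have e : (Mij N i j) *ᵥ w = Sum.elim (fun _ => (0 : S)) ![w i, w j] := by
    funext a
    rcases a with a | a
    · exact congrFun hw a
    · fin_cases a <;> simp [Mij, Matrix.mulVec]
  rw [e] at h1
  have e2 : (Mij N i j).det = del N i j := rfl
  rw [e2] at h1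
  rw [← h1, Matrix.mulVec, dotProduct, Fintype.sum_sum_type]
  simp [adj0, adj1]
  ring

theorem plucker (N : Matrix (Fin m) (V m) S) (i j i' j' : V m) :
    del N i j' * del N i' j - del N j j' * del N i' i = del N i j * del N i' j' := by
  have := cramer_ker N (fun l => del N l j') (va_ker N j') i j i'
  rw [this, del_swap N i' i]; ring

end delta

section ev
variable {S : Type*} [CommRing S] {m : ℕ}

theorem eval_comb (f : MvPolynomial (V m) S) (hf : f.IsHomogeneous 2) (a b : V m → S) (x y : S) :
    eval (x • a + y • b) f = x ^ 2 * eval a f + y ^ 2 * eval b f + x * y * (eval (a + b) f - eval a f - eval b f) := by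
  refine hom2_ind (fun f => eval (x • a + y • b) f = x ^ 2 * eval a f + y ^ 2 * eval b f + x * y * (eval (a + b) f - eval a f - eval b f))
    (by simp) ?_ ?_ f hf
  · intro f g h1 h2
    simp only [map_add] at *
    rw [h1, h2]; ring
  · intro r i j
    simp; ring

theorem eval_smul2 (f : MvPolynomial (V m) S) (hf : f.IsHomogeneous 2) (a : V m → S) (x : S) :
    eval (x • a) f = x ^ 2 * eval a f := by
  have := eval_comb f hf a a x 0
  simpa using this

/-- evaluation as a linear functional -/
def ev (a : V m → S) : MvPolynomial (V m) S →ₗ[S] S := (aeval a : MvPolynomial (V m) S →ₐ[S] S).toLinearMap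

theorem ev_apply (a : V m → S) (f) : ev a f = eval a f := by
  rw [ev, AlgHom.toLinearMap_apply, ← coe_aeval_eq_eval]; rfl

theorem eval_lin (N : Matrix (Fin m) (V m) S) (a : V m → S) (ha : N *ᵥ a = 0) (i) : eval a (lin N i) = 0 := by
  have := congrFun ha i
  simpa [lin, Matrix.mulVec, dotProduct] using this

/-- the determinantal functional -/
def PP (q r : MvPolynomial (V m) S) (a b : V m → S) : MvPolynomial (V m) S →ₗ[S] S :=
  (eval b q * eval (a + b) r - eval (a + b) q * eval b r) • ev a
  - (eval a q * eval (a + b) r - eval (a + b) q * eval a r) • ev b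
  + (eval a q * eval b r - eval b q * eval a r) • ev (a + b)

theorem PP_apply (q r : MvPolynomial (V m) S) (a b : V m → S) (f) : PP q r a b f =
  (eval b q * eval (a + b) r - eval (a + b) q * eval b r) * eval a f
  - (eval a q * eval (a + b) r - eval (a + b) q * eval a r) * eval b f
  + (eval a q * eval b r - eval b q * eval a r) * eval (a + b) f := by
  simp [PP, ev_apply]

theorem PP_change (q r f : MvPolynomial (V m) S) (hq : q.IsHomogeneous 2) (hr : r.IsHomogeneous 2) (hf : f.IsHomogeneous 2)
    (a b : V m → S) (x y z w : S) : PP q r (x • a + y • b) (z • a + w • b) f = (x * w - y * z) ^ 3 * PP q r a b f := by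
  have e : x • a + y • b + (z • a + w • b) = (x + z) • a + (y + w) • b := by
    rw [add_smul, add_smul]; abel
  simp only [PP_apply, e, eval_comb q hq, eval_comb r hr, eval_comb f hf]
  ring

/-- the functional `Ψ_{ij}` -/
def Psi (N : Matrix (Fin m) (V m) S) (c : Fin 2 → Matrix (V m) (V m) S) (i j : V m) : MvPolynomial (V m) S →ₗ[S] S :=
  PP (quad (c 0)) (quad (c 1)) (fun l => del N l j) (fun l => del N i l)

theorem Psi_Fn (N : Matrix (Fin m) (V m) S) (c : Fin 2 → Matrix (V m) (V m) S) (i j : V m) :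
    Fn N c (Psi N c i j ∘ₗ homogeneousComponent 2) := by
  apply Fn_mk
  · intro g r _
    rw [Psi, PP_apply]
    have h3 : N *ᵥ ((fun l => del N l j) + (fun l => del N i l)) = 0 := by
      rw [Matrix.mulVec_add, va_ker, vb_ker, add_zero]
    simp only [map_mul, eval_lin N _ (va_ker N j), eval_lin N _ (vb_ker N i), eval_lin N _ h3]
    ring
  · intro a
    rw [Psi, PP_apply]
    fin_cases a
    · simp only [Fin.zero_eta]; ring
    · simp only [Fin.mk_one]; ring

theorem Psi_change [IsDomain S] (N : Matrix (Fin m) (V m) S) (c : Fin 2 → Matrix (V m) (V m) S) (i j i' j' : V m)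
    (hD : del N i j ≠ 0) (f : MvPolynomial (V m) S) (hf : f.IsHomogeneous 2) :
    del N i j ^ 3 * Psi N c i' j' f = del N i' j' ^ 3 * Psi N c i j f := by
  have ea : del N i j • (fun l => del N l j') = del N i j' • (fun l => del N l j) + del N j j' • (fun l => del N i l) := by
    funext l
    exact cramer_ker N (fun l => del N l j') (va_ker N j') i j l
  have eb : del N i j • (fun l => del N i' l) = del N i' i • (fun l => del N l j) + del N i' j • (fun l => del N i l) := by
    funext l
    exact cramer_ker N (fun l => del N i' l) (vb_ker N i') i j l
  have h1 : PP (quad (c 0)) (quad (c 1)) (del N i j • (fun l => del N l j')) (del N i j • (fun l => del N i' l)) f =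
      (del N i j ^ 2) ^ 3 * Psi N c i' j' f := by
    have := PP_change (quad (c 0)) (quad (c 1)) f (quad_hom _) (quad_hom _) hf (fun l => del N l j') (fun l => del N i' l)
      (del N i j) 0 0 (del N i j)
    rw [zero_smul, zero_smul, zero_add, add_zero] at this
    rw [this, Psi]; ring
  rw [ea, eb, PP_change _ _ _ (quad_hom _) (quad_hom _) hf, plucker, ← Psi] at h1
  apply mul_left_cancel₀ (pow_ne_zero 3 hD)
  linear_combination -h1

end ev

open scoped Matrix

section field
variable {K : Type*} [Field K] {m : ℕ}

theorem scheme (N : Matrix (Fin m) (V m) K) (c : Fin 2 → Matrix (V m) (V m) K) (r s : ℕ) (hrs : s + 2 ≤ r)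
    (p : Fin r → V m → K) (hp : ∀ l, N *ᵥ p l = 0) (cst : (Fin r → K) →ₗ[K] (Fin s → K))
    (hc : ∀ t, cst t = 0 → ∀ a, ∑ l, t l * eval (p l) (quad (c a)) = 0)
    (hind : ∀ t : Fin r → K, (∀ f : MvPolynomial (V m) K, f.IsHomogeneous 2 → ∑ l, t l * eval (p l) f = 0) → t = 0) :
    ∃ χ χ' : MvPolynomial (V m) K →ₗ[K] K, Fn N c χ ∧ Fn N c χ' ∧ LinearIndependent K ![χ, χ'] := by
  have hk : 2 ≤ Module.finrank K (LinearMap.ker cst) := by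
    have h1 := LinearMap.finrank_range_add_finrank_ker cst
    have h2 : Module.finrank K (LinearMap.range cst) ≤ s := by
      simpa using Submodule.finrank_le (LinearMap.range cst)
    simp at h1
    omega
  obtain ⟨F, hF⟩ := exists_linearIndependent_of_le_finrank hk
  let Λ : (Fin r → K) → (MvPolynomial (V m) K →ₗ[K] K) := fun t => (∑ l, t l • ev (p l)) ∘ₗ homogeneousComponent 2
  have hΛ : ∀ t f, Λ t f = ∑ l, t l * eval (p l) (homogeneousComponent 2 f) := by
    intro t f
    simp [Λ, ev_apply]
  have hFn : ∀ t, cst t = 0 → Fn N c (Λ t) := by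
    intro t ht
    apply Fn_mk
    · intro g i _
      simp [ev_apply, eval_lin N _ (hp _)]
    · intro a
      simpa [ev_apply] using hc t ht a
  refine ⟨Λ (F 0), Λ (F 1), hFn _ (F 0).2, hFn _ (F 1).2, ?_⟩
  rw [LinearIndependent.pair_iff]
  intro x y hxy
  have h0 : x • (F 0 : Fin r → K) + y • (F 1 : Fin r → K) = 0 := by
    apply hind
    intro f hf
    have := LinearMap.congr_fun hxy f
    simp only [LinearMap.add_apply, LinearMap.smul_apply, hΛ, hc_hom hf, smul_eq_mul, LinearMap.zero_apply, Finset.mul_sum] at this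
    rw [← this, ← Finset.sum_add_distrib]
    refine Finset.sum_congr rfl fun l _ => ?_
    simp; ring
  have hF' : LinearIndependent K ![F 0, F 1] := by
    convert hF using 1
    funext i; fin_cases i <;> rfl
  rw [LinearIndependent.pair_iff] at hF'
  apply hF'
  apply Subtype.ext
  simpa using h0

theorem DD_zero_of_del (N : Matrix (Fin m) (V m) K) (h : ∀ i j, del N i j = 0) (x y : V m → K) :
    DD (fun r l => N r l) x y = 0 := by
  have hs0 : ∀ (z : K) x y, DD (fun r l => N r l) (z • x) y = z * DD (fun r l => N r l) x y := by
    intro z x y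
    have e : ∀ z, (Matrix.of (Sum.elim (fun r l => N r l) ![z, y]) : Matrix (V m) (V m) K) =
      (Matrix.of (Sum.elim (fun r l => N r l) ![0, y]) : Matrix (V m) (V m) K).updateRow (Sum.inr 0) z := by
      intro z
      ext i j
      rcases i with i | i
      · simp [Matrix.updateRow_apply]
      · fin_cases i <;> simp [Matrix.updateRow_apply]
    unfold DD
    rw [e (z • x), e x, Matrix.det_updateRow_smul]
  have hs1 : ∀ (z : K) x y, DD (fun r l => N r l) x (z • y) = z * DD (fun r l => N r l) x y := by
    intro z x y
    have e : ∀ z, (Matrix.of (Sum.elim (fun r l => N r l) ![x, z]) : Matrix (V m) (V m) K) =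
      (Matrix.of (Sum.elim (fun r l => N r l) ![x, 0]) : Matrix (V m) (V m) K).updateRow (Sum.inr 1) z := by
      intro z
      ext i j
      rcases i with i | i
      · simp [Matrix.updateRow_apply]
      · fin_cases i <;> simp [Matrix.updateRow_apply]
    unfold DD
    rw [e (z • y), e y, Matrix.det_updateRow_smul]
  let Bf : (V m → K) →ₗ[K] (V m → K) →ₗ[K] K := LinearMap.mk₂ K (DD (fun r l => N r l))
    (fun x x' y => DD_add0 _ x x' y) (fun z x y => hs0 z x y) (fun x y y' => DD_add1 _ x y y') (fun z x y => hs1 z x y)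
  have : Bf = 0 := by
    refine LinearMap.ext_basis (Pi.basisFun K (V m)) (Pi.basisFun K (V m)) fun i j => ?_
    simp only [Pi.basisFun_apply]
    exact h i j
  exact LinearMap.congr_fun₂ this x y

theorem ker_ge3 (N : Matrix (Fin m) (V m) K) (h : ∀ i j, del N i j = 0) :
    3 ≤ Module.finrank K (LinearMap.ker N.mulVecLin) := by
  by_contra hlt
  have h1 := LinearMap.finrank_range_add_finrank_ker N.mulVecLin
  have h2 : Module.finrank K (LinearMap.range N.mulVecLin) ≤ m := by
    simpa using Submodule.finrank_le (LinearMap.range N.mulVecLin)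
  simp at h1
  have hr : N.rank = m := by rw [Matrix.rank]; omega
  have hli : LinearIndependent K N.row := by
    rw [linearIndependent_iff_card_eq_finrank_span, Fintype.card_fin, Set.finrank, ← Matrix.rank_eq_finrank_span_row, hr]
  obtain ⟨W, hW⟩ := Submodule.exists_isCompl (Submodule.span K (Set.range N.row))
  have h3 := Submodule.finrank_add_eq_of_isCompl hW
  rw [← Matrix.rank_eq_finrank_span_row, hr] at h3
  have h4 : Module.finrank K W = 2 := by simp at h3; omega
  let b := Module.finBasisOfFinrankEq K W h4
  have hli2 : LinearIndependent K (fun i => (b i : V m → K)) := b.linearIndependent.map' W.subtype (Submodule.ker_subtype W)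
  have hli3 := hli.sum_type hli2 (hW.disjoint.mono_right (by
    rw [Submodule.span_le]
    rintro _ ⟨i, rfl⟩
    exact (b i).2))
  have hD := DD_zero_of_del N h (b 0) (b 1)
  have hu : IsUnit (Matrix.of (Sum.elim (fun r l => N r l) ![(b 0 : V m → K), b 1]) : Matrix (V m) (V m) K) := by
    have e : (Matrix.of (Sum.elim (fun r l => N r l) ![(b 0 : V m → K), b 1]) : Matrix (V m) (V m) K).row =
        Sum.elim N.row (fun i => (b i : V m → K)) := by
      funext i
      rcases i with i | i
      · rfl
      · fin_cases i <;> rfl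
    rw [← Matrix.linearIndependent_rows_iff_isUnit, e]
    exact hli3
  rw [Matrix.isUnit_iff_isUnit_det] at hu
  rw [DD] at hD
  rw [hD] at hu
  exact not_isUnit_zero hu

theorem lf_hom {S : Type*} [CommRing S] (w : V m → S) : (∑ j, C (w j) * X j : MvPolynomial (V m) S).IsHomogeneous 1 := by
  apply IsHomogeneous.sum
  intro j _
  simpa using (isHomogeneous_C _ _).mul (isHomogeneous_X S j)

theorem fieldF (N : Matrix (Fin m) (V m) K) (c : Fin 2 → Matrix (V m) (V m) K)
    (hno : ∀ i j, del N i j ≠ 0 → ∀ f : MvPolynomial (V m) K, f.IsHomogeneous 2 → Psi N c i j f = 0) :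
    ∃ χ χ' : MvPolynomial (V m) K →ₗ[K] K, Fn N c χ ∧ Fn N c χ' ∧ LinearIndependent K ![χ, χ'] := by
  by_cases hall : ∀ i j, del N i j = 0
  · obtain ⟨F, hF⟩ := exists_linearIndependent_of_le_finrank (ker_ge3 N hall)
    let w : Fin 3 → V m → K := fun i => F i
    have hw : ∀ i, N *ᵥ w i = 0 := fun i => (F i).2
    have hli : LinearIndependent K w := hF.map' (LinearMap.ker N.mulVecLin).subtype (Submodule.ker_subtype _)
    obtain ⟨G, hG⟩ := LinearMap.exists_leftInverse_of_injective (Fintype.linearCombination K w)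
      (LinearMap.ker_eq_bot.2 hli.fintypeLinearCombination_injective)
    have hGw : ∀ i j, G (w i) j = if j = i then 1 else 0 := by
      intro i j
      have := congrFun (LinearMap.congr_fun hG (Pi.single i 1)) j
      simpa [Pi.single_apply] using this
    let g : Fin 3 → MvPolynomial (V m) K := fun k => ∑ j, C (G (Pi.single j 1) k) * X j
    have hg : ∀ k x, eval x (g k) = G x k := by
      intro k x
      have : x = ∑ j, x j • (Pi.single j 1 : V m → K) := by
        funext l; simp [Finset.sum_apply, Pi.single_apply]
      conv_rhs => rw [this, map_sum]
      rw [Finset.sum_apply]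
      simp only [g, map_sum, map_mul, eval_C, eval_X, map_smul, Pi.smul_apply, smul_eq_mul]
      exact Finset.sum_congr rfl fun j _ => mul_comm _ _
    have hgh : ∀ k k', (g k * g k').IsHomogeneous 2 := fun k k' => (lf_hom _).mul (lf_hom _)
    refine scheme N c 4 2 le_rfl ![w 0, w 1, w 2, w 0 + w 1] ?_
      (LinearMap.pi fun a => ∑ l, eval ((![w 0, w 1, w 2, w 0 + w 1] : Fin 4 → V m → K) l) (quad (c a)) • LinearMap.proj l) ?_ ?_
    · intro l
      fin_cases l
      · exact hw 0
      · exact hw 1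
      · exact hw 2
      · show N *ᵥ (w 0 + w 1) = 0
        rw [Matrix.mulVec_add, hw, hw, add_zero]
    · intro t ht a
      have := congrFun ht a
      rw [LinearMap.pi_apply] at this
      simp only [LinearMap.sum_apply, LinearMap.smul_apply, LinearMap.proj_apply, smul_eq_mul, Pi.zero_apply] at this
      rw [← this]
      exact Finset.sum_congr rfl fun j _ => mul_comm _ _
    · intro t ht
      have h01 := ht _ (hgh 0 1)
      have h00 := ht _ (hgh 0 0)
      have h11 := ht _ (hgh 1 1)
      have h22 := ht _ (hgh 2 2)
      simp [Fin.sum_univ_four, hg, hGw] at h01 h00 h11 h22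
      rw [h01] at h00 h11
      funext l
      fin_cases l
      · simpa using h00
      · simpa using h11
      · exact h22
      · exact h01
  · push Not at hall
    obtain ⟨i, j, hD⟩ := hall
    have hij : i ≠ j := by rintro rfl; exact hD (del_self N i)
    have hno' := hno i j hD
    let a : V m → K := fun l => del N l j
    let b : V m → K := fun l => del N i l
    have ha : N *ᵥ a = 0 := va_ker N j
    have hb : N *ᵥ b = 0 := vb_ker N i
    have hai : a i = del N i j := rfl
    have hbj : b j = del N i j := rfl
    have haj : a j = 0 := del_self N j
    have hbi : b i = 0 := del_self N i
    have hX : ∀ k l, (X k * X l : MvPolynomial (V m) K).IsHomogeneous 2 := fun k l => (isHomogeneous_X _ _).mul (isHomogeneous_X _ _)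
    let p : Fin 3 → V m → K := ![a, b, a + b]
    have h1 := hno' _ (hX i j)
    have h2 := hno' _ (hX j j)
    have h3 := hno' _ (hX i i)
    rw [Psi, PP_apply] at h1 h2 h3
    change (eval b _ * eval (a + b) _ - eval (a + b) _ * eval b _) * eval a _ - (eval a _ * eval (a + b) _ - eval (a + b) _ * eval a _) * eval b _ + (eval a _ * eval b _ - eval b _ * eval a _) * eval (a + b) _ = 0 at h1 h2 h3
    have hc : ∀ k l, eval (p k) (quad (c 0)) * eval (p l) (quad (c 1)) = eval (p l) (quad (c 0)) * eval (p k) (quad (c 1)) := by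
      simp [hai, hbj, haj, hbi, hD] at h1 h2 h3
      rw [h1] at h2 h3
      simp [hD] at h2 h3
      intro k l
      fin_cases k <;> fin_cases l <;> simp [p] <;> first | ring1 | linear_combination h1 | linear_combination h2 | linear_combination h3 | linear_combination -h1 | linear_combination -h2 | linear_combination -h3
    have hc' : ∃ a0 : Fin 2, ∀ t : Fin 3 → K, ∑ l, t l * eval (p l) (quad (c a0)) = 0 → ∀ a, ∑ l, t l * eval (p l) (quad (c a)) = 0 := by
      by_cases hz : ∀ k, eval (p k) (quad (c 0)) = 0
      · refine ⟨1, fun t ht a => ?_⟩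
        fin_cases a
        · simp [hz]
        · exact ht
      · push Not at hz
        obtain ⟨k, hk⟩ := hz
        refine ⟨0, fun t ht a => ?_⟩
        fin_cases a
        · exact ht
        · apply mul_left_cancel₀ hk
          have : eval (p k) (quad (c 0)) * ∑ l, t l * eval (p l) (quad (c 1)) = eval (p k) (quad (c 1)) * ∑ l, t l * eval (p l) (quad (c 0)) := by
            rw [Finset.mul_sum, Finset.mul_sum]
            refine Finset.sum_congr rfl fun l _ => ?_
            linear_combination t l * hc k l
          rw [ht, mul_zero] at this
          rw [mul_zero]; exact this
    obtain ⟨a0, ha0⟩ := hc'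
    refine scheme N c 3 1 le_rfl p ?_ (LinearMap.pi fun _ => ∑ l, eval (p l) (quad (c a0)) • LinearMap.proj l) ?_ ?_
    · intro l
      fin_cases l
      · exact ha
      · exact hb
      · show N *ᵥ (a + b) = 0
        rw [Matrix.mulVec_add, ha, hb, add_zero]
    · intro t ht
      apply ha0
      have := congrFun ht 0
      rw [LinearMap.pi_apply] at this
      simp only [LinearMap.sum_apply, LinearMap.smul_apply, LinearMap.proj_apply, smul_eq_mul, Pi.zero_apply] at this
      rw [← this]
      exact Finset.sum_congr rfl fun j _ => mul_comm _ _
    · intro t ht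
      have h01 := ht _ (hX i j)
      have h00 := ht _ (hX i i)
      have h11 := ht _ (hX j j)
      simp [Fin.sum_univ_three, p, hai, hbj, haj, hbi, hD] at h01 h00 h11
      rw [h01] at h00 h11
      simp [hD] at h00 h11
      funext l
      fin_cases l
      · exact h00
      · exact h11
      · exact h01

end field

open scoped Matrix

section exFn
/-- linear functional with prescribed values on monomials -/
def mkf {S σ : Type*} [CommRing S] (v : (σ →₀ ℕ) → S) : MvPolynomial σ S →ₗ[S] S :=
  (basisMonomials σ S).constr S v

theorem mkf_mono {S σ : Type*} [CommRing S] (v : (σ →₀ ℕ) → S) (α : σ →₀ ℕ) (x : S) : mkf v (monomial α x) = x * v α := by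
  have : (monomial α x : MvPolynomial σ S) = x • basisMonomials σ S α := by
    rw [coe_basisMonomials, smul_monomial, smul_eq_mul, mul_one]
  rw [this, map_smul, mkf, Module.Basis.constr_basis, smul_eq_mul]

theorem fun_mono {S σ : Type*} [CommRing S] (ψ : MvPolynomial σ S →ₗ[S] S) (α : σ →₀ ℕ) (x : S) :
    ψ (monomial α x) = x * ψ (monomial α 1) := by
  rw [← smul_eq_mul, ← map_smul, smul_monomial, smul_eq_mul, mul_one]

theorem exists_Fn {T : Type*} [CommRing T] [IsDomain T] {m : ℕ} (N : Matrix (Fin m) (V m) T) (c : Fin 2 → Matrix (V m) (V m) T) :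
    ∃ ψ : MvPolynomial (V m) T →ₗ[T] T, Fn N c ψ ∧ ψ ≠ 0 := by
  classical
  let K := FractionRing T
  let g : T →+* K := algebraMap T K
  have hg : Function.Injective g := IsFractionRing.injective T K
  have h1 : ∃ χ : MvPolynomial (V m) K →ₗ[K] K, Fn (N.map g) (fun a => (c a).map g) χ ∧ χ ≠ 0 := by
    by_cases H : ∀ i j, del (N.map g) i j ≠ 0 → ∀ f : MvPolynomial (V m) K, f.IsHomogeneous 2 → Psi (N.map g) (fun a => (c a).map g) i j f = 0
    · obtain ⟨χ, χ', h1, h2, h3⟩ := fieldF _ _ H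
      exact ⟨χ, h1, h3.ne_zero 0⟩
    · push Not at H
      obtain ⟨i, j, _, f, hf, hne⟩ := H
      refine ⟨_, Psi_Fn _ _ i j, fun h => hne ?_⟩
      have := LinearMap.congr_fun h f
      rwa [LinearMap.comp_apply, hc_hom hf, LinearMap.zero_apply] at this
  obtain ⟨χ, hχ, hne⟩ := h1
  let s : Finset (V m →₀ ℕ) := Finset.finsuppAntidiag Finset.univ 2
  have hs : ∀ α : V m →₀ ℕ, α.degree = 2 → α ∈ s := by
    intro α h
    rw [Finset.mem_finsuppAntidiag]
    refine ⟨?_, by simp⟩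
    refine Eq.trans ?_ h
    rw [Finsupp.degree_apply]
    exact (Finset.sum_subset (Finset.subset_univ _) (fun i _ hi => by simpa using hi)).symm
  obtain ⟨b, hb⟩ := IsLocalization.exist_integer_multiples (nonZeroDivisors T) s (fun α => χ (monomial α 1))
  have hb' : ∀ α : V m →₀ ℕ, ∃ v : T, g v = g b * χ (monomial α 1) := by
    intro α
    by_cases hα : α.degree = 2
    · obtain ⟨v, hv⟩ := hb α (hs α hα)
      exact ⟨v, by rw [Algebra.smul_def] at hv; exact hv⟩
    · exact ⟨0, by rw [hχ.2 α hα, mul_zero, map_zero]⟩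
  choose v hv using hb'
  have key : ∀ f, g (mkf v f) = g b * χ (map g f) := by
    intro f
    induction f using MvPolynomial.induction_on' with
    | monomial α x =>
      rw [mkf_mono, map_monomial, fun_mono χ, map_mul, hv]; ring
    | add p q hp hq => rw [map_add, map_add, map_add, map_add, hp, hq, mul_add]
  refine ⟨mkf v, ⟨fun f hf => ?_, fun α hα => ?_⟩, fun h0 => hne ?_⟩
  · apply hg
    rw [key, hχ.1, mul_zero, map_zero]
    rw [← map_Lid]
    exact Ideal.mem_map_of_mem _ hf
  · apply hg
    rw [key, map_monomial, map_one, hχ.2 α hα, mul_zero, map_zero]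
  · apply LinearMap.ext
    intro f
    rw [LinearMap.zero_apply]
    induction f using MvPolynomial.induction_on' with
    | monomial α x =>
      rw [fun_mono χ]
      have := key (monomial α 1)
      rw [h0, LinearMap.zero_apply, map_zero, map_monomial, map_one] at this
      have hb0 : g b ≠ 0 := by
        rw [Ne, map_eq_zero_iff g hg]
        exact nonZeroDivisors.coe_ne_zero b
      rw [(mul_eq_zero.1 this.symm).resolve_left hb0, mul_zero]
    | add p q hp hq => rw [map_add, hp, hq, add_zero]

end exFn

open scoped Matrix

section chom
variable {τ k σ : Type*} [Field k]

/-- all coefficients homogeneous of degree `t` -/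
def CH (p : MvPolynomial σ (MvPolynomial τ k)) (t : ℕ) : Prop := ∀ α, (coeff α p).IsHomogeneous t

theorem CH.sum {ι : Type*} {s : Finset ι} {f : ι → MvPolynomial σ (MvPolynomial τ k)} {t : ℕ}
    (h : ∀ i ∈ s, CH (f i) t) : CH (∑ i ∈ s, f i) t := by
  intro α
  rw [coeff_sum]
  exact IsHomogeneous.sum _ _ _ fun i hi => h i hi α

theorem CH.mul {p q : MvPolynomial σ (MvPolynomial τ k)} {t u : ℕ} (hp : CH p t) (hq : CH q u) : CH (p * q) (t + u) := by
  classical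
  intro α
  rw [coeff_mul]
  exact IsHomogeneous.sum _ _ _ fun i hi => (hp _).mul (hq _)

theorem CH.C {p : MvPolynomial τ k} {t : ℕ} (hp : p.IsHomogeneous t) : CH (C p : MvPolynomial σ (MvPolynomial τ k)) t := by
  classical
  intro α
  rw [coeff_C]
  split_ifs
  · exact hp
  · exact isHomogeneous_zero _ _ _

theorem CH.X (i : σ) : CH (X i : MvPolynomial σ (MvPolynomial τ k)) 0 := by
  classical
  intro α
  rw [coeff_X']
  split_ifs
  · exact isHomogeneous_one _ _
  · exact isHomogeneous_zero _ _ _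

theorem CH.prod {ι : Type*} (s : Finset ι) {f : ι → MvPolynomial σ (MvPolynomial τ k)} {t : ι → ℕ}
    (h : ∀ i ∈ s, CH (f i) (t i)) : CH (∏ i ∈ s, f i) (∑ i ∈ s, t i) := by
  classical
  induction s using Finset.induction_on with
  | empty => simpa using (CH.C (isHomogeneous_one τ k) : CH (MvPolynomial.C 1 : MvPolynomial σ _) 0)
  | insert a s ha ih =>
    rw [Finset.prod_insert ha, Finset.sum_insert ha]
    exact (h a (Finset.mem_insert_self _ _)).mul (ih fun i hi => h i (Finset.mem_insert_of_mem hi))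

theorem CH.det {ι : Type*} [Fintype ι] [DecidableEq ι]
    (M : Matrix ι ι (MvPolynomial σ (MvPolynomial τ k))) (r : ι → ℕ) (h : ∀ i j, CH (M i j) (r i)) :
    CH M.det (∑ i, r i) := by
  rw [← Matrix.det_transpose, Matrix.det_apply]
  apply CH.sum
  intro p _
  have h1 : CH (∏ i, Mᵀ (p i) i) (∑ i, r i) := CH.prod _ fun i _ => h i (p i)
  rw [Units.smul_def, zsmul_eq_mul]
  have h2 : CH ((((Equiv.Perm.sign p : ℤˣ) : ℤ) : MvPolynomial σ (MvPolynomial τ k))) 0 := by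
    rw [show ((((Equiv.Perm.sign p : ℤˣ) : ℤ) : MvPolynomial σ (MvPolynomial τ k))) =
      MvPolynomial.C (MvPolynomial.C (((Equiv.Perm.sign p : ℤˣ) : ℤ) : k)) by simp]
    exact CH.C (isHomogeneous_C _ _)
  simpa using h2.mul h1

theorem hom_quot {p q : MvPolynomial τ k} {a b : ℕ} (hq : q.IsHomogeneous b) (h0 : q ≠ 0) (h : (p * q).IsHomogeneous (a + b)) :
    p.IsHomogeneous a := by
  have h1 := hc_mul p q a b hq
  rw [homogeneousComponent_of_mem ((mem_homogeneousSubmodule _ _).2 h), if_pos rfl] at h1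
  rw [mul_right_cancel₀ h0 h1]
  exact homogeneousComponent_isHomogeneous _ _

variable {m : ℕ} (N : Matrix (Fin m) (V m) (MvPolynomial τ k)) (c : Fin 2 → Matrix (V m) (V m) (MvPolynomial τ k))
  (hN : ∀ i j, (N i j).IsHomogeneous 1) (hc : ∀ a i j, (c a i j).IsHomogeneous 1)
include hN

theorem del_homog (i j : V m) : (del N i j).IsHomogeneous m := by
  have := det_hom (Matrix.of (Sum.elim (fun r l => N r l) ![Pi.single i 1, Pi.single j 1])) (Sum.elim 1 0) (by
    have hs : ∀ i j : V m, ((Pi.single i 1 : V m → MvPolynomial τ k) j).IsHomogeneous 0 := by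
      intro i j
      rw [Pi.single_apply]
      split_ifs
      · exact isHomogeneous_one _ _
      · exact isHomogeneous_zero _ _ _
    rintro (r | r) l
    · exact hN r l
    · fin_cases r
      · exact hs i l
      · exact hs j l)
  rw [del, DD]
  simpa [Fintype.sum_sum_type] using this

include hc

theorem CH_sig : CH (sig N c) (m + 2) := by
  have := CH.det (sigM N c) (Sum.elim 1 1) (by
    rintro (i | i) j
    · exact CH.C (hN i j)
    · show CH (bet (c i) j) 1
      apply CH.sum
      intro l _
      simpa using (CH.C (hc i l j)).mul (CH.X l))
  rw [sig]
  simpa [Fintype.sum_sum_type] using this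

omit hN in
theorem eval_quad_homog (a : Fin 2) (x : V m → MvPolynomial τ k) {t : ℕ} (hx : ∀ l, (x l).IsHomogeneous t) :
    (eval x (quad (c a))).IsHomogeneous (1 + 2 * t) := by
  rw [quad, map_sum]
  apply IsHomogeneous.sum
  intro j _
  rw [bet, map_mul, map_sum, Finset.sum_mul]
  apply IsHomogeneous.sum
  intro i _
  simp only [map_mul, eval_C, eval_X]
  have := ((hc a i j).mul (hx i)).mul (hx j)
  convert this using 1; ring

theorem Psi_homog (i j : V m) (α : V m →₀ ℕ) (hα : α.degree = 2) : (Psi N c i j (monomial α 1)).IsHomogeneous (6 * m + 2) := by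
  have hm : ∀ (x : V m → MvPolynomial τ k), (∀ l, (x l).IsHomogeneous m) → (eval x (monomial α (1 : MvPolynomial τ k))).IsHomogeneous (2 * m) := by
    intro x hx
    rw [eval_monomial, one_mul, Finsupp.prod]
    have := IsHomogeneous.prod α.support (fun l => x l ^ α l) (fun l => m * α l) (fun l _ => (hx l).pow _)
    rw [← Finset.mul_sum] at this
    have e : ∑ l ∈ α.support, α l = 2 := hα
    rw [e, mul_comm] at this
    exact this
  have ha : ∀ l, ((fun l => del N l j) l).IsHomogeneous m := fun l => del_homog N hN l j
  have hb : ∀ l, ((fun l => del N i l) l).IsHomogeneous m := fun l => del_homog N hN i l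
  have hab : ∀ l, (((fun l => del N l j) + (fun l => del N i l)) l).IsHomogeneous m := fun l => (ha l).add (hb l)
  rw [Psi, PP_apply]
  have q := fun a x hx => eval_quad_homog c hc a x (t := m) hx
  have e : 6 * m + 2 = ((1 + 2 * m) + (1 + 2 * m)) + 2 * m := by ring
  rw [e]
  refine ((IsHomogeneous.mul ?_ (hm _ ha)).sub (IsHomogeneous.mul ?_ (hm _ hb))).add (IsHomogeneous.mul ?_ (hm _ hab))
  · exact ((q 0 _ hb).mul (q 1 _ hab)).sub ((q 0 _ hab).mul (q 1 _ hb))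
  · exact ((q 0 _ ha).mul (q 1 _ hab)).sub ((q 0 _ hab).mul (q 1 _ ha))
  · exact ((q 0 _ ha).mul (q 1 _ hb)).sub ((q 0 _ hb).mul (q 1 _ ha))

theorem partD (hex : ∃ ϖ : MvPolynomial τ k, Prime ϖ)
    (Q : ∀ ϖ : MvPolynomial τ k, Prime ϖ → ∃ i j, ¬ ϖ ∣ del N i j ∧ ∃ f : MvPolynomial (V m) (MvPolynomial τ k),
      f.IsHomogeneous 2 ∧ ¬ ϖ ∣ Psi N c i j f) :
    ∃ ψ : MvPolynomial (V m) (MvPolynomial τ k) →ₗ[MvPolynomial τ k] MvPolynomial τ k, Fn N c ψ ∧ Prim ψ ∧ (ψ (sig N c)).IsHomogeneous (4 * m + 4) := by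
  classical
  obtain ⟨ϖ₀, hϖ₀⟩ := hex
  obtain ⟨i, j, hd, _⟩ := Q ϖ₀ hϖ₀
  have hD : del N i j ≠ 0 := fun h => hd (h ▸ dvd_zero _)
  have hdiv : ∀ f : MvPolynomial (V m) (MvPolynomial τ k), f.IsHomogeneous 2 → del N i j ^ 3 ∣ Psi N c i j f := by
    intro f hf
    by_cases h0 : Psi N c i j f = 0
    · rw [h0]; exact dvd_zero _
    apply ufd_local _ _ (pow_ne_zero 3 hD) h0
    intro ϖ hp
    obtain ⟨i', j', hd', _⟩ := Q ϖ hp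
    refine ⟨del N i' j' ^ 3, fun h => hd' (hp.dvd_of_dvd_pow h), ?_⟩
    rw [← Psi_change N c i j i' j' hD f hf]
    exact dvd_mul_right _ _
  have hv : ∀ α : V m →₀ ℕ, ∃ v, (α.degree ≠ 2 → v = 0) ∧ (α.degree = 2 → Psi N c i j (monomial α 1) = del N i j ^ 3 * v) := by
    intro α
    by_cases hα : α.degree = 2
    · obtain ⟨v, hv⟩ := hdiv _ (isHomogeneous_monomial 1 hα)
      exact ⟨v, fun h => absurd hα h, fun _ => hv⟩
    · exact ⟨0, fun _ => rfl, fun h => absurd h hα⟩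
  choose v hv0 hv using hv
  have key : ∀ f, del N i j ^ 3 * mkf v f = Psi N c i j (homogeneousComponent 2 f) := by
    intro f
    induction f using MvPolynomial.induction_on' with
    | monomial α x =>
      rw [mkf_mono]
      by_cases hα : α.degree = 2
      · rw [hc_hom (isHomogeneous_monomial x hα), fun_mono (Psi N c i j), hv α hα]; ring
      · rw [hv0 α hα, hc_monomial_ne α _ hα, map_zero, mul_zero, mul_zero]
    | add p q hp hq => simp only [map_add, mul_add, hp, hq]
  have hD3 := pow_ne_zero 3 hD
  have hF := Psi_Fn N c i j
  refine ⟨mkf v, ⟨fun f hf => ?_, fun α hα => ?_⟩, ?_, ?_⟩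
  · have := hF.1 f hf
    rw [LinearMap.comp_apply, ← key] at this
    exact (mul_eq_zero.1 this).resolve_left hD3
  · rw [mkf_mono, hv0 α hα, mul_zero]
  · intro ϖ hp
    obtain ⟨i', j', hd', f, hf, hnd⟩ := Q ϖ hp
    refine ⟨f, hf, fun h => hnd ?_⟩
    have h1 := key f
    rw [hc_hom hf] at h1
    have h2 := Psi_change N c i j i' j' hD f hf
    rw [← h1] at h2
    have h3 : Psi N c i' j' f = del N i' j' ^ 3 * mkf v f := by
      apply mul_left_cancel₀ hD3
      rw [h2]; ring
    rw [h3]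
    exact h.mul_left _
  · have hvh : ∀ α, (v α).IsHomogeneous (3 * m + 2) := by
      intro α
      by_cases hα : α.degree = 2
      · have h1 := Psi_homog N c hN hc i j α hα
        rw [hv α hα, mul_comm] at h1
        refine hom_quot (((del_homog N hN i j)).pow 3) hD3 ?_
        convert h1 using 1; ring
      · rw [hv0 α hα]; exact isHomogeneous_zero _ _ _
    rw [(sig N c).as_sum, map_sum]
    apply IsHomogeneous.sum
    intro α _
    rw [mkf_mono]
    have := (CH_sig N c hN hc α).mul (hvh α)
    convert this using 1; ring

end chom

section Qof
theorem Q_of {T κ : Type*} [CommRing T] [Field κ] {m : ℕ} (N : Matrix (Fin m) (V m) T) (c : Fin 2 → Matrix (V m) (V m) T)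
    (g : T →+* κ) (ϖ : T) (hg : g ϖ = 0)
    (hno : ¬ ∃ χ χ' : MvPolynomial (V m) κ →ₗ[κ] κ, Fn (N.map g) (fun a => (c a).map g) χ ∧
      Fn (N.map g) (fun a => (c a).map g) χ' ∧ LinearIndependent κ ![χ, χ']) :
    ∃ i j, ¬ ϖ ∣ del N i j ∧ ∃ f : MvPolynomial (V m) T, f.IsHomogeneous 2 ∧ ¬ ϖ ∣ Psi N c i j f := by
  have H := mt (fieldF (N.map g) (fun a => (c a).map g)) hno
  push Not at H
  obtain ⟨i, j, hD, f, hf, hne⟩ := H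
  have hdel : ∀ i j, del (N.map g) i j = g (del N i j) := by
    intro i j
    rw [del, DD, del, DD, RingHom.map_det]
    congr 1
    ext a b
    rcases a with a | a
    · rfl
    · fin_cases a <;> simp [Pi.single_apply, apply_ite g]
  have hd : ∀ x, ϖ ∣ x → g x = 0 := by
    rintro _ ⟨y, rfl⟩
    rw [map_mul, hg, zero_mul]
  have hev : ∀ (a : V m → T) (p : MvPolynomial (V m) T), eval (fun l => g (a l)) (map g p) = g (eval a p) := by
    intro a p
    rw [eval_map]
    exact (eval₂_comp_left g (RingHom.id T) a p).symm
  have hPsi : ∀ p : MvPolynomial (V m) T, Psi (N.map g) (fun a => (c a).map g) i j (map g p) = g (Psi N c i j p) := by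
    intro p
    rw [Psi, Psi, PP_apply, PP_apply]
    have e1 : (fun l => del (N.map g) l j) = fun l => g (del N l j) := funext fun l => hdel _ _
    have e2 : (fun l => del (N.map g) i l) = fun l => g (del N i l) := funext fun l => hdel _ _
    have e3 : (fun l => g (del N l j)) + (fun l => g (del N i l)) = fun l => g (((fun l => del N l j) + (fun l => del N i l)) l) := by
      funext l; simp
    simp only [e1, e2, e3, ← map_quad, hev, map_add, map_sub, map_mul]
  refine ⟨i, j, fun h => hD (by rw [hdel]; exact hd _ h), ?_⟩
  by_contra hcon
  push Not at hcon
  apply hne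
  refine hom2_ind (fun f => Psi (N.map g) (fun a => (c a).map g) i j f = 0) (map_zero _) ?_ ?_ f hf
  · intro f g' h1 h2
    rw [map_add, h1, h2, add_zero]
  · intro b r s
    rw [← smul_eq_C_mul, map_smul]
    have := hPsi (X r * X s)
    rw [map_mul, map_X, map_X] at this
    rw [this, hd _ (hcon _ ((isHomogeneous_X _ _).mul (isHomogeneous_X _ _))), smul_zero]
end Qof

open scoped Matrix

section rk

theorem rank_map_le {T K ι κ' : Type*} [CommRing T] [IsDomain T] [Field K] [Algebra T K] [IsFractionRing T K] [Fintype ι] [Fintype κ']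
    (ρ : Matrix ι κ' T) : (ρ.map (algebraMap T K)).rank ≤ ρ.rank := by
  rw [Matrix.rank_eq_finrank_span_cols]
  obtain ⟨f, hf, _, hli⟩ := Submodule.exists_fun_fin_finrank_span_eq K (Set.range (ρ.map (algebraMap T K)).col)
  choose j hj using hf
  have h1 : LinearIndependent T f := (LinearIndependent.iff_fractionRing T K).2 hli
  have h2 : LinearIndependent T (fun i => ρ.col (j i)) := by
    apply LinearIndependent.of_comp ((Algebra.linearMap T K).compLeft ι)
    convert h1 using 1
    funext i
    rw [← hj i]
    rfl
  classical
  have h3 : LinearIndependent T (fun i => (⟨ρ.col (j i), Pi.single (j i) 1, by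
      rw [Matrix.mulVecLin_apply, Matrix.mulVec_single_one]⟩ : LinearMap.range ρ.mulVecLin)) :=
    LinearIndependent.of_comp (Submodule.subtype _) h2
  have := h3.fintype_card_le_finrank
  rwa [Fintype.card_fin] at this

theorem rank_ker {K ι κ' : Type*} [Field K] [Fintype ι] [Fintype κ'] (M : Matrix ι κ' K) :
    M.rank + Module.finrank K (LinearMap.ker M.vecMulLinear) = Fintype.card ι := by
  have h := LinearMap.finrank_range_add_finrank_ker M.vecMulLinear
  rw [Module.finrank_fintype_fun_eq_card] at h
  rw [← h, ← Matrix.rank_transpose, Matrix.rank]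
  have e : Mᵀ.mulVecLin = M.vecMulLinear := by
    apply LinearMap.ext
    intro v
    rw [Matrix.mulVecLin_apply, Matrix.mulVec_transpose]; rfl
  rw [e]

theorem rank_ge {K ι κ' : Type*} [Field K] [Fintype ι] [Fintype κ'] (M : Matrix ι κ' K)
    (h : ∀ w w' : ι → K, w ᵥ* M = 0 → w' ᵥ* M = 0 → ¬ LinearIndependent K ![w, w']) : Fintype.card ι ≤ M.rank + 1 := by
  rw [← rank_ker M]
  by_contra hlt
  obtain ⟨F, hF⟩ := exists_linearIndependent_of_le_finrank (n := 2) (R := K) (M := LinearMap.ker M.vecMulLinear) (by omega)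
  have h1 := hF.map' (LinearMap.ker M.vecMulLinear).subtype (Submodule.ker_subtype _)
  apply h (F 0) (F 1) (F 0).2 (F 1).2
  have e : ![(F 0 : ι → K), (F 1 : ι → K)] = (LinearMap.ker M.vecMulLinear).subtype ∘ F := by
    funext i; fin_cases i <;> rfl
  rw [e]
  exact h1

theorem rank_le2 {K ι κ' : Type*} [Field K] [Fintype ι] [Fintype κ'] (M : Matrix ι κ' K)
    (w w' : ι → K) (h : w ᵥ* M = 0) (h' : w' ᵥ* M = 0) (hli : LinearIndependent K ![w, w']) : M.rank + 2 ≤ Fintype.card ι := by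
  rw [← rank_ker M]
  have : LinearIndependent K (![⟨w, h⟩, ⟨w', h'⟩] : Fin 2 → LinearMap.ker M.vecMulLinear) := by
    apply LinearIndependent.of_comp (Submodule.subtype _)
    convert hli using 1
    funext i; fin_cases i <;> rfl
  have := this.fintype_card_le_finrank
  rw [Fintype.card_fin] at this
  omega
end rk

section rho
variable {T : Type*} [CommRing T] [IsDomain T] [IsNoetherianRing T] {m : ℕ} (N : Matrix (Fin m) (V m) T) (c : Fin 2 → Matrix (V m) (V m) T)
  {ι κ' : Type*} [Fintype ι] [Fintype κ'] (ρ : Matrix ι κ' T) (r : ι → MvPolynomial (V m) T)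
  (hr2 : ∀ i, (r i).IsHomogeneous 2)
  (ha : ∀ f : MvPolynomial (V m) T, f.IsHomogeneous 2 → ∃ t : ι → T, f - ∑ i, C (t i) * r i ∈ Lid N c)
  (hb : ∀ t : ι → T, ∑ i, C (t i) * r i ∈ Lid N c ↔ t ∈ LinearMap.range ρ.mulVecLin)

include hr2 ha hb in
omit [IsDomain T] [IsNoetherianRing T] in
theorem fn_of_ker (w : ι → T) (hw : w ᵥ* ρ = 0) : ∃ ψ : MvPolynomial (V m) T →ₗ[T] T, Fn N c ψ ∧ ∀ i, ψ (r i) = w i := by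
  classical
  have hw' : ∀ t : ι → T, ∑ i, C (t i) * r i ∈ Lid N c → w ⬝ᵥ t = 0 := by
    intro t ht
    obtain ⟨s, rfl⟩ := (hb t).1 ht
    rw [Matrix.mulVecLin_apply, Matrix.dotProduct_mulVec, hw, zero_dotProduct]
  have hv : ∀ α : V m →₀ ℕ, ∃ t : ι → T, α.degree = 2 → monomial α 1 - ∑ i, C (t i) * r i ∈ Lid N c := by
    intro α
    by_cases hα : α.degree = 2
    · obtain ⟨t, ht⟩ := ha _ (isHomogeneous_monomial 1 hα)
      exact ⟨t, fun _ => ht⟩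
    · exact ⟨0, fun h => absurd h hα⟩
  choose t ht using hv
  have key : ∀ f : MvPolynomial (V m) T, f.IsHomogeneous 2 → ∀ s : ι → T, f - ∑ i, C (s i) * r i ∈ Lid N c →
      mkf (fun α => w ⬝ᵥ t α) f = w ⬝ᵥ s := by
    intro f hf s hs
    have h1 : mkf (fun α => w ⬝ᵥ t α) f = w ⬝ᵥ (∑ α ∈ f.support, coeff α f • t α) := by
      conv_lhs => rw [f.as_sum]
      rw [map_sum, dotProduct_sum]
      refine Finset.sum_congr rfl fun α _ => ?_
      rw [mkf_mono, dotProduct_smul, smul_eq_mul]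
    rw [h1, ← sub_eq_zero, ← dotProduct_sub]
    apply hw'
    have h2 : f - ∑ i, C ((∑ α ∈ f.support, coeff α f • t α) i) * r i ∈ Lid N c := by
      have : f - ∑ i, C ((∑ α ∈ f.support, coeff α f • t α) i) * r i =
          ∑ α ∈ f.support, C (coeff α f) * (monomial α 1 - ∑ i, C (t α i) * r i) := by
        simp only [mul_sub, Finset.sum_sub_distrib]
        congr 1
        · conv_lhs => rw [f.as_sum]
          refine Finset.sum_congr rfl fun α _ => ?_
          rw [C_mul_monomial, mul_one]
        · simp only [Finset.mul_sum, Finset.sum_apply, map_sum, Finset.sum_mul, Pi.smul_apply, smul_eq_mul, map_mul]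
          rw [Finset.sum_comm]
          exact Finset.sum_congr rfl fun α _ => Finset.sum_congr rfl fun i _ => mul_assoc _ _ _
      rw [this]
      refine Ideal.sum_mem _ fun α hα => Ideal.mul_mem_left _ _ (ht α ?_)
      have := hf (mem_support_iff.1 hα)
      rw [← this]
      exact congrArg (fun F => F α) (Finsupp.degree_eq_weight_one (R := ℕ) (σ := V m))
    have := Ideal.sub_mem _ hs h2
    convert this using 1
    simp only [Pi.sub_apply, map_sub, sub_mul, Finset.sum_sub_distrib]
    ring
  have key0 : ∀ f : MvPolynomial (V m) T, f.IsHomogeneous 2 → f ∈ Lid N c → mkf (fun α => w ⬝ᵥ t α) f = 0 := by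
    intro f hf hL
    rw [key f hf 0 (by simpa using hL), dotProduct_zero]
  refine ⟨_, Fn_mk N c (mkf (fun α => w ⬝ᵥ t α)) ?_ ?_, fun i => ?_⟩
  · intro g i hg
    exact key0 _ (hg.mul (lin_hom N i)) (Ideal.mul_mem_left _ _ (lin_mem N c i))
  · intro a
    exact key0 _ (quad_hom _) (quad_mem N c a)
  · rw [LinearMap.comp_apply, hc_hom (hr2 i), key _ (hr2 i) (Pi.single i 1), dotProduct_single_one]
    convert (Lid N c).zero_mem
    rw [sub_eq_zero, Finset.sum_eq_single i]
    · simp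
    · intro j _ hj; simp [Pi.single_eq_of_ne hj]
    · simp

include hr2 ha hb in
theorem rho_rank (h : HG N c) (hm : 0 < m) (u : T) (hu0 : u ≠ 0) (hu : Tor N c u) (ϖ : T) (hp : Prime ϖ) :
    Fintype.card ι ≤ ρ.rank + 1 := by
  let K := FractionRing T
  refine le_trans (rank_ge (ρ.map (algebraMap T K)) ?_) (Nat.add_le_add_right (rank_map_le ρ) 1)
  have hinj : Function.Injective (algebraMap T K) := IsFractionRing.injective T K
  have clear : ∀ w : ι → K, w ᵥ* (ρ.map (algebraMap T K)) = 0 → ∃ (b : T) (v : ι → T), b ≠ 0 ∧ v ᵥ* ρ = 0 ∧ ∀ i, algebraMap T K (v i) = algebraMap T K b * w i := by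
    intro w hw
    obtain ⟨b, hb⟩ := IsLocalization.exist_integer_multiples_of_finite (nonZeroDivisors T) w
    choose v hv using hb
    have hv' : ∀ i, algebraMap T K (v i) = algebraMap T K b * w i := by
      intro i; rw [hv i, Algebra.smul_def]
    refine ⟨b, v, nonZeroDivisors.coe_ne_zero b, ?_, hv'⟩
    funext j
    apply hinj
    have := congrFun hw j
    simp only [Matrix.vecMul, dotProduct, Matrix.map_apply, Pi.zero_apply, map_sum, map_mul, hv', map_zero] at this ⊢
    rw [← mul_zero (algebraMap T K b), ← this, Finset.mul_sum]
    exact Finset.sum_congr rfl fun i _ => by ring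
  intro w w' hw hw' hli
  obtain ⟨b, v, hb0, hv, hvw⟩ := clear w hw
  obtain ⟨b', v', hb0', hv', hvw'⟩ := clear w' hw'
  obtain ⟨ψ, hψ, hψr⟩ := fn_of_ker N c ρ r hr2 ha hb v hv
  obtain ⟨ψ', hψ', hψr'⟩ := fn_of_ker N c ρ r hr2 ha hb v' hv'
  rw [LinearIndependent.pair_iff] at hli
  have hB : algebraMap T K b ≠ 0 := fun h => hb0 (hinj (by rw [h, map_zero]))
  have hB' : algebraMap T K b' ≠ 0 := fun h => hb0' (hinj (by rw [h, map_zero]))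
  have h1 := hli (algebraMap T K (b * ψ' (sig N c))) (- algebraMap T K (b' * ψ (sig N c))) (by
    funext i
    have h2 := congrArg (algebraMap T K) (Fn_prop N c h hm u hu0 hu ϖ hp ψ ψ' hψ hψ' (r i) (hr2 i))
    rw [hψr, hψr', map_mul, map_mul, hvw, hvw'] at h2
    simp only [Pi.add_apply, Pi.smul_apply, smul_eq_mul, map_mul, Pi.zero_apply]
    linear_combination h2)
  have h3 : ψ (sig N c) = 0 := by
    have := h1.2
    rw [neg_eq_zero, map_mul] at this
    exact hinj (by rw [(mul_eq_zero.1 this).resolve_left hB', map_zero])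
  have h4 := Fn_zero N c h hm u hu0 hu ϖ hp ψ hψ h3
  have h5 : w = 0 := by
    funext i
    have := hvw i
    rw [← hψr, h4, LinearMap.zero_apply, map_zero] at this
    exact (mul_eq_zero.1 this.symm).resolve_left hB
  have := hli 1 0 (by rw [h5]; simp)
  exact one_ne_zero this.1

include ha hb in
omit [IsDomain T] [IsNoetherianRing T] in
theorem no_two {κ : Type*} [Field κ] (g : T →+* κ) (hcard : Fintype.card ι ≤ ρ.rank + 1)
    (f0 : Fin ρ.rank → ι) (g0 : Fin ρ.rank → κ') (hdet : g (ρ.submatrix f0 g0).det ≠ 0) :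
    ¬ ∃ χ χ' : MvPolynomial (V m) κ →ₗ[κ] κ, Fn (N.map g) (fun a => (c a).map g) χ ∧
      Fn (N.map g) (fun a => (c a).map g) χ' ∧ LinearIndependent κ ![χ, χ'] := by
  classical
  rintro ⟨χ, χ', h1, h2, h3⟩
  have hker : ∀ χ : MvPolynomial (V m) κ →ₗ[κ] κ, Fn (N.map g) (fun a => (c a).map g) χ →
      (fun i => χ (map g (r i))) ᵥ* (ρ.map g) = 0 := by
    intro χ hχ
    funext j
    have : ∑ i, C (ρ i j) * r i ∈ Lid N c := by
      apply (hb (fun i => ρ i j)).2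
      refine ⟨Pi.single j 1, ?_⟩
      rw [Matrix.mulVecLin_apply, Matrix.mulVec_single_one]; rfl
    have := hχ.1 (map g (∑ i, C (ρ i j) * r i)) (by rw [← map_Lid]; exact Ideal.mem_map_of_mem _ this)
    rw [map_sum, map_sum] at this
    simp only [Matrix.vecMul, dotProduct, Matrix.map_apply, Pi.zero_apply]
    rw [← this]
    refine Finset.sum_congr rfl fun i _ => ?_
    rw [map_mul, map_C, ← smul_eq_C_mul, map_smul, smul_eq_mul, mul_comm]
  have hz : ∀ χ : MvPolynomial (V m) κ →ₗ[κ] κ, Fn (N.map g) (fun a => (c a).map g) χ →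
      (∀ i, χ (map g (r i)) = 0) → χ = 0 := by
    intro χ hχ hi
    apply LinearMap.ext
    intro f
    rw [LinearMap.zero_apply]
    induction f using MvPolynomial.induction_on' with
    | monomial α x =>
      rw [fun_mono χ]
      by_cases hα : α.degree = 2
      · obtain ⟨t, ht⟩ := ha _ (isHomogeneous_monomial 1 hα)
        have := hχ.1 (map g _) (by rw [← map_Lid]; exact Ideal.mem_map_of_mem _ ht)
        rw [map_sub, map_monomial, map_one, map_sub, map_sum, map_sum, Finset.sum_eq_zero, sub_zero] at this
        · rw [this, mul_zero]
        · intro i _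
          rw [map_mul, map_C, ← smul_eq_C_mul, map_smul, hi, smul_zero]
      · rw [hχ.2 α hα, mul_zero]
    | add p q hp hq => rw [map_add, hp, hq, add_zero]
  have hr := rank_le2 (ρ.map g) _ _ (hker χ h1) (hker χ' h2) (by
    rw [LinearIndependent.pair_iff] at h3 ⊢
    intro x y hxy
    apply h3
    apply hz
    · refine ⟨fun f hf => ?_, fun α hα => ?_⟩
      · rw [LinearMap.add_apply, LinearMap.smul_apply, LinearMap.smul_apply, h1.1 f hf, h2.1 f hf]; simp
      · rw [LinearMap.add_apply, LinearMap.smul_apply, LinearMap.smul_apply, h1.2 α hα, h2.2 α hα]; simp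
    · intro i
      exact congrFun hxy i)
  have hs := Matrix.rank_submatrix_le (ρ.map g) f0 g0
  have hu : IsUnit ((ρ.map g).submatrix f0 g0) := by
    rw [Matrix.isUnit_iff_isUnit_det, isUnit_iff_ne_zero]
    rw [RingHom.map_det] at hdet
    exact hdet
  rw [Matrix.rank_of_isUnit _ hu, Fintype.card_fin] at hs
  omega

end rho

open scoped Matrix

section chain
/-- linear form with given coefficients -/
def Lf (F : Type*) [CommRing F] (n : ℕ) : (Fin n → F) →ₗ[F] MvPolynomial (Fin n) F :=
  Fintype.linearCombination F (fun j => (X j : MvPolynomial (Fin n) F))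

theorem Lf_apply {F : Type*} [CommRing F] {n : ℕ} (w : Fin n → F) : Lf F n w = ∑ j, C (w j) * X j := by
  simp [Lf, Fintype.linearCombination_apply, smul_eq_C_mul]

theorem Lf_single {F : Type*} [CommRing F] {n : ℕ} (j : Fin n) : Lf F n (Pi.single j 1) = X j := by
  rw [Lf, Fintype.linearCombination_apply_single, one_smul]

theorem Lf_inj {F : Type*} [CommRing F] {n : ℕ} (w : Fin n → F) (h : Lf F n w = 0) : w = 0 := by
  classical
  funext j
  have := congrArg (coeff (Finsupp.single j 1)) h
  rw [Lf_apply, coeff_sum] at this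
  simpa [coeff_C_mul, coeff_X', Finsupp.single_left_inj] using this

/-- algebra endomorphism induced by a linear map on linear forms -/
def ThL {F : Type*} [CommRing F] {n : ℕ} (p : (Fin n → F) →ₗ[F] (Fin n → F)) : MvPolynomial (Fin n) F →ₐ[F] MvPolynomial (Fin n) F :=
  aeval (fun j => Lf F n (p (Pi.single j 1)))

theorem ThL_Lf {F : Type*} [CommRing F] {n : ℕ} (p : (Fin n → F) →ₗ[F] (Fin n → F)) (w) : ThL p (Lf F n w) = Lf F n (p w) := by
  have : (ThL p).toLinearMap ∘ₗ Lf F n = Lf F n ∘ₗ p := by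
    refine (Pi.basisFun F (Fin n)).ext fun j => ?_
    rw [Pi.basisFun_apply, LinearMap.comp_apply, Lf_single, AlgHom.toLinearMap_apply, ThL, aeval_X, LinearMap.comp_apply]
  exact LinearMap.congr_fun this w

theorem ThL_comp {F : Type*} [CommRing F] {n : ℕ} (p q : (Fin n → F) →ₗ[F] (Fin n → F)) : (ThL p).comp (ThL q) = ThL (p ∘ₗ q) := by
  apply MvPolynomial.algHom_ext
  intro j
  rw [AlgHom.comp_apply, ← Lf_single, ThL_Lf, ThL_Lf, ThL_Lf]; rfl

theorem ht_chain {R F : Type*} [CommRing R] [IsNoetherianRing R] [Field F] (g : R →+* F) (n d : ℕ) (y0 : Fin n → F) (φ : Matrix (Fin n) (Fin d) R)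
    (hφ : ∀ i, ∑ j, g (φ j i) * y0 j = 0) :
    (RingHom.ker g).height + ((φ.map g).rank : ℕ) ≤ (RingHom.ker (eval₂Hom g y0)).height := by
  classical
  rw [Matrix.rank_eq_finrank_span_cols]
  obtain ⟨t, hts, htc, -, hli⟩ := Submodule.exists_finset_span_eq_linearIndepOn F (Set.range (φ.map g).col)
  rw [← htc]
  let b := Module.Basis.extend hli
  have hbs : ∀ x, b x = (x : Fin n → F) := fun x => Module.Basis.extend_apply_self hli x
  have hsub : ∀ x ∈ t, ∃ y, b y = x := fun x hx => ⟨⟨x, hli.subset_extend _ (by simpa using hx)⟩, hbs _⟩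
  let p : Finset (Fin n → F) → ((Fin n → F) →ₗ[F] (Fin n → F)) := fun s => b.constr F (fun x => if (x : Fin n → F) ∈ s then 0 else (x : Fin n → F))
  have hp : ∀ s x, p s (b x) = if b x ∈ s then 0 else b x := by
    intro s x
    rw [Module.Basis.constr_basis, hbs]
  let θ : Finset (Fin n → F) → (MvPolynomial (Fin n) R →+* MvPolynomial (Fin n) F) := fun s => (ThL (p s)).toRingHom.comp (map g)
  have hker : ∀ s ⊆ t, (RingHom.ker g).height + (s.card : ℕ) ≤ (RingHom.ker (θ s)).height := by
    intro s
    induction s using Finset.induction_on with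
    | empty =>
      intro _
      have e : p ∅ = LinearMap.id := b.ext fun x => by rw [hp]; simp
      rw [Finset.card_empty, Nat.cast_zero, add_zero]
      have hprime : (RingHom.ker g).IsPrime := RingHom.ker_isPrime g
      have hprime : (RingHom.ker (θ ∅)).IsPrime := RingHom.ker_isPrime _
      have : (RingHom.ker (θ ∅)).LiesOver (RingHom.ker g) := by
        constructor
        ext x
        rw [Ideal.mem_comap, RingHom.mem_ker, RingHom.mem_ker, MvPolynomial.algebraMap_eq]
        show _ ↔ ThL (p ∅) (map g (C x)) = 0
        rw [map_C, ThL, ← MvPolynomial.algebraMap_eq, AlgHom.commutes, MvPolynomial.algebraMap_eq, C_eq_zero]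
      rw [Ideal.height_eq_height_add_of_liesOver_of_hasGoingDown (RingHom.ker g) (RingHom.ker (θ ∅))]
      exact le_self_add
    | insert a s has ih =>
      intro hs
      have ih' := ih (fun x hx => hs (Finset.mem_insert_of_mem hx))
      have hpr1 : (RingHom.ker (θ s)).IsPrime := RingHom.ker_isPrime _
      have hpr2 : (RingHom.ker (θ (insert a s))).IsPrime := RingHom.ker_isPrime _
      rw [Finset.card_insert_of_notMem has, Nat.cast_add, Nat.cast_one, ← add_assoc]
      refine le_trans (add_le_add_left ih' 1) (Ideal.height_add_one_le_of_lt_of_isPrime ?_)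
      have e : p (insert a s) = p {a} ∘ₗ p s := by
        refine b.ext fun x => ?_
        rw [LinearMap.comp_apply, hp, hp]
        by_cases h1 : b x ∈ s
        · simp [h1]
        · rw [if_neg h1, hp]; simp [h1]
      obtain ⟨y, hy⟩ := hsub a (hs (Finset.mem_insert_self _ _))
      have ha : a ∈ Set.range (φ.map g).col := hts (by simpa using hs (Finset.mem_insert_self _ _))
      obtain ⟨i, hi⟩ := ha
      have hℓ : map g (∑ j, C (φ j i) * X j) = Lf F n a := by
        rw [Lf_apply, ← hi]; simp
      refine lt_of_le_of_ne ?_ ?_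
      · intro f hf
        rw [RingHom.mem_ker] at hf ⊢
        show ThL (p (insert a s)) (map g f) = 0
        rw [e, ← ThL_comp, AlgHom.comp_apply]
        have hf' : ThL (p s) (map g f) = 0 := hf
        rw [hf', map_zero]
      · intro heq
        have h1 : (∑ j, C (φ j i) * X j : MvPolynomial (Fin n) R) ∈ RingHom.ker (θ (insert a s)) := by
          rw [RingHom.mem_ker]
          show ThL (p (insert a s)) (map g _) = 0
          rw [hℓ, ThL_Lf, ← hy, hp, hy, if_pos (Finset.mem_insert_self _ _), map_zero]
        rw [← heq, RingHom.mem_ker] at h1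
        have h2 : ThL (p s) (map g (∑ j, C (φ j i) * X j)) = 0 := h1
        rw [hℓ, ThL_Lf, ← hy, hp, hy, if_neg has] at h2
        exact b.ne_zero y (by rw [hy]; exact Lf_inj _ h2)
  refine le_trans (hker t (Finset.Subset.refl t)) (Ideal.height_mono ?_)
  intro f hf
  rw [RingHom.mem_ker] at hf ⊢
  have hη : ((aeval y0 : MvPolynomial (Fin n) F →ₐ[F] F).comp (ThL (p t))) = aeval y0 := by
    have h1 : ((aeval y0 : MvPolynomial (Fin n) F →ₐ[F] F).toLinearMap ∘ₗ Lf F n) ∘ₗ p t = (aeval y0 : MvPolynomial (Fin n) F →ₐ[F] F).toLinearMap ∘ₗ Lf F n := by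
      refine b.ext fun x => ?_
      rw [LinearMap.comp_apply, hp]
      split_ifs with hx
      · rw [map_zero]
        have : b x ∈ Set.range (φ.map g).col := hts (by simpa using hx)
        obtain ⟨i, hi⟩ := this
        rw [← hi, LinearMap.comp_apply, Lf_apply, AlgHom.toLinearMap_apply, map_sum, ← hφ i]
        refine Finset.sum_congr rfl fun j _ => ?_
        simp
      · rfl
    apply MvPolynomial.algHom_ext
    intro j
    rw [AlgHom.comp_apply, ← Lf_single, ThL_Lf]
    exact LinearMap.congr_fun h1 (Pi.single j 1)
  have hf' : ThL (p t) (map g f) = 0 := hf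
  have h2 := DFunLike.congr_fun hη (map g f)
  rw [AlgHom.comp_apply, hf', map_zero] at h2
  rw [coe_eval₂Hom, ← eval_map]
  rw [← coe_aeval_eq_eval]
  exact h2.symm
end chain

open scoped Matrix

section ht
theorem ker_le_gens {R F E : Type*} [CommRing R] [Field F] (g : R →+* F) (n d : ℕ) [AddCommGroup E] [Module R E]
    (φ : Matrix (Fin n) (Fin d) R) (π : (Fin n → R) →ₗ[R] E) (hsurj : Function.Surjective π)
    (hker : LinearMap.ker π = LinearMap.range φ.mulVecLin) (p : Ideal R) [p.IsPrime] (hp : p = RingHom.ker g)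
    (s : Finset (LocalizedModule p.primeCompl E))
    (hs : Submodule.span (Localization.AtPrime p) (s : Set (LocalizedModule p.primeCompl E)) = ⊤) :
    n ≤ (φ.map g).rank + s.card := by
  classical
  let _ : Algebra R F := g.toAlgebra
  have hg : ∀ r, algebraMap R F r = g r := fun r => rfl
  have hrk := rank_ker (φ.map g)
  rw [Fintype.card_fin] at hrk
  refine hrk.symm.le.trans (Nat.add_le_add_left ?_ _)
  -- functionals on `E`
  have hE : ∀ w : LinearMap.ker (φ.map g).vecMulLinear, ∃ f : E →ₗ[R] F, ∀ v, f (π v) = ∑ i, (w : Fin n → F) i * g (v i) := by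
    intro w
    let f0 : (Fin n → R) →ₗ[R] F := ∑ i, (w : Fin n → F) i • ((Algebra.linearMap R F) ∘ₗ LinearMap.proj i)
    have hf0 : ∀ v, f0 v = ∑ i, (w : Fin n → F) i * g (v i) := by
      intro v
      simp [f0, hg]
    have hk : LinearMap.ker π ≤ LinearMap.ker f0 := by
      rw [hker]
      rintro _ ⟨x, rfl⟩
      rw [LinearMap.mem_ker, hf0]
      have hw : (w : Fin n → F) ᵥ* (φ.map g) = 0 := w.2
      have h1 : (w : Fin n → F) ⬝ᵥ ((φ.map g) *ᵥ (fun j => g (x j))) = 0 := by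
        rw [Matrix.dotProduct_mulVec, hw, zero_dotProduct]
      rw [← h1]
      simp only [dotProduct, Matrix.mulVecLin_apply, Matrix.mulVec, map_sum, map_mul, Matrix.map_apply]
    let q := (LinearMap.ker π).liftQ f0 hk
    let eq := π.quotKerEquivOfSurjective hsurj
    refine ⟨q ∘ₗ eq.symm.toLinearMap, fun v => ?_⟩
    have : eq.symm (π v) = Submodule.Quotient.mk v := by
      rw [LinearEquiv.symm_apply_eq]; rfl
    rw [LinearMap.comp_apply, LinearEquiv.coe_coe, this, ← hf0]
    exact Submodule.liftQ_apply _ _ _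
  choose f hf using hE
  have hunit : ∀ x : p.primeCompl, IsUnit (algebraMap R (Module.End R F) x) := by
    intro x
    have hx : g x ≠ 0 := fun h => x.2 (hp.ge h)
    rw [Module.End.isUnit_iff]
    constructor
    · intro a b hab
      have : g x * a = g x * b := by
        simpa [Algebra.smul_def, hg] using hab
      exact mul_left_cancel₀ hx this
    · intro a
      refine ⟨(g x)⁻¹ * a, ?_⟩
      show (x : R) • ((g x)⁻¹ * a) = a
      rw [Algebra.smul_def, hg, mul_inv_cancel_left₀ hx]
  let Fl : LinearMap.ker (φ.map g).vecMulLinear → (LocalizedModule p.primeCompl E →ₗ[R] F) :=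
    fun w => LocalizedModule.lift p.primeCompl (f w) hunit
  have hFl : ∀ w x, Fl w (LocalizedModule.mk x 1) = f w x := by
    intro w x
    exact LinearMap.congr_fun (LocalizedModule.lift_comp p.primeCompl (f w) hunit) x
  -- additivity
  have hfadd : ∀ w w', f (w + w') = f w + f w' := by
    intro w w'
    apply LinearMap.ext
    intro x
    obtain ⟨v, rfl⟩ := hsurj x
    rw [LinearMap.add_apply, hf, hf, hf, ← Finset.sum_add_distrib]
    refine Finset.sum_congr rfl fun i _ => ?_
    simp; ring
  have hfsm : ∀ (t : F) w x, f (t • w) x = t * f w x := by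
    intro t w x
    obtain ⟨v, rfl⟩ := hsurj x
    rw [hf, hf, Finset.mul_sum]
    refine Finset.sum_congr rfl fun i _ => ?_
    simp; ring
  have hdet : ∀ w z, ∃ (t : R) (x : E), g t ≠ 0 ∧ g t * Fl w z = f w x ∧ ∀ w, g t * Fl w z = f w x := by
    intro w z
    induction z using LocalizedModule.induction_on with
    | h x t =>
      have hx : g t ≠ 0 := fun h => t.2 (hp.ge h)
      have key : ∀ w, g t * Fl w (LocalizedModule.mk x t) = f w x := by
        intro w
        rw [← hFl, ← hg, ← Algebra.smul_def, ← map_smul]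
        congr 1
        rw [LocalizedModule.smul'_mk]
        have := LocalizedModule.mk_cancel_common_left t 1 x
        rw [mul_one] at this
        exact this
      exact ⟨t, x, hx, key w, key⟩
  let A : LinearMap.ker (φ.map g).vecMulLinear →ₗ[F] (s → F) :=
    { toFun := fun w z => Fl w z
      map_add' := by
        intro w w'
        funext z
        obtain ⟨t, x, ht, -, hx⟩ := hdet w z
        apply mul_left_cancel₀ ht
        rw [Pi.add_apply, mul_add, hx, hx, hx, hfadd, LinearMap.add_apply]
      map_smul' := by
        intro a w
        funext z
        obtain ⟨t, x, ht, -, hx⟩ := hdet w z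
        apply mul_left_cancel₀ ht
        rw [hx, hfsm, ← hx, RingHom.id_apply, Pi.smul_apply, smul_eq_mul]
        ring }
  have hA : Function.Injective A := by
    rw [← LinearMap.ker_eq_bot, LinearMap.ker_eq_bot']
    intro w hw
    have hz : ∀ z, Fl w z = 0 := by
      intro z
      have hz : z ∈ Submodule.span (Localization.AtPrime p) (s : Set (LocalizedModule p.primeCompl E)) := by rw [hs]; trivial
      induction hz using Submodule.span_induction with
      | mem x hx => exact congrFun hw ⟨x, hx⟩
      | zero => exact map_zero _
      | add x y _ _ hx hy => rw [map_add, hx, hy, add_zero]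
      | smul a x _ hx =>
        obtain ⟨⟨r, t⟩, hrt⟩ := IsLocalization.surj p.primeCompl a
        have ht : g t ≠ 0 := fun h => t.2 (hp.ge h)
        apply mul_left_cancel₀ ht
        rw [mul_zero, ← hg, ← Algebra.smul_def, ← map_smul]
        have : (t : R) • a • x = r • x := by
          rw [← algebraMap_smul (Localization.AtPrime p) (t : R), ← algebraMap_smul (Localization.AtPrime p) r, ← mul_smul, mul_comm, hrt]
        rw [this, map_smul, hx, smul_zero]
    apply Subtype.ext
    funext i
    have h1 := hf w (Pi.single i 1)
    rw [← hFl, hz, Finset.sum_eq_single i] at h1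
    · simpa using h1.symm
    · intro j _ hj; simp [Pi.single_eq_of_ne hj]
    · simp
  have := LinearMap.finrank_le_finrank_of_injective hA
  simpa using this

theorem rank_inj {R F : Type*} [CommRing R] [IsDomain R] [Field F] (g : R →+* F) (hg : Function.Injective g) (n d : ℕ)
    (φ : Matrix (Fin n) (Fin d) R) (hinj : Function.Injective φ.mulVecLin) : d ≤ (φ.map g).rank := by
  classical
  let K := FractionRing R
  have h1 : LinearIndependent R φ.col := by
    rw [← Matrix.mulVec_injective_iff]; exact hinj
  have h2 : LinearIndependent K (φ.map (algebraMap R K)).col := by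
    rw [← LinearIndependent.iff_fractionRing R K]
    have := h1.map' ((Algebra.linearMap R K).compLeft (Fin n)) (by
      rw [LinearMap.ker_eq_bot']
      intro v hv
      funext i
      have := congrFun hv i
      exact (IsFractionRing.injective R K) (by simpa using this))
    exact this
  have h3 : Function.Injective (φ.map (algebraMap R K)).mulVecLin := Matrix.mulVec_injective_iff.2 h2
  obtain ⟨A, hA⟩ := LinearMap.exists_leftInverse_of_injective _ (LinearMap.ker_eq_bot.2 h3)
  have h4 : LinearMap.toMatrix' A * φ.map (algebraMap R K) = 1 := by
    have := congrArg LinearMap.toMatrix' hA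
    rwa [LinearMap.toMatrix'_comp, LinearMap.toMatrix'_id, ← Matrix.toLin'_apply', LinearMap.toMatrix'_toLin'] at this
  let h : K →+* F := IsFractionRing.lift hg
  have h5 : ((LinearMap.toMatrix' A).map h) * (φ.map g) = 1 := by
    have := congrArg (fun M => M.map h) h4
    simp only [Matrix.map_mul] at this
    rw [Matrix.map_one _ (map_zero _) (map_one _), Matrix.map_map] at this
    convert this using 3
    funext x
    exact (IsFractionRing.lift_algebraMap hg x).symm
  have h6 := Matrix.rank_mul_le_right ((LinearMap.toMatrix' A).map h) (φ.map g)
  rw [h5, Matrix.rank_one, Fintype.card_fin] at h6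
  exact h6

theorem heightL {R E : Type} [CommRing R] [IsDomain R] [IsNoetherianRing R] (d e : ℕ) [AddCommGroup E] [Module R E]
    (φ : Matrix (Fin (d + e)) (Fin d) R) (hinj : Function.Injective φ.mulVecLin)
    (π : (Fin (d + e) → R) →ₗ[R] E) (hsurj : Function.Surjective π)
    (hker : LinearMap.ker π = LinearMap.range φ.mulVecLin)
    (hGd : ∀ (p : Ideal R) (_ : p.IsPrime) (c : ℕ),
      ringKrullDim (Localization.AtPrime p) = (c : WithBot ℕ∞) → 1 ≤ c → c ≤ d - 1 →
      ∃ s : Finset (LocalizedModule p.primeCompl E), s.card ≤ c + e - 1 ∧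
        Submodule.span (Localization.AtPrime p)
          (s : Set (LocalizedModule p.primeCompl E)) = ⊤)
    (P : Ideal (MvPolynomial (Fin (d + e)) R)) [P.IsPrime] (hP : ∀ i, ∑ j, C (φ j i) * X j ∈ P) : (d : ℕ∞) ≤ P.height := by
  let F := FractionRing (MvPolynomial (Fin (d + e)) R ⧸ P)
  let h : MvPolynomial (Fin (d + e)) R →+* F := (algebraMap _ F).comp (Ideal.Quotient.mk P)
  have hh : RingHom.ker h = P := by
    ext x
    rw [RingHom.mem_ker, RingHom.comp_apply, map_eq_zero_iff _ (IsFractionRing.injective _ F), Ideal.Quotient.eq_zero_iff_mem]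
  let g : R →+* F := h.comp C
  let y0 : Fin (d + e) → F := fun j => h (X j)
  have hev : eval₂Hom g y0 = h := by
    apply MvPolynomial.ringHom_ext
    · intro r; simp [g]
    · intro j; simp [y0]
  have hchain := ht_chain g (d + e) d y0 φ (by
    intro i
    have : h (∑ j, C (φ j i) * X j) = 0 := by rw [← RingHom.mem_ker, hh]; exact hP i
    rw [map_sum] at this
    simpa [g, y0] using this)
  rw [hev, hh] at hchain
  refine le_trans ?_ hchain
  have hpr : (RingHom.ker g).IsPrime := RingHom.ker_isPrime g
  by_cases hc : (d : ℕ∞) ≤ (RingHom.ker g).height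
  · exact le_trans hc le_self_add
  push Not at hc
  obtain ⟨c, hcc⟩ := ENat.ne_top_iff_exists.1 (ne_top_of_lt hc)
  rw [← hcc] at hc ⊢
  have hcd : c < d := by exact_mod_cast hc
  rcases Nat.eq_zero_or_pos c with h0 | h0
  · subst h0
    have : RingHom.ker g = ⊥ := Ideal.height_eq_zero_iff_eq_bot.1 (by rw [← hcc]; rfl)
    have := rank_inj g ((RingHom.injective_iff_ker_eq_bot g).2 this) _ _ φ hinj
    rw [Nat.cast_zero, zero_add]
    exact_mod_cast this
  · obtain ⟨s, hs1, hs2⟩ := hGd (RingHom.ker g) hpr c (by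
      rw [IsLocalization.AtPrime.ringKrullDim_eq_height (RingHom.ker g), ← hcc]; rfl) h0 (by omega)
    have := ker_le_gens g (d + e) d φ π hsurj hker (RingHom.ker g) rfl s hs2
    have h2 : d ≤ c + (φ.map g).rank := by omega
    exact_mod_cast h2

end ht

open scoped Matrix

section core
theorem core1 {k : Type} [Field k] {n m : ℕ} (hn : 0 < n) (hm : 0 < m)
    (N : Matrix (Fin m) (V m) (MvPolynomial (Fin n) k)) (c : Fin 2 → Matrix (V m) (V m) (MvPolynomial (Fin n) k))
    (h : HG N c) : ∃ s : MvPolynomial (Fin n) k, ∀ u, Tor N c u ↔ s ∣ u := by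
  obtain ⟨ψ0, h1, h2⟩ := exists_Fn N c
  obtain ⟨ψ, h3, h4⟩ := Prim_of_ne_zero N c ψ0 h1 h2
  exact ⟨_, Tor_iff N c h hm (X ⟨0, hn⟩) (MvPolynomial.X_prime) ψ h3 h4⟩

theorem core2 {k : Type} [Field k] {n m : ℕ} (hn : 0 < n) (hm : 0 < m)
    (N : Matrix (Fin m) (V m) (MvPolynomial (Fin n) k)) (c : Fin 2 → Matrix (V m) (V m) (MvPolynomial (Fin n) k))
    (h : HG N c) (hN : ∀ i j, (N i j).IsHomogeneous 1) (hc : ∀ a i j, (c a i j).IsHomogeneous 1)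
    {ι κ' : Type} [Fintype ι] [Fintype κ'] [DecidableEq ι] [DecidableEq κ'] (ρ : Matrix ι κ' (MvPolynomial (Fin n) k))
    (r : ι → MvPolynomial (V m) (MvPolynomial (Fin n) k))
    (hr2 : ∀ i, (r i).IsHomogeneous 2)
    (ha : ∀ f : MvPolynomial (V m) (MvPolynomial (Fin n) k), f.IsHomogeneous 2 → ∃ t : ι → MvPolynomial (Fin n) k, f - ∑ i, C (t i) * r i ∈ Lid N c)
    (hb : ∀ t : ι → MvPolynomial (Fin n) k, ∑ i, C (t i) * r i ∈ Lid N c ↔ t ∈ LinearMap.range ρ.mulVecLin)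
    (hht : htGE (minorsIdeal ρ ρ.rank) 2) :
    ∃ s : MvPolynomial (Fin n) k, s.IsHomogeneous (4 * m + 4) ∧ ∀ u, Tor N c u ↔ s ∣ u := by
  classical
  by_cases hu : ∃ u, u ≠ 0 ∧ Tor N c u
  · obtain ⟨u, hu0, hu⟩ := hu
    have hX : Prime (X ⟨0, hn⟩ : MvPolynomial (Fin n) k) := MvPolynomial.X_prime
    have hcard := rho_rank N c ρ r hr2 ha hb h hm u hu0 hu _ hX
    obtain ⟨ψ, h1, h2, h3⟩ := partD N c hN hc ⟨_, hX⟩ (by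
      intro ϖ hϖ
      have hpr : (Ideal.span {ϖ}).IsPrime := (Ideal.span_singleton_prime hϖ.ne_zero).2 hϖ
      have hex : ∃ (f0 : Fin ρ.rank → ι) (g0 : Fin ρ.rank → κ'), (ρ.submatrix f0 g0).det ∉ Ideal.span {ϖ} := by
        by_contra hcon
        push Not at hcon
        have h2 := hht (Ideal.span {ϖ}) hpr (by
          rw [minorsIdeal, Ideal.span_le]
          rintro _ ⟨f, g, rfl⟩
          exact hcon f g)
        rw [IsLocalization.AtPrime.ringKrullDim_eq_height (Ideal.span {ϖ})] at h2
        have h3 : (Ideal.span {ϖ}).height ≤ 1 :=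
          Ideal.height_le_one_of_isPrincipal_of_mem_minimalPrimes (Ideal.span {ϖ}) (Ideal.span {ϖ}) (by
            rw [Ideal.minimalPrimes_eq_subsingleton_self]; rfl)
        have h4 : ((2 : ℕ) : ℕ∞) ≤ (Ideal.span {ϖ}).height := WithBot.coe_le_coe.1 h2
        have := h4.trans h3
        norm_cast at this
      obtain ⟨f0, g0, hdet⟩ := hex
      let κ := FractionRing (MvPolynomial (Fin n) k ⧸ Ideal.span {ϖ})
      let g : MvPolynomial (Fin n) k →+* κ := (algebraMap _ κ).comp (Ideal.Quotient.mk (Ideal.span {ϖ}))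
      have hg : ∀ x, g x = 0 ↔ x ∈ Ideal.span {ϖ} := by
        intro x
        rw [RingHom.comp_apply, map_eq_zero_iff _ (IsFractionRing.injective _ κ), Ideal.Quotient.eq_zero_iff_mem]
      exact Q_of N c g ϖ ((hg ϖ).2 (Ideal.mem_span_singleton_self ϖ))
        (no_two N c ρ r ha hb g hcard f0 g0 (fun h0 => hdet ((hg _).1 h0))))
    exact ⟨_, h3, Tor_iff N c h hm _ hX ψ h1 h2⟩
  · push Not at hu
    refine ⟨0, isHomogeneous_zero _ _ _, fun u => ?_⟩
    rw [zero_dvd_iff]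
    constructor
    · intro h1; by_contra h2; exact hu u h2 h1
    · rintro rfl
      exact ⟨0, fun f _ => by simp⟩
end core

open scoped Matrix

section transl
/-- every linear form is given by its coefficients -/
theorem hom1_eq {S : Type*} [CommRing S] {m : ℕ} (f : MvPolynomial (V m) S) (hf : f.IsHomogeneous 1) :
    ∃ a : V m → S, f = ∑ l, C (a l) * X l := by
  classical
  refine ⟨fun l => coeff (Finsupp.single l 1) f, ?_⟩
  ext α
  rw [coeff_sum]
  simp only [coeff_C_mul, coeff_X]
  by_cases h : ∃ l, α = Finsupp.single l 1
  · obtain ⟨l, rfl⟩ := h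
    rw [Finset.sum_eq_single l]
    · simp
    · intro l' _ hl
      rw [if_neg, mul_zero]
      intro h
      exact hl ((Finsupp.single_left_inj one_ne_zero).1 h)
    · simp
  · push Not at h
    rw [Finset.sum_eq_zero]
    · by_contra hne
      have hd : α.degree = 1 := by
        have := hf hne
        rwa [Finsupp.degree_eq_weight_one (R := ℕ)]
      have hne0 : α ≠ 0 := by rintro rfl; simp at hd
      obtain ⟨l, hl⟩ := Finsupp.ne_iff.1 hne0
      have hl1 : 1 ≤ α l := Nat.one_le_iff_ne_zero.2 hl
      have hle : Finsupp.single l 1 ≤ α := by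
        rw [Finsupp.single_le_iff]; exact hl1
      obtain ⟨β, hβ⟩ := exists_add_of_le hle
      have h0 : β.degree = 0 := by
        rw [hβ, map_add, Finsupp.degree_single] at hd
        omega
      rw [Finsupp.degree_eq_zero_iff] at h0
      exact h l (by rw [hβ, h0, add_zero])
    · intro l _
      rw [if_neg (fun h' => h l h'.symm), mul_zero]

theorem hom2_eq {S : Type*} [CommRing S] {m : ℕ} (f : MvPolynomial (V m) S) (hf : f.IsHomogeneous 2) :
    ∃ q : Matrix (V m) (V m) S, f = quad q := by
  classical
  refine hom2_ind (fun f => ∃ q : Matrix (V m) (V m) S, f = quad q) ?_ ?_ ?_ f hf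
  · exact ⟨0, by simp [quad, bet]⟩
  · rintro _ _ ⟨q, rfl⟩ ⟨q', rfl⟩
    exact ⟨q + q', by simp [quad, bet, add_mul, Finset.sum_add_distrib]⟩
  · intro b i j
    refine ⟨Matrix.single i j b, ?_⟩
    rw [quad, Finset.sum_eq_single j]
    · rw [bet, Finset.sum_eq_single i]
      · simp [mul_assoc]
      · intro l _ hl; rw [Matrix.single_apply_of_ne]; · simp
        tauto
      · simp
    · intro l _ hl
      rw [bet, Finset.sum_eq_zero, zero_mul]
      intro l' _
      rw [Matrix.single_apply_of_ne]; · simp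
      tauto
    · simp

variable {k : Type} [Field k] {m n : ℕ}

/-- the identification `k[x,y] = k[y][x]` -/
def PhiE (k : Type) [Field k] (m n : ℕ) : B k (m + 2) n ≃ₐ[k] MvPolynomial (V m) (T k n) :=
  (renameEquiv k (Equiv.sumCongr (finSumFinEquiv (m := m) (n := 2)).symm (Equiv.refl (Fin n)))).trans
    (sumAlgEquiv k (V m) (Fin n))

theorem Phi_inl (i : Fin (m + 2)) : PhiE k m n (X (Sum.inl i)) = X (finSumFinEquiv.symm i) := by
  simp [PhiE]

theorem Phi_inr (j : Fin n) : PhiE k m n (X (Sum.inr j)) = C (X j) := by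
  simp [PhiE]

theorem Phi_C (a : k) : PhiE k m n (C a) = C (C a) := by
  simp [PhiE]

theorem Phi_T (t : T k n) : PhiE k m n (rename Sum.inr t) = C t := by
  induction t using MvPolynomial.induction_on with
  | C a => rw [rename_C, Phi_C]
  | add p q hp hq => rw [map_add, map_add, hp, hq, C_add]
  | mul_X p j hp => rw [map_mul, map_mul, hp, rename_X, Phi_inr, C_mul]

theorem Phi_R (f : MvPolynomial (Fin (m + 2)) k) :
    PhiE k m n (rename Sum.inl f) = map C (rename (finSumFinEquiv (m := m) (n := 2)).symm f) := by
  induction f using MvPolynomial.induction_on with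
  | C a => rw [rename_C, Phi_C, rename_C, map_C]
  | add p q hp hq => rw [map_add, map_add, hp, hq, map_add, map_add]
  | mul_X p j hp => rw [map_mul, map_mul, hp, rename_X, Phi_inl, map_mul, map_mul, rename_X, map_X]

theorem Phi_hom (g : B k (m + 2) n) (j : ℕ) (hg : g.IsWeightedHomogeneous (wx (m + 2) n) j) :
    (PhiE k m n g).IsHomogeneous j := by
  classical
  rw [g.as_sum, map_sum]
  apply IsHomogeneous.sum
  intro α hα
  have hw := hg (mem_support_iff.1 hα)
  rw [monomial_eq, map_mul, Phi_C, Finsupp.prod, map_prod]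
  rw [← zero_add j]
  apply (isHomogeneous_C _ _).mul
  have e : j = ∑ v ∈ α.support, wx (m + 2) n v * α v := by
    rw [← hw, Finsupp.weight_apply, Finsupp.sum]
    refine Finset.sum_congr rfl fun v _ => ?_
    rw [smul_eq_mul, mul_comm]
  rw [e]
  apply IsHomogeneous.prod
  intro v _
  rw [map_pow]
  apply IsHomogeneous.pow
  rcases v with v | v
  · rw [Phi_inl]; exact isHomogeneous_X _ _
  · rw [Phi_inr]; exact isHomogeneous_C _ _

theorem T_wx (t : T k n) (d : ℕ) : (rename Sum.inr t : B k d n).IsWeightedHomogeneous (wx d n) 0 := by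
  induction t using MvPolynomial.induction_on with
  | C a => rw [rename_C]; exact isWeightedHomogeneous_C _ _
  | add p q hp hq => rw [map_add]; exact hp.add hq
  | mul_X p j hp =>
    rw [map_mul, rename_X]
    exact hp.mul (isWeightedHomogeneous_X _ _ (Sum.inr j))

theorem Phi_symm_hom (f : MvPolynomial (V m) (T k n)) (j : ℕ) (hf : f.IsHomogeneous j) :
    ((PhiE k m n).symm f).IsWeightedHomogeneous (wx (m + 2) n) j := by
  classical
  rw [f.as_sum, map_sum]
  apply IsWeightedHomogeneous.sum
  intro α hα
  have hw := hf (mem_support_iff.1 hα)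
  have e1 : (PhiE k m n).symm (monomial α (coeff α f)) = rename Sum.inr (coeff α f) * ∏ v ∈ α.support, X (Sum.inl (finSumFinEquiv v)) ^ α v := by
    rw [AlgEquiv.symm_apply_eq, map_mul, Phi_T, map_prod, monomial_eq, Finsupp.prod]
    congr 1
    refine Finset.prod_congr rfl fun v _ => ?_
    rw [map_pow, Phi_inl, Equiv.symm_apply_apply]
  rw [e1, ← zero_add j]
  apply (T_wx _ _).mul
  have e : j = ∑ v ∈ α.support, α v • (wx (m + 2) n (Sum.inl (finSumFinEquiv v))) := by
    rw [← hw, Finsupp.weight_apply, Finsupp.sum]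
    rfl
  rw [e]
  apply IsWeightedHomogeneous.prod
  intro v _
  exact (isWeightedHomogeneous_X _ _ _).pow _

theorem mem_SxDeg (d : ℕ) (I : Ideal (B k d n)) (j : ℕ) (x : B k d n ⧸ I) :
    x ∈ SxDeg k d n I j ↔ ∃ g : B k d n, g.IsWeightedHomogeneous (wx d n) j ∧ x = Ideal.Quotient.mk I g := by
  constructor
  · intro hx
    rw [SxDeg] at hx
    induction hx using Submodule.span_induction with
    | mem x hx => obtain ⟨g, hg, rfl⟩ := hx; exact ⟨g, hg, rfl⟩
    | zero => exact ⟨0, isWeightedHomogeneous_zero _ _ _, by simp⟩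
    | add x y _ _ hx hy =>
      obtain ⟨g, hg, rfl⟩ := hx
      obtain ⟨g', hg', rfl⟩ := hy
      exact ⟨g + g', hg.add hg', by simp⟩
    | smul t x _ hx =>
      obtain ⟨g, hg, rfl⟩ := hx
      refine ⟨rename Sum.inr t * g, ?_, rfl⟩
      rw [← zero_add j]
      exact (T_wx t d).mul hg
  · rintro ⟨g, hg, rfl⟩
    exact Submodule.subset_span ⟨g, hg, rfl⟩

theorem map_mxB : (mxB k (m + 2) n).map (PhiE k m n).toRingEquiv.toRingHom = mx (V m) (T k n) := by
  rw [mxB, Ideal.map_span, mx]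
  congr 1
  ext x
  constructor
  · rintro ⟨_, ⟨i, rfl⟩, rfl⟩
    exact ⟨_, (Phi_inl i).symm⟩
  · rintro ⟨v, rfl⟩
    refine ⟨_, ⟨finSumFinEquiv v, rfl⟩, ?_⟩
    refine (Phi_inl _).trans ?_
    rw [Equiv.symm_apply_apply]

theorem mem_mxB_pow (M : ℕ) (b : B k (m + 2) n) : b ∈ mxB k (m + 2) n ^ M ↔ PhiE k m n b ∈ mx (V m) (T k n) ^ M := by
  rw [← map_mxB, ← Ideal.map_pow]
  constructor
  · intro h; exact Ideal.mem_map_of_mem _ h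
  · intro h
    obtain ⟨b', hb', h'⟩ := (Ideal.mem_map_iff_of_surjective _ (PhiE k m n).surjective).1 h
    have : b' = b := (PhiE k m n).injective h'
    rwa [← this]

theorem mem_H0 (d : ℕ) (I : Ideal (B k d n)) (b : B k d n) :
    Ideal.Quotient.mk I b ∈ H0 k d n I ↔ ∃ M : ℕ, ∀ f ∈ mxB k d n ^ M, f * b ∈ I := by
  rw [H0, Submodule.mem_iSup_of_directed]
  · refine exists_congr fun M => ?_
    rw [Submodule.mem_torsionBySet_iff]
    constructor
    · intro h f hf
      have := h ⟨f, hf⟩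
      rw [← Ideal.Quotient.eq_zero_iff_mem]
      exact this
    · rintro h ⟨f, hf⟩
      exact Ideal.Quotient.eq_zero_iff_mem.2 (h f hf)
  · apply Monotone.directed_le
    intro a b hab
    apply Submodule.torsionBySet_le_torsionBySet_of_subset
    exact Ideal.pow_le_pow_right hab

theorem H0_Tor (I : Ideal (B k (m + 2) n)) (N : Matrix (Fin m) (V m) (T k n)) (c : Fin 2 → Matrix (V m) (V m) (T k n))
    (hI : ∀ b, b ∈ I ↔ PhiE k m n b ∈ Lid N c) (t : T k n) :
    Ideal.Quotient.mk I (rename Sum.inr t) ∈ H0 k (m + 2) n I ↔ Tor N c t := by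
  rw [mem_H0, Tor]
  refine exists_congr fun M => ?_
  constructor
  · intro h f hf
    have := (hI _).1 (h ((PhiE k m n).symm f) (by rw [mem_mxB_pow, AlgEquiv.apply_symm_apply]; exact hf))
    rwa [map_mul, AlgEquiv.apply_symm_apply, Phi_T] at this
  · intro h f hf
    rw [hI, map_mul, Phi_T]
    exact h _ ((mem_mxB_pow M f).1 hf)

theorem Acomp_eq (I : Ideal (B k (m + 2) n)) (N : Matrix (Fin m) (V m) (T k n)) (c : Fin 2 → Matrix (V m) (V m) (T k n))
    (hI : ∀ b, b ∈ I ↔ PhiE k m n b ∈ Lid N c) (s : T k n) (hs : ∀ u, Tor N c u ↔ s ∣ u) :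
    AcompZ k (m + 2) n I 0 = Submodule.span (T k n) {Ideal.Quotient.mk I (rename Sum.inr s)} := by
  ext x
  rw [AcompZ, SxDegZ, if_pos le_rfl, Submodule.mem_inf, Submodule.restrictScalars_mem, Submodule.mem_span_singleton,
    Int.toNat_zero, mem_SxDeg]
  constructor
  · rintro ⟨h1, g, hg, rfl⟩
    have h2 := Phi_hom g 0 hg
    have h3 : PhiE k m n g = C (coeff 0 (PhiE k m n g)) := totalDegree_eq_zero_iff_eq_C.1 (Nat.le_zero.1 h2.totalDegree_le)
    have h4 : g = rename Sum.inr (coeff 0 (PhiE k m n g)) := by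
      apply (PhiE k m n).injective
      rw [Phi_T]; exact h3
    rw [h4, H0_Tor I N c hI, hs] at h1
    obtain ⟨w, hw⟩ := h1
    refine ⟨w, ?_⟩
    rw [h4, hw, map_mul, mul_comm]
    rfl
  · rintro ⟨w, rfl⟩
    have e : w • Ideal.Quotient.mk I (rename Sum.inr s) = Ideal.Quotient.mk I (rename Sum.inr (w * s)) := by
      rw [map_mul]; rfl
    rw [e]
    refine ⟨?_, _, T_wx _ _, rfl⟩
    rw [H0_Tor I N c hI, hs]
    exact dvd_mul_left _ _

end transl

open scoped Matrix

section final
variable {k : Type} [Field k] {m n : ℕ}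

theorem setupNc (φ : Matrix (Fin n) (Fin (m + 2)) (MvPolynomial (Fin (m + 2)) k))
    (h1 : ∀ (i : Fin n) (r : Fin m), (φ i (finSumFinEquiv (Sum.inl r))).IsHomogeneous 1)
    (h2 : ∀ (i : Fin n) (a : Fin 2), (φ i (finSumFinEquiv (Sum.inr a))).IsHomogeneous 2)
    (ℓ : Fin (m + 2) → B k (m + 2) n)
    (hℓ : ∀ i, ℓ i = ∑ j, (rename Sum.inl (φ j i)) * X (Sum.inr j)) :
    ∃ (N : Matrix (Fin m) (V m) (T k n)) (c : Fin 2 → Matrix (V m) (V m) (T k n)),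
      (∀ i j, (N i j).IsHomogeneous 1) ∧ (∀ a i j, (c a i j).IsHomogeneous 1) ∧
      ∀ b, b ∈ Ideal.span (Set.range ℓ) ↔ PhiE k m n b ∈ Lid N c := by
  have H1 : ∀ (i : Fin n) (r : Fin m), ∃ a : V m → k,
      rename (finSumFinEquiv (m := m) (n := 2)).symm (φ i (finSumFinEquiv (Sum.inl r))) = ∑ l, C (a l) * X l :=
    fun i r => hom1_eq _ (h1 i r).rename_isHomogeneous
  have H2 : ∀ (i : Fin n) (a : Fin 2), ∃ q : Matrix (V m) (V m) k,
      rename (finSumFinEquiv (m := m) (n := 2)).symm (φ i (finSumFinEquiv (Sum.inr a))) = quad q :=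
    fun i r => hom2_eq _ (h2 i r).rename_isHomogeneous
  choose A hA using H1
  choose q hq using H2
  let N : Matrix (Fin m) (V m) (T k n) := Matrix.of fun r l => ∑ j, C (A j r l) * X j
  let c : Fin 2 → Matrix (V m) (V m) (T k n) := fun a => Matrix.of fun i l => ∑ j, C (q j a i l) * X j
  have hhom : ∀ f : Fin n → k, (∑ j, C (f j) * X j : T k n).IsHomogeneous 1 := by
    intro f
    apply IsHomogeneous.sum
    intro j _
    rw [← zero_add 1]
    exact (isHomogeneous_C _ _).mul (isHomogeneous_X _ _)
  have hl1 : ∀ r, PhiE k m n (ℓ (finSumFinEquiv (Sum.inl r))) = lin N r := by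
    intro r
    rw [hℓ, map_sum]
    simp only [map_mul, Phi_R, Phi_inr, hA, lin, N, Matrix.of_apply, map_sum, map_C, map_X, Finset.sum_mul]
    rw [Finset.sum_comm]
    refine Finset.sum_congr rfl fun l _ => Finset.sum_congr rfl fun j _ => ?_
    ring
  have hl2 : ∀ a, PhiE k m n (ℓ (finSumFinEquiv (Sum.inr a))) = quad (c a) := by
    intro a
    rw [hℓ, map_sum]
    simp only [map_mul, Phi_R, Phi_inr, hq, quad, bet, c, Matrix.of_apply, map_sum, map_C, map_X, Finset.sum_mul]
    rw [Finset.sum_comm]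
    refine Finset.sum_congr rfl fun l _ => ?_
    rw [Finset.sum_comm]
    refine Finset.sum_congr rfl fun l _ => Finset.sum_congr rfl fun j _ => ?_
    ring
  refine ⟨N, c, fun i j => hhom _, fun a i j => hhom _, ?_⟩
  have hmap : (Ideal.span (Set.range ℓ)).map (PhiE k m n).toRingEquiv.toRingHom = Lid N c := by
    rw [Ideal.map_span, Lid]
    congr 1
    ext x
    constructor
    · rintro ⟨_, ⟨i, rfl⟩, rfl⟩
      obtain ⟨v, rfl⟩ := (finSumFinEquiv (m := m) (n := 2)).surjective i
      rcases v with r | a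
      · exact Or.inl ⟨r, (hl1 r).symm⟩
      · exact Or.inr ⟨a, (hl2 a).symm⟩
    · rintro (⟨r, rfl⟩ | ⟨a, rfl⟩)
      · exact ⟨_, ⟨_, rfl⟩, hl1 r⟩
      · exact ⟨_, ⟨_, rfl⟩, hl2 a⟩
  intro b
  rw [← hmap]
  constructor
  · intro h; exact Ideal.mem_map_of_mem _ h
  · intro h
    obtain ⟨b', hb', h'⟩ := (Ideal.mem_map_iff_of_surjective _ (PhiE k m n).surjective).1 h
    have : b' = b := (PhiE k m n).injective h'
    rwa [← this]

/-- the identification `R[y] = k[x,y]` -/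
def PsiE (k : Type) [Field k] (d n : ℕ) : MvPolynomial (Fin n) (MvPolynomial (Fin d) k) ≃ₐ[k] B k d n :=
  (sumAlgEquiv k (Fin n) (Fin d)).symm.trans (renameEquiv k (Equiv.sumComm (Fin n) (Fin d)))

theorem PsiE_X (d : ℕ) (j : Fin n) : PsiE k d n (X j) = X (Sum.inr j) := by
  simp [PsiE]

theorem PsiE_C (d : ℕ) (f : MvPolynomial (Fin d) k) : PsiE k d n (C f) = rename Sum.inl f := by
  induction f using MvPolynomial.induction_on with
  | C a => simp [PsiE]
  | add p q hp hq => rw [C_add, map_add, map_add, hp, hq]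
  | mul_X p j hp =>
    rw [C_mul, map_mul, map_mul, hp, rename_X]
    congr 1
    simp [PsiE]

theorem HG_of {e : ℕ} {E : Type} [AddCommGroup E] [Module (MvPolynomial (Fin (m + 2)) k) E]
    (φ : Matrix (Fin (m + 2 + e)) (Fin (m + 2)) (MvPolynomial (Fin (m + 2)) k))
    (hinj : Function.Injective φ.mulVecLin)
    (π : (Fin (m + 2 + e) → MvPolynomial (Fin (m + 2)) k) →ₗ[MvPolynomial (Fin (m + 2)) k] E)
    (hsurj : Function.Surjective π)
    (hker : LinearMap.ker π = LinearMap.range φ.mulVecLin)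
    (hGd : ∀ (p : Ideal (MvPolynomial (Fin (m + 2)) k)) (_ : p.IsPrime) (c : ℕ),
      ringKrullDim (Localization.AtPrime p) = (c : WithBot ℕ∞) → 1 ≤ c → c ≤ m + 2 - 1 →
      ∃ s : Finset (LocalizedModule p.primeCompl E), s.card ≤ c + e - 1 ∧
        Submodule.span (Localization.AtPrime p)
          (s : Set (LocalizedModule p.primeCompl E)) = ⊤)
    (ℓ : Fin (m + 2) → B k (m + 2) (m + 2 + e))
    (hℓ : ∀ i, ℓ i = ∑ j, (rename Sum.inl (φ j i)) * X (Sum.inr j))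
    (N : Matrix (Fin m) (V m) (T k (m + 2 + e))) (c : Fin 2 → Matrix (V m) (V m) (T k (m + 2 + e)))
    (hI : ∀ b, b ∈ Ideal.span (Set.range ℓ) ↔ PhiE k m (m + 2 + e) b ∈ Lid N c) : HG N c := by
  intro P hP hle
  let Θ : MvPolynomial (Fin (m + 2 + e)) (MvPolynomial (Fin (m + 2)) k) ≃+* MvPolynomial (V m) (T k (m + 2 + e)) :=
    ((PsiE k (m + 2) (m + 2 + e)).trans (PhiE k m (m + 2 + e))).toRingEquiv
  have h1 := RingEquiv.height_comap Θ P
  rw [← h1]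
  have hpr : (P.comap Θ).IsPrime := Ideal.comap_isPrime Θ P
  refine heightL (m + 2) e φ hinj π hsurj hker hGd (P.comap Θ) ?_
  intro i
  rw [Ideal.mem_comap]
  apply hle
  have : Θ (∑ j, C (φ j i) * X j) = PhiE k m (m + 2 + e) (ℓ i) := by
    show PhiE k m (m + 2 + e) (PsiE k (m + 2) (m + 2 + e) _) = _
    congr 1
    rw [hℓ, map_sum]
    refine Finset.sum_congr rfl fun j _ => ?_
    rw [map_mul, PsiE_C, PsiE_X]
  rw [this, ← hI]
  exact Ideal.subset_span ⟨i, rfl⟩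

theorem T_bwt (d : ℕ) (t : T k n) (j : ℕ) (ht : t.IsHomogeneous j) :
    (rename Sum.inr t : B k d n) ∈ weightedHomogeneousSubmodule k (bwt d n) (0, j) := by
  classical
  rw [mem_weightedHomogeneousSubmodule, t.as_sum, map_sum]
  apply IsWeightedHomogeneous.sum
  intro α hα
  have hw := ht (mem_support_iff.1 hα)
  rw [monomial_eq, map_mul, rename_C, Finsupp.prod, map_prod, ← zero_add ((0 : ℕ), j)]
  apply (isWeightedHomogeneous_C _ _).mul
  have e : ((0 : ℕ), j) = ∑ v ∈ α.support, α v • (bwt d n (Sum.inr v)) := by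
    rw [← hw, Finsupp.weight_apply, Finsupp.sum]
    simp [bwt, Prod.ext_iff, Prod.fst_sum, Prod.snd_sum]
  rw [e]
  apply IsWeightedHomogeneous.prod
  intro v _
  rw [map_pow, rename_X]
  exact (isWeightedHomogeneous_X _ _ _).pow _

/-- translating the presentation of `S(E)_2` -/
theorem pres (L : Ideal (B k (m + 2) n)) (N : Matrix (Fin m) (V m) (T k n)) (c : Fin 2 → Matrix (V m) (V m) (T k n))
    (hI : ∀ b, b ∈ L ↔ PhiE k m n b ∈ Lid N c) {ι κ : Type} [Fintype ι] [Fintype κ] [DecidableEq ι]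
    (ρ : Matrix ι κ (T k n)) (πρ : (ι → T k n) →ₗ[T k n] (SxDeg k (m + 2) n L 2))
    (hs : Function.Surjective πρ) (hk : LinearMap.ker πρ = LinearMap.range ρ.mulVecLin) :
    ∃ r : ι → MvPolynomial (V m) (T k n), (∀ i, (r i).IsHomogeneous 2) ∧
      (∀ f : MvPolynomial (V m) (T k n), f.IsHomogeneous 2 → ∃ t : ι → T k n, f - ∑ i, C (t i) * r i ∈ Lid N c) ∧
      ∀ t : ι → T k n, ∑ i, C (t i) * r i ∈ Lid N c ↔ t ∈ LinearMap.range ρ.mulVecLin := by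
  have h1 : ∀ i, ∃ g : B k (m + 2) n, g.IsWeightedHomogeneous (wx (m + 2) n) 2 ∧
      ((πρ (Pi.single i 1) : SxDeg k (m + 2) n L 2) : B k (m + 2) n ⧸ L) = Ideal.Quotient.mk L g :=
    fun i => (mem_SxDeg _ _ _ _).1 (πρ (Pi.single i 1)).2
  choose g hg hgm using h1
  have h2 : ∀ t : ι → T k n, ((πρ t : SxDeg k (m + 2) n L 2) : B k (m + 2) n ⧸ L) =
      Ideal.Quotient.mk L (∑ i, rename Sum.inr (t i) * g i) := by
    intro t
    have e : t = ∑ i, t i • (Pi.single i 1 : ι → T k n) := by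
      rw [← pi_eq_sum_univ']
    conv_lhs => rw [e]
    rw [map_sum, map_sum, AddSubmonoidClass.coe_finset_sum]
    refine Finset.sum_congr rfl fun i _ => ?_
    rw [map_smul, Submodule.coe_smul, hgm, map_mul]
    rfl
  have h3 : ∀ t : ι → T k n, PhiE k m n (∑ i, rename Sum.inr (t i) * g i) = ∑ i, C (t i) * PhiE k m n (g i) := by
    intro t
    rw [map_sum]
    refine Finset.sum_congr rfl fun i _ => ?_
    rw [map_mul, Phi_T]
  refine ⟨fun i => PhiE k m n (g i), fun i => Phi_hom _ _ (hg i), ?_, ?_⟩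
  · intro f hf
    have hf2 := Phi_symm_hom f 2 hf
    obtain ⟨t, ht⟩ := hs ⟨Ideal.Quotient.mk L ((PhiE k m n).symm f), (mem_SxDeg _ _ _ _).2 ⟨_, hf2, rfl⟩⟩
    refine ⟨t, ?_⟩
    have h4 := h2 t
    rw [ht] at h4
    have h5 := (hI _).1 (Ideal.Quotient.eq.1 h4)
    rwa [map_sub, AlgEquiv.apply_symm_apply, h3] at h5
  · intro t
    rw [← h3, ← hI, ← Ideal.Quotient.eq_zero_iff_mem, ← h2, ← hk, LinearMap.mem_ker]
    exact Submodule.coe_eq_zero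
end final

theorem A0_generator
    (d e : ℕ) (hd : 3 ≤ d)
    (E : Type) [AddCommGroup E] [Module (MvPolynomial (Fin d) k) E]
    [Module.Finite (MvPolynomial (Fin d) k) E]
    -- `E` is torsion-free
    (htf : Submodule.torsion (MvPolynomial (Fin d) k) E = ⊥)
    -- `0 → R^d →φ R^{d+e} →π E → 0` is a (minimal) free resolution, so `pd E = 1`,
    -- `rank E = e`
    (φ : Matrix (Fin (d + e)) (Fin d) (MvPolynomial (Fin d) k))
    (hinj : Function.Injective φ.mulVecLin)
    (π : (Fin (d + e) → MvPolynomial (Fin d) k) →ₗ[MvPolynomial (Fin d) k] E)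
    (hsurj : Function.Surjective π)
    (hker : LinearMap.ker π = LinearMap.range φ.mulVecLin)
    -- `φ = [φ′ | φ″]`: the first `d−2` columns are linear, the last two are quadrics
    (hdeg : ∀ (i : Fin (d + e)) (j : Fin d),
      ((j : ℕ) < d - 2 → φ i j ∈ homogeneousSubmodule (Fin d) k 1) ∧
      (d - 2 ≤ (j : ℕ) → φ i j ∈ homogeneousSubmodule (Fin d) k 2))
    -- `I_1(φ) = (x_1,…,x_d)`
    (hI1 : Ideal.span {r : MvPolynomial (Fin d) k | ∃ i j, φ i j = r} =
      Ideal.span (Set.range X))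
    -- `E` is minimally generated by `μ(E) = d+e` elements
    (hμ : ∀ s : Finset E, Submodule.span (MvPolynomial (Fin d) k) (s : Set E) = ⊤ →
      d + e ≤ s.card)
    -- `E` satisfies `G_d`
    (hGd : ∀ (p : Ideal (MvPolynomial (Fin d) k)) (_ : p.IsPrime) (c : ℕ),
      ringKrullDim (Localization.AtPrime p) = (c : WithBot ℕ∞) → 1 ≤ c → c ≤ d - 1 →
      ∃ s : Finset (LocalizedModule p.primeCompl E), s.card ≤ c + e - 1 ∧
        Submodule.span (Localization.AtPrime p)
          (s : Set (LocalizedModule p.primeCompl E)) = ⊤)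
    -- the defining ideal `L` of the symmetric algebra: `[ℓ_1 … ℓ_d] = [y_1 … y_{d+e}]·φ`
    (ℓ : Fin d → B k d (d + e))
    (hℓ : ∀ i, ℓ i = ∑ j, (rename Sum.inl (φ j i)) * X (Sum.inr j))
    (L : Ideal (B k d (d + e))) (hL : L = Ideal.span (Set.range ℓ))
    -- `ρ`: the first map in the graded strand resolving `S(E)_2`, i.e. a matrix over `T`
    -- presenting the `T`-module `S(E)_2`
    (ι κ : Type) [Fintype ι] [Fintype κ] [DecidableEq ι] [DecidableEq κ]
    (ρ : Matrix ι κ (T k (d + e)))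
    (hρ : ∃ πρ : (ι → T k (d + e)) →ₗ[T k (d + e)] (SxDeg k d (d + e) L 2),
      Function.Surjective πρ ∧ LinearMap.ker πρ = LinearMap.range ρ.mulVecLin) :
    -- `A_0` is a principal ideal of `T` (a cyclic `T`-submodule of `S(E)_0 ≅ T`)
    (∃ z : B k d (d + e) ⧸ L,
      AcompZ k d (d + e) L 0 = Submodule.span (T k (d + e)) {z}) ∧
    -- if `ht I(ρ) ≥ 2` the generator has bidegree `(0, 4d−4)`
    (htGE (minorsIdeal ρ ρ.rank) 2 →
      ∃ g : B k d (d + e),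
        g ∈ weightedHomogeneousSubmodule k (bwt d (d + e)) (0, 4 * d - 4) ∧
        AcompZ k d (d + e) L 0 =
          Submodule.span (T k (d + e)) {Ideal.Quotient.mk L g}) := by
  obtain ⟨m, rfl⟩ : ∃ m, d = m + 2 := ⟨d - 2, by omega⟩
  have hm : 0 < m := by omega
  have hn : 0 < m + 2 + e := by omega
  obtain ⟨N, c, hN, hc, hI⟩ := setupNc φ
    (fun i r => (hdeg i (finSumFinEquiv (Sum.inl r))).1 (by simp))
    (fun i a => (hdeg i (finSumFinEquiv (Sum.inr a))).2 (by simp)) ℓ hℓ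
  have hHG := HG_of φ hinj π hsurj hker hGd ℓ hℓ N c hI
  rw [← hL] at hI
  refine ⟨?_, fun hht => ?_⟩
  · obtain ⟨s, hs⟩ := core1 hn hm N c hHG
    exact ⟨_, Acomp_eq L N c hI s hs⟩
  · obtain ⟨πρ, h1, h2⟩ := hρ
    obtain ⟨r, hr2, ha, hb⟩ := pres L N c hI ρ πρ h1 h2
    obtain ⟨s, hs1, hs2⟩ := core2 hn hm N c hHG hN hc ρ r hr2 ha hb hht
    refine ⟨rename Sum.inr s, T_bwt _ s _ ?_, Acomp_eq L N c hI s hs2⟩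
    have e4 : 4 * (m + 2) - 4 = 4 * m + 4 := by omega
    rw [e4]
    exact hs1

end Stmt11
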